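/- arXiv:2003.10139 — 4 statements merged into one kernel-verified Lean document; each statement's English description precedes it below -/
import Mathlib

section
/- If G is a bipartite graph, H is the subgraph of G induced by a strong clique of G, and M is a matching of H of size m ≥ 4, then the subgraph of G induced by V(M) contains a cycle of length 2m−2 using at least m−2 edges of M. -/
/-- A strong clique of `G`: a set of edges of `G` such that every pair of edges
either shares an endpoint or is joined by an edge of `G`. -/
def IsStrongClique {V : Type*} (G : SimpleGraph V) (S : Set (Sym2 V)) : Prop :=
  S ⊆ G.edgeSet ∧
    ∀ e ∈ S, ∀ f ∈ S, ∃ a b, a ∈ e ∧ b ∈ f ∧ (a = b ∨ G.Adj a b)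

/-!
Write each `e ∈ M` as `a e — b e` with `a e`, `b e` on fixed sides of the bipartition, and let
`e → f` mean that `a e` is adjacent to `b f`. Since `M` lies in a strong clique, this relation is
total. A directed path `e₀ → e₁ → ⋯ → e_k` yields the path
`a e₀, b e₁, a e₁, …, b e_{k-1}, a e_{k-1}, b e_k` of `G`, which contains the edges
`e₁, …, e_{k-1}` of `M` and which closes up to a cycle if `e₀ → e_k`. A directed cycle is the
special case `e₀ = e_k`, as the relation is reflexive.

It therefore suffices that every total relation on at least four vertices has either a Hamiltonian
path whose first vertex points to its last one, or a cycle missing exactly one vertex. This goes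
by induction on the number of vertices. A new vertex can be inserted into a path or cycle
wherever a vertex pointing to it is followed, possibly later, by one that it points to. When no
insertion is possible, the arcs between the new vertex and the old ones are so constrained that the
required path or cycle can be written down. On three vertices the only other possibility is a
spanning cycle, which a fourth vertex turns into a cycle missing exactly one vertex.
-/

section Total

open List

variable {α : Type*} {R : α → α → Prop} {L L' l : List α} {d v w x y z : α}

/-- The vertices in `L` can be arranged in a directed path of `R` that is bypassed by an arc from
its first vertex to its last one. -/
def HasBypassedPath (R : α → α → Prop) (L : List α) : Prop :=
  ∃ x l y, x :: (l ++ [y]) ~ L ∧ (x :: (l ++ [y])).IsChain R ∧ R x y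

/-- All vertices in `L` but one can be arranged in a directed cycle of `R`. The empty list counts
as a cycle, which matters only when `L` is a singleton. -/
def HasNearSpanningCycle (R : α → α → Prop) (L : List α) : Prop :=
  ∃ w l, w :: l ~ L ∧ Cycle.Chain R (l : Cycle α)

theorem HasBypassedPath.perm (h : HasBypassedPath R L) (hL : L ~ L') : HasBypassedPath R L' :=
  let ⟨x, l, y, hp, hc⟩ := h
  ⟨x, l, y, hp.trans hL, hc⟩

theorem HasNearSpanningCycle.perm (h : HasNearSpanningCycle R L) (hL : L ~ L') :
    HasNearSpanningCycle R L' :=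
  let ⟨w, l, hp, hc⟩ := h
  ⟨w, l, hp.trans hL, hc⟩

theorem isChain_of_cycleChain (h : Cycle.Chain R (l : Cycle α)) : l.IsChain R := by
  cases l with
  | nil => exact .nil
  | cons c t => exact IsChain.left_of_append (l₂ := [c]) ((Cycle.chain_coe_cons R c t).1 h)

theorem isChain_cons_of_forall_rel (hl : l.IsChain R) (h : ∀ c ∈ l, R z c) :
    (z :: l).IsChain R :=
  hl.cons fun c hc => h c (mem_of_mem_head? hc)

theorem isChain_concat_of_forall_rel (hl : l.IsChain R) (h : ∀ c ∈ l, R c z) :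
    (l ++ [z]).IsChain R :=
  hl.append (.singleton z) (by simpa using fun c hc => h c (mem_of_mem_getLast? hc))

theorem isChain_concat_concat (hl : (l ++ [y]).IsChain R) (hyz : R y z) :
    (l ++ [y] ++ [z]).IsChain R := by
  simpa using isChain_append_cons_cons.2 ⟨hl, hyz, .singleton z⟩

theorem hasBypassedPath_of_dominates (hvw : R v w) (hv : ∀ c ∈ l, R v c)
    (hw : ∀ c ∈ l, R w c) (hl : l.IsChain R) (hne : l ≠ []) : HasBypassedPath R (v :: w :: l) := by
  have hchain : (v :: w :: l).IsChain R := (isChain_cons_of_forall_rel hl hw).cons_cons hvw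
  obtain ⟨s, d, rfl⟩ := (eq_nil_or_concat' l).resolve_left hne
  exact ⟨v, w :: s, d, .refl _, hchain, hv d (by simp)⟩

theorem hasBypassedPath_of_dominated (hvw : R v w) (hv : ∀ c ∈ l, R c v)
    (hw : ∀ c ∈ l, R c w) (hl : l.IsChain R) (hne : l ≠ []) : HasBypassedPath R (v :: w :: l) := by
  have hchain : (l ++ [v] ++ [w]).IsChain R :=
    isChain_concat_concat (isChain_concat_of_forall_rel hl hv) hvw
  obtain ⟨c, t, rfl⟩ := exists_cons_of_ne_nil hne
  refine ⟨c, t ++ [v], w, ?_, hchain, hw c (by simp)⟩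
  simpa using perm_append_comm (l₁ := c :: t) (l₂ := [v, w])

variable [Std.Total R]

theorem hasBypassedPath_or_hasNearSpanningCycle_of_dominates_of_dominated (hv : ∀ c ∈ l, R v c)
    (hw : ∀ c ∈ l, R c w) (hl : l.IsChain R) (hlen : 2 ≤ l.length) :
    HasBypassedPath R (v :: w :: l) ∨ HasNearSpanningCycle R (v :: w :: l) := by
  rcases total_of R v w with hvw | hwv
  · refine .inl ⟨v, l, w, (perm_append_singleton w l).cons v, ?_, hvw⟩
    refine isChain_cons_of_forall_rel (isChain_concat_of_forall_rel hl hw) fun c hc => ?_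
    rcases mem_append.1 hc with hc | hc
    exacts [hv c hc, mem_singleton.1 hc ▸ hvw]
  · match l, hlen with
    | c :: e :: t, _ =>
      have hchain : (v :: e :: t ++ [w]).IsChain R :=
        (isChain_concat_of_forall_rel hl.tail fun d hd => hw d (mem_cons_of_mem c hd)).cons_cons
          (hv e (by simp))
      refine .inr ⟨c, v :: e :: (t ++ [w]), ?_, ?_⟩
      · exact (Perm.swap v c _).trans ((perm_append_singleton w (c :: e :: t)).cons v)
      · exact (Cycle.chain_coe_cons R v _).2 (isChain_concat_concat hchain hwv)

theorem exists_perm_cons_isChain :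
    ∀ {c : α} {l : List α}, (c :: (l ++ [d])).IsChain R → R c z → (∃ y ∈ l ++ [d], R z y) →
      ∃ l', l' ~ z :: l ∧ (c :: (l' ++ [d])).IsChain R
  | c, [], _, hcz, hz => ⟨[z], .refl _, by simpa [hcz] using hz⟩
  | c, e :: t, hc, hcz, ⟨y, hy, hzy⟩ => by
    obtain ⟨hce, het⟩ := isChain_cons_cons.1 hc
    by_cases hze : R z e
    · exact ⟨z :: e :: t, .refl _, .cons_cons hcz (.cons_cons hze het)⟩
    · have hez : R e z := (total_of R z e).resolve_left hze
      have hy' : y ∈ t ++ [d] := (mem_cons.1 hy).resolve_left (by rintro rfl; exact hze hzy)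
      obtain ⟨l', hp, hl'⟩ := exists_perm_cons_isChain het hez ⟨y, hy', hzy⟩
      exact ⟨e :: l', (hp.cons e).trans (.swap z e t), .cons_cons hce hl'⟩

theorem exists_perm_cons_cycleChain (h : Cycle.Chain R (l : Cycle α)) (hin : ∃ x ∈ l, R x z)
    (hout : ∃ y ∈ l, R z y) : ∃ l', l' ~ z :: l ∧ Cycle.Chain R (l' : Cycle α) := by
  obtain ⟨x, hx, hxz⟩ := hin
  obtain ⟨y, hy, hzy⟩ := hout
  obtain ⟨s, t, rfl⟩ := append_of_mem hx
  have hrot : s ++ x :: t ~r x :: (t ++ s) := isRotated_append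
  rw [Cycle.coe_eq_coe.2 hrot, Cycle.chain_coe_cons] at h
  obtain ⟨l', hp, hl'⟩ := exists_perm_cons_isChain h hxz ⟨y, by grind, hzy⟩
  refine ⟨x :: l', ?_, (Cycle.chain_coe_cons R x l').2 hl'⟩
  exact (hp.cons x).trans ((Perm.swap z x _).trans (hrot.perm.symm.cons z))

theorem exists_perm_cons_cycleChain_or_forall (z : α) (h : Cycle.Chain R (l : Cycle α)) :
    (∃ l', l' ~ z :: l ∧ Cycle.Chain R (l' : Cycle α)) ∨
      (∀ c ∈ l, R z c) ∨ ∀ c ∈ l, R c z := by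
  by_cases hin : ∃ x ∈ l, R x z
  · by_cases hout : ∃ y ∈ l, R z y
    · exact .inl (exists_perm_cons_cycleChain h hin hout)
    · push Not at hout
      exact .inr (.inr fun c hc => (total_of R z c).resolve_left (hout c hc))
  · push Not at hin
    exact .inr (.inl fun c hc => (total_of R z c).resolve_right (hin c hc))

theorem HasNearSpanningCycle.cons (h : HasNearSpanningCycle R L) (hL : 3 ≤ L.length) (z : α) :
    HasBypassedPath R (z :: L) ∨ HasNearSpanningCycle R (z :: L) := by
  obtain ⟨w, l, hp, hc⟩ := h
  have hlen : 2 ≤ l.length := by have := hp.length_eq; grind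
  have hne : l ≠ [] := by grind
  have hl : l.IsChain R := isChain_of_cycleChain hc
  have hzw : z :: w :: l ~ z :: L := hp.cons z
  have hwz : w :: z :: l ~ z :: L := (Perm.swap z w l).trans hzw
  rcases exists_perm_cons_cycleChain_or_forall z hc with ⟨l', hp', hc'⟩ | hz
  · exact .inr ⟨w, l', (hp'.cons w).trans hwz, hc'⟩
  rcases exists_perm_cons_cycleChain_or_forall w hc with ⟨l', hp', hc'⟩ | hw
  · exact .inr ⟨z, l', (hp'.cons z).trans hzw, hc'⟩
  rcases hz with hz | hz <;> rcases hw with hw | hw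
  · refine .inl ((total_of R z w).elim (fun h => ?_) fun h => ?_)
    · exact (hasBypassedPath_of_dominates h hz hw hl hne).perm hzw
    · exact (hasBypassedPath_of_dominates h hw hz hl hne).perm hwz
  · exact (hasBypassedPath_or_hasNearSpanningCycle_of_dominates_of_dominated hz hw hl hlen).imp
      (·.perm hzw) (·.perm hzw)
  · exact (hasBypassedPath_or_hasNearSpanningCycle_of_dominates_of_dominated hw hz hl hlen).imp
      (·.perm hwz) (·.perm hwz)
  · refine .inl ((total_of R z w).elim (fun h => ?_) fun h => ?_)
    · exact (hasBypassedPath_of_dominated h hz hw hl hne).perm hzw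
    · exact (hasBypassedPath_of_dominated h hw hz hl hne).perm hwz

theorem hasBypassedPath_cons_or_rel (z : α) (hc : (x :: (l ++ [y])).IsChain R) (hxy : R x y) :
    HasBypassedPath R (z :: x :: (l ++ [y])) ∨ R z x ∧ R y z := by
  by_cases hxz : R x z
  · by_cases hz : ∃ u ∈ l ++ [y], R z u
    · obtain ⟨l', hp, hl'⟩ := exists_perm_cons_isChain hc hxz hz
      have hp' : l' ++ [y] ~ z :: (l ++ [y]) := hp.append_right [y]
      exact .inl ⟨x, l', y, (hp'.cons x).trans (.swap z x _), hl', hxy⟩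
    · have hyz : R y z := (total_of R z y).resolve_left fun h => hz ⟨y, by simp, h⟩
      exact .inl ⟨x, l ++ [y], z, perm_append_singleton z (x :: (l ++ [y])),
        isChain_concat_concat (l := x :: l) hc hyz, hxz⟩
  · have hzx : R z x := (total_of R x z).resolve_left hxz
    refine (total_of R z y).imp (fun hzy => ?_) fun hyz => ⟨hzx, hyz⟩
    exact ⟨z, x :: l, y, .refl _, .cons_cons hzx hc, hzy⟩

theorem hasBypassedPath_or_hasNearSpanningCycle_of_rel_of_rel
    (hc : (x :: (l ++ [y])).IsChain R) (hxy : R x y) (hzx : R z x) (hyz : R y z) (hl : l ≠ []) :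
    HasBypassedPath R (z :: x :: (l ++ [y])) ∨
      HasNearSpanningCycle R (z :: x :: (l ++ [y])) := by
  obtain ⟨c, t, rfl⟩ := exists_cons_of_ne_nil hl
  obtain ⟨hxc, hct⟩ := isChain_cons_cons.1 hc
  by_cases hzc : R z c
  · refine .inr ⟨x, z :: c :: (t ++ [y]), .swap z x _, (Cycle.chain_coe_cons R z _).2 ?_⟩
    exact isChain_concat_concat (l := z :: c :: t) (hct.cons_cons hzc) hyz
  by_cases hz : ∃ u ∈ c :: t, R z u
  · obtain ⟨u, hu, hzu⟩ := hz
    have hcz : R c z := (total_of R z c).resolve_left hzc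
    have hut : u ∈ t := (mem_cons.1 hu).resolve_left (by rintro rfl; exact hzc hzu)
    obtain ⟨l', hp, hl'⟩ := exists_perm_cons_isChain hct hcz ⟨u, by simp [hut], hzu⟩
    have hp' : c :: (l' ++ [y]) ~ z :: c :: (t ++ [y]) :=
      ((hp.append_right [y]).cons c).trans (.swap z c _)
    exact .inl ⟨x, c :: l', y, (hp'.cons x).trans (.swap z x _), hl'.cons_cons hxc, hxy⟩
  · push Not at hz
    refine .inr ⟨y, z :: x :: c :: t, ?_, (Cycle.chain_coe_cons R z _).2 ?_⟩
    · exact (perm_append_singleton y (z :: x :: c :: t)).symm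
    · have hct' : (c :: t).IsChain R := hct.left_of_append (l₁ := c :: t) (l₂ := [y])
      have hctz : (c :: t ++ [z]).IsChain R :=
        isChain_concat_of_forall_rel hct' fun d hd => (total_of R z d).resolve_left (hz d hd)
      exact (hctz.cons_cons hxc).cons_cons hzx

theorem HasBypassedPath.cons (h : HasBypassedPath R L) (hL : 3 ≤ L.length) (z : α) :
    HasBypassedPath R (z :: L) ∨ HasNearSpanningCycle R (z :: L) := by
  obtain ⟨x, l, y, hp, hc, hxy⟩ := h
  have hl : l ≠ [] := by have := hp.length_eq; grind
  rcases hasBypassedPath_cons_or_rel z hc hxy with h | ⟨hzx, hyz⟩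
  · exact .inl (h.perm (hp.cons z))
  · exact (hasBypassedPath_or_hasNearSpanningCycle_of_rel_of_rel hc hxy hzx hyz hl).imp
      (·.perm (hp.cons z)) (·.perm (hp.cons z))

theorem hasBypassedPath_or_exists_cycleChain_triple (u v w : α) :
    HasBypassedPath R [u, v, w] ∨ ∃ l, l ~ [u, v, w] ∧ Cycle.Chain R (l : Cycle α) := by
  rcases total_of R v w with h | h
  · refine (hasBypassedPath_cons_or_rel (l := []) u (by simpa using h) h).imp_right
      fun ⟨huv, hwu⟩ => ⟨[u, v, w], .refl _, ?_⟩
    simpa using ⟨huv, h, hwu⟩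
  · have hp : [u, w, v] ~ [u, v, w] := (Perm.swap v w []).cons u
    refine (hasBypassedPath_cons_or_rel (l := []) u (by simpa using h) h).imp (·.perm hp)
      fun ⟨huw, hvu⟩ => ⟨[u, w, v], hp, ?_⟩
    simpa using ⟨huw, h, hvu⟩

theorem hasBypassedPath_or_hasNearSpanningCycle :
    ∀ {L : List α}, 4 ≤ L.length → HasBypassedPath R L ∨ HasNearSpanningCycle R L
  | [z, u, v, w], _ => by
    rcases hasBypassedPath_or_exists_cycleChain_triple (R := R) u v w with h | ⟨l, hp, hc⟩
    · exact h.cons (by simp) z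
    · exact .inr ⟨z, l, hp.cons z, hc⟩
  | z :: t₁ :: t₂ :: t₃ :: t₄ :: t, _ =>
    (hasBypassedPath_or_hasNearSpanningCycle (L := t₁ :: t₂ :: t₃ :: t₄ :: t) (by simp)).elim
      (·.cons (by simp) z) (·.cons (by simp) z)

theorem exists_isChain_of_four_le_card [Fintype α] (h : 4 ≤ Fintype.card α) :
    ∃ x l y, (x :: (l ++ [y])).IsChain R ∧ R x y ∧ (x :: l).Nodup ∧ (l ++ [y]).Nodup ∧
      Fintype.card α = l.length + 2 := by
  set L : List α := Finset.univ.toList with hL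
  have hcard : L.length = Fintype.card α := by simp [hL]
  have hnd : L.Nodup := Finset.nodup_toList _
  rcases hasBypassedPath_or_hasNearSpanningCycle (R := R) (hcard ▸ h) with
    ⟨x, l, y, hp, hc, hxy⟩ | ⟨w, l, hp, hc⟩
  · have hnd' : (x :: l ++ [y]).Nodup := hp.nodup_iff.2 hnd
    have hlen := hp.length_eq
    exact ⟨x, l, y, hc, hxy, hnd'.of_append_left, hnd'.of_cons, by grind⟩
  · have hnd' : l.Nodup := (hp.nodup_iff.2 hnd).of_cons
    have hlen := hp.length_eq
    obtain ⟨c, t, rfl⟩ := exists_cons_of_ne_nil (l := l) (by grind)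
    exact ⟨c, t, c, (Cycle.chain_coe_cons R c t).1 hc, refl_of R c, hnd', by grind, by grind⟩

end Total

section Graph

open List

variable {V ι : Type*} {G : SimpleGraph V} {a b : ι → V} {s t : Set V} {S : Set (Sym2 V)}

theorem exists_isPath_of_isChain (ha : a.Injective) (hb : b.Injective) (hne : ∀ i j, a i ≠ b j)
    (hab : ∀ i, G.Adj (a i) (b i)) {y : ι} :
    ∀ {x : ι} {l : List ι}, (x :: (l ++ [y])).IsChain (fun i j => G.Adj (a i) (b j)) →
      (x :: l).Nodup → (l ++ [y]).Nodup →
      ∃ P : G.Walk (a x) (b y), P.IsPath ∧ P.length = 2 * l.length + 1 ∧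
        (∀ v ∈ P.support, (∃ i ∈ x :: l, a i = v) ∨ ∃ i ∈ l ++ [y], b i = v) ∧
        ∀ i ∈ l, s(a i, b i) ∈ P.edges
  | x, [], hc, _, _ => by
    have hxy : G.Adj (a x) (b y) := by simpa using hc
    exact ⟨hxy.toWalk, by simp [hne], by simp, by simp [eq_comm], by simp⟩
  | x, e :: t, hc, hx, hy => by
    obtain ⟨hxe, hc'⟩ := isChain_cons_cons.1 hc
    obtain ⟨P, hP, hlen, hsupp, hedges⟩ :=
      exists_isPath_of_isChain ha hb hne hab hc' hx.of_cons hy.of_cons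
    have hbe : b e ∉ P.support := fun h => by
      rcases hsupp _ h with ⟨i, _, hi⟩ | ⟨i, hi, hie⟩
      · exact hne _ _ hi
      · exact (nodup_cons.1 hy).1 (hb hie ▸ hi)
    have hax : a x ∉ P.support := fun h => by
      rcases hsupp _ h with ⟨i, hi, hix⟩ | ⟨i, _, hi⟩
      · exact (nodup_cons.1 hx).1 (ha hix ▸ hi)
      · exact hne _ _ hi.symm
    refine ⟨.cons hxe (.cons (hab e).symm P), ?_, ?_, ?_, ?_⟩
    · simp [SimpleGraph.Walk.cons_isPath_iff, hP, hbe, hax, hne]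
    · simp only [SimpleGraph.Walk.length_cons, hlen, length_cons]
      ring
    · intro v hv
      simp only [SimpleGraph.Walk.support_cons, mem_cons] at hv
      rcases hv with rfl | rfl | hv
      · exact .inl ⟨x, by simp⟩
      · exact .inr ⟨e, by simp⟩
      · exact (hsupp v hv).imp (fun ⟨i, hi, h⟩ => ⟨i, mem_cons_of_mem x hi, h⟩)
          fun ⟨i, hi, h⟩ => ⟨i, mem_cons_of_mem e hi, h⟩
    · intro i hi
      rcases mem_cons.1 hi with rfl | hi
      · simp [Sym2.eq_swap]
      · simp [hedges i hi]

theorem isCycle_cons_of_isPath {u v : V} {P : G.Walk u v} (hP : P.IsPath) (hlen : P.length ≠ 1)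
    (h : G.Adj v u) : (P.cons h).IsCycle :=
  (P.cons_isCycle_iff h).2
    ⟨hP, fun he => hlen (hP.length_eq_one_of_mem_edges (Sym2.eq_swap ▸ he))⟩

theorem exists_isCycle_of_total [Fintype ι] (ha : a.Injective) (hb : b.Injective)
    (hne : ∀ i j, a i ≠ b j) [Std.Total fun i j => G.Adj (a i) (b j)]
    (hcard : 4 ≤ Fintype.card ι) :
    ∃ (u : V) (C : G.Walk u u), C.IsCycle ∧ C.length = 2 * Fintype.card ι - 2 ∧
      (∀ v ∈ C.support, ∃ i, v = a i ∨ v = b i) ∧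
      ∃ T : Finset ι, Fintype.card ι - 2 ≤ T.card ∧ ∀ i ∈ T, s(a i, b i) ∈ C.edges := by
  classical
  obtain ⟨x, l, y, hc, hxy, hx, hy, hlen⟩ :=
    exists_isChain_of_four_le_card (R := fun i j => G.Adj (a i) (b j)) hcard
  have hab : ∀ i, G.Adj (a i) (b i) := refl_of fun i j => G.Adj (a i) (b j)
  obtain ⟨P, hP, hPlen, hsupp, hedges⟩ := exists_isPath_of_isChain ha hb hne hab hc hx hy
  refine ⟨b y, P.cons hxy.symm, isCycle_cons_of_isPath hP (by lia) _, ?_, ?_, l.toFinset, ?_, ?_⟩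
  · simp only [SimpleGraph.Walk.length_cons]
    lia
  · intro v hv
    rcases mem_cons.1 hv with rfl | hv
    · exact ⟨y, .inr rfl⟩
    · rcases hsupp v hv with ⟨i, _, h⟩ | ⟨i, _, h⟩
      exacts [⟨i, .inl h.symm⟩, ⟨i, .inr h.symm⟩]
  · rw [toFinset_card_of_nodup hx.of_cons]; lia
  · exact fun i hi => mem_cons_of_mem _ (hedges i (mem_toFinset.1 hi))

theorem exists_eq_mk_of_isBipartiteWith (h : G.IsBipartiteWith s t) {e : Sym2 V}
    (he : e ∈ G.edgeSet) : ∃ u v, e = s(u, v) ∧ u ∈ s ∧ v ∈ t := by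
  induction e with | _ u v =>
  rcases h.mem_of_adj he with ⟨hu, hv⟩ | ⟨hu, hv⟩
  · exact ⟨u, v, rfl, hu, hv⟩
  · exact ⟨v, u, Sym2.eq_swap, hv, hu⟩

theorem IsStrongClique.adj_or_adj (hS : IsStrongClique G S) (h : G.IsBipartiteWith s t)
    {u v u' v' : V} (hu : u ∈ s) (hv : v ∈ t) (hu' : u' ∈ s) (hv' : v' ∈ t)
    (he : s(u, v) ∈ S) (he' : s(u', v') ∈ S) : G.Adj u v' ∨ G.Adj u' v := by
  have huv : G.Adj u v := hS.1 he
  have huv' : G.Adj u' v' := hS.1 he'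
  have hdisj {w : V} (hs : w ∈ s) : w ∉ t := h.disjoint.notMem_of_mem_left hs
  obtain ⟨p, q, hp, hq, rfl | hpq⟩ := hS.2 _ he _ he' <;>
    rcases Sym2.mem_iff.1 hp with rfl | rfl <;> rcases Sym2.mem_iff.1 hq with rfl | rfl
  · exact .inl huv'
  · exact absurd hv' (hdisj hu)
  · exact absurd hv (hdisj hu')
  · exact .inl huv
  · exact absurd (h.mem_of_mem_adj hu hpq) (hdisj hu')
  · exact .inl hpq
  · exact .inr hpq.symm
  · exact absurd hv (hdisj (h.mem_of_mem_adj' hv' hpq))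

end Graph

theorem stmt1_general {V : Type*} [DecidableEq V] (G : SimpleGraph V) (hbip : G.Colorable 2)
    (S : Set (Sym2 V)) (hS : IsStrongClique G S)
    (M : Finset (Sym2 V)) (hMS : ↑M ⊆ S)
    (hmatch : ∀ e ∈ M, ∀ f ∈ M, e ≠ f → ∀ v : V, v ∈ e → v ∉ f)
    (m : ℕ) (hm : M.card = m) (hm4 : 4 ≤ m) :
    ∃ (u : V) (C : G.Walk u u), C.IsCycle ∧ C.length = 2 * m - 2 ∧
      (∀ v ∈ C.support, ∃ e ∈ M, v ∈ e) ∧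
      m - 2 ≤ (M.filter (fun e => e ∈ C.edges)).card := by
  obtain ⟨s, t, hst⟩ := SimpleGraph.isBipartite_iff_exists_isBipartiteWith.1 hbip
  choose a b he has hbt using fun i : M => exists_eq_mk_of_isBipartiteWith hst (hS.1 (hMS i.2))
  have hinj : ∀ (i j : M) (v : V), v ∈ i.1 → v ∈ j.1 → i = j := fun i j v hi hj =>
    Subtype.ext (by_contra fun hij => hmatch i i.2 j j.2 hij v hi hj)
  have ha : ∀ i : M, a i ∈ i.1 := fun i => he i ▸ Sym2.mem_mk_left _ _
  have hb : ∀ i : M, b i ∈ i.1 := fun i => he i ▸ Sym2.mem_mk_right _ _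
  have : Std.Total fun i j : M => G.Adj (a i) (b j) :=
    ⟨fun i j => hS.adj_or_adj hst (has i) (hbt i) (has j) (hbt j)
      (he i ▸ hMS i.2) (he j ▸ hMS j.2)⟩
  obtain ⟨u, C, hC, hlen, hsupp, T, hT, hedges⟩ :=
    exists_isCycle_of_total (G := G) (a := a) (b := b)
      (fun i j h => hinj i j _ (ha i) (h ▸ ha j)) (fun i j h => hinj i j _ (hb i) (h ▸ hb j))
      (fun i j => hst.disjoint.ne_of_mem (has i) (hbt j)) (by simpa [hm] using hm4)
  rw [Fintype.card_coe, hm] at hlen hT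
  refine ⟨u, C, hC, hlen, fun v hv => ?_, hT.trans ?_⟩
  · obtain ⟨i, rfl | rfl⟩ := hsupp v hv
    exacts [⟨i, i.2, ha i⟩, ⟨i, i.2, hb i⟩]
  · refine Finset.card_le_card_of_injOn Subtype.val (fun i hi => ?_) Subtype.val_injective.injOn
    simpa [he i] using ⟨he i ▸ i.2, hedges i hi⟩

/-- If `G` is a bipartite graph, `H` is the subgraph of `G` induced by a strong clique
of `G`, and `M` is a matching of `H` of size `m ≥ 4`, then `G[V(M)]` contains a cycle of
length `2m - 2` using at least `m - 2` edges of `M`. -/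
theorem stmt1 {V : Type*} [Fintype V] [DecidableEq V] (G : SimpleGraph V)
    (hbip : G.Colorable 2)
    (S : Set (Sym2 V)) (hS : IsStrongClique G S)
    (M : Finset (Sym2 V)) (hMS : ↑M ⊆ S)
    (hmatch : ∀ e ∈ M, ∀ f ∈ M, e ≠ f → ∀ v : V, v ∈ e → v ∉ f)
    (m : ℕ) (hm : M.card = m) (hm4 : 4 ≤ m) :
    ∃ (u : V) (C : G.Walk u u), C.IsCycle ∧ C.length = 2 * m - 2 ∧
      (∀ v ∈ C.support, ∃ e ∈ M, v ∈ e) ∧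
      m - 2 ≤ (M.filter (fun e => e ∈ C.edges)).card := by
  exact stmt1_general G hbip S hS M hMS hmatch m hm hm4
end

section
/- For every integer k ≥ 2, if G is a C_{2k}-free bipartite graph with maximum degree Δ(G) ≥ 1, then the strong clique number of G is at most kΔ(G) − (k−1). -/
/-- `G` contains no cycle of length `n`. -/
def CycleFree {V : Type*} (G : SimpleGraph V) (n : ℕ) : Prop :=
  ∀ (v : V) (c : G.Walk v v), c.IsCycle → c.length ≠ n

/-!
Split `G` into its two sides and regard the clique as a set `F` of edges of a bipartite relation in
which any two edges `ab`, `a'b'` of `F` satisfy `a ~ b'` or `a' ~ b`. Let `D` be the maximum degree.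

If `D < k`, counting around a vertex of maximum degree in `F` gives `|F| ≤ D²`, which is at most
`kD - (k - 1)`. If `k = 2`, the absence of quadrilaterals makes the endpoint shared by two edges of
`F` adjacent to an endpoint of every edge of `F`, and `|F| ≤ 2D - 1` follows directly.

Let `3 ≤ k ≤ D`, and orient `ab` towards `a'b'` when `a ~ b'`. On a matching in `F`, a directed
cycle of length `k` is a cycle of length `2k` in `G`. As in Moon's theorem on tournaments, a
matching of `k + 1` edges of `F` would produce a cycle of length `2k`, so by König's theorem `F` has
a vertex cover of some size `m ≤ k`. If `m < k` then `|F| ≤ mD` suffices, so suppose `m = k`. A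
vertex with `D` edges in `F` is joined by edges of `F` to the opposite endpoints of all edges of
`F`.
* If the cover lies on one side and the bound fails, some cover vertex has `D` edges in `F`, so `F`
  is a complete `k × D` bipartite graph with at most `k - 2` edges missing. This contains a cycle of
  length `2k`: build it by induction on `k`, removing a pair of adjacent vertices one of which has a
  missing edge.
* If the cover meets both sides, every cover vertex with fewer than `D` edges in `F` saves one edge
  in the count `|F| ≤ kD`, while every cover vertex with `D` edges in `F` is joined to the cover
  vertices on the other side by edges which that count contains twice. At most one of the latter
  edges is claimed by two vertices.
-/

section ChainsAndCycles

variable {ι : Type*} {R : ι → ι → Prop}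

theorem isChain_append_cons {l₁ l₂ : List ι} {v : ι} (hl : (l₁ ++ l₂).IsChain R)
    (hlast : ∀ x ∈ l₁.getLast?, R x v) (hhead : ∀ y ∈ l₂.head?, R v y) :
    (l₁ ++ v :: l₂).IsChain R := by
  obtain ⟨hl₁, hl₂, -⟩ := List.isChain_append.1 hl
  exact List.isChain_append.2 ⟨hl₁, List.isChain_cons.2 ⟨hhead, hl₂⟩, by simpa using hlast⟩

theorem cycle_chain_cons {l : List ι} {v : ι} (hne : l ≠ []) (hl : l.IsChain R)
    (hlast : ∀ x ∈ l.getLast?, R x v) (hhead : ∀ y ∈ l.head?, R v y) :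
    Cycle.Chain R (v :: l : List ι) := by
  rw [Cycle.chain_coe_cons, List.isChain_cons, List.isChain_append]
  exact ⟨by simpa [List.head?_append_of_ne_nil _ hne] using hhead, hl, by simp,
    by simpa using hlast⟩

theorem cycle_chain_reverse {l : List ι} :
    Cycle.Chain (flip R) (l.reverse : List ι) ↔ Cycle.Chain R (l : List ι) := by
  cases l with
  | nil => rfl
  | cons a l =>
    have hrot : ((a :: l).reverse : Cycle ι) = (a :: l.reverse : List ι) := by
      rw [Cycle.coe_eq_coe, List.reverse_cons]
      exact List.isRotated_append
    rw [hrot, Cycle.chain_coe_cons, Cycle.chain_coe_cons, ← List.isChain_reverse]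
    simp [flip]

theorem nodup_map_of_perm_toList {κ : Type*} {f : ι → κ} {T : Finset ι}
    (hf : Set.InjOn f (T : Set ι)) {p : List ι} (hp : p.Perm T.toList) : (p.map f).Nodup :=
  (List.nodup_map_iff_inj_on (hp.nodup_iff.2 T.nodup_toList)).2 fun x hx y hy ↦
    hf (by simpa [hp.mem_iff] using hx) (by simpa [hp.mem_iff] using hy)

theorem exists_insertion_or_split {l : List ι} {v : ι} (h : ∀ x ∈ l, R x v ∨ R v x) :
    (∃ l₁ x y l₂, l = l₁ ++ x :: y :: l₂ ∧ R x v ∧ R v y) ∨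
      ∃ l₁ l₂, l = l₁ ++ l₂ ∧ (∀ x ∈ l₁, R v x) ∧ ∀ x ∈ l₂, R x v := by
  induction l with
  | nil => exact .inr ⟨[], [], rfl, by simp, by simp⟩
  | cons a l ih =>
    obtain ⟨ha, hl⟩ := List.forall_mem_cons.1 h
    rcases ih hl with ⟨l₁, x, y, l₂, rfl, hx, hy⟩ | ⟨l₁, l₂, rfl, h₁, h₂⟩
    · exact .inl ⟨a :: l₁, x, y, l₂, rfl, hx, hy⟩
    rcases ha with ha | ha
    · cases l₁ with
      | nil => exact .inr ⟨[], a :: l₂, rfl, by simp, List.forall_mem_cons.2 ⟨ha, h₂⟩⟩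
      | cons b l₁ => exact .inl ⟨[], a, b, l₁ ++ l₂, rfl, ha, h₁ b (by simp)⟩
    · exact .inr ⟨a :: l₁, l₂, rfl, List.forall_mem_cons.2 ⟨ha, h₁⟩, h₂⟩

theorem exists_perm_isChain {l : List ι} (h : ∀ x ∈ l, ∀ y ∈ l, R x y ∨ R y x) :
    ∃ p : List ι, p.Perm l ∧ p.IsChain R := by
  induction l with
  | nil => exact ⟨[], .refl _, .nil⟩
  | cons v l ih =>
    obtain ⟨p, hpl, hp⟩ := ih fun x hx y hy ↦ h x (by simp [hx]) y (by simp [hy])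
    have hv : ∀ x ∈ p, R x v ∨ R v x := fun x hx ↦ h x (by simp [hpl.mem_iff.1 hx]) v (by simp)
    rcases exists_insertion_or_split hv with ⟨l₁, x, y, l₂, rfl, hx, hy⟩ | ⟨l₁, l₂, rfl, h₁, h₂⟩
    · refine ⟨(l₁ ++ [x]) ++ v :: y :: l₂, List.perm_middle.trans (.cons v (by simpa using hpl)),
        isChain_append_cons (by simpa using hp) (by simpa using hx) (by simpa using hy)⟩
    cases l₁ with
    | nil =>
      exact ⟨l₂ ++ [v], (List.perm_append_singleton v l₂).trans (.cons v hpl), isChain_append_cons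
        (by simpa using hp) (fun x hx ↦ h₂ x (List.mem_of_getLast? hx)) (by simp)⟩
    | cons a l₁ =>
      exact ⟨v :: (a :: l₁ ++ l₂), .cons v hpl, List.isChain_cons.2 ⟨by simpa using h₁ a, hp⟩⟩

theorem exists_cycle_chain_or_exists_isChain_cons {l : List ι} {v : ι} (hlen : 3 ≤ l.length)
    (hl : l.IsChain R) (hends : ∀ x ∈ l.head?, ∀ y ∈ l.getLast?, R x y)
    (h : ∀ x ∈ l, R x v ∨ R v x) :
    (∃ w p, (w :: p).Perm (v :: l) ∧ Cycle.Chain R (p : List ι)) ∨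
      ∃ p : List ι, p.Perm (v :: l) ∧ p.IsChain R ∧
        ∀ x ∈ p.head?, ∀ y ∈ p.getLast?, R x y := by
  rcases exists_insertion_or_split h with ⟨l₁, x, y, l₂, rfl, hx, hy⟩ | ⟨l₁, l₂, rfl, h₁, h₂⟩
  · refine .inr ⟨(l₁ ++ [x]) ++ v :: y :: l₂, List.perm_middle.trans (.cons v (by simp)),
      isChain_append_cons (by simpa using hl) (by simpa using hx) (by simpa using hy), ?_⟩
    cases l₁ <;> simpa [List.getLast?_cons, List.getLast?_append] using hends
  rcases l₁ with _ | ⟨a, l₁⟩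
  · refine .inr ⟨l₂ ++ [v], List.perm_append_singleton v l₂, isChain_append_cons
      (by simpa using hl) (fun x hx ↦ h₂ x (List.mem_of_getLast? hx)) (by simp), ?_⟩
    cases l₂ with
    | nil => simp at hlen
    | cons b l₂ => simpa [List.getLast?_cons] using h₂ b (by simp)
  rcases l₂.eq_nil_or_concat' with rfl | ⟨l₂, b, rfl⟩
  · refine .inr ⟨v :: (a :: l₁ ++ []), .refl _, List.isChain_cons.2 ⟨by simpa using h₁ a, hl⟩, ?_⟩
    simpa using fun y hy ↦ h₁ y (List.mem_of_getLast? hy)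
  left
  rcases l₁ with _ | ⟨a', l₁⟩
  · rcases l₂ with _ | ⟨c, l₂⟩
    · simp at hlen
    have hperm : (b :: v :: a :: c :: l₂).Perm (v :: (a :: (c :: l₂ ++ [b]))) :=
      (List.perm_append_singleton b (v :: a :: c :: l₂)).symm
    have hchain : (a :: c :: l₂).IsChain R :=
      List.IsChain.left_of_append (l₂ := [b]) (by simpa using hl)
    exact ⟨b, v :: a :: c :: l₂, hperm, cycle_chain_cons (by simp) hchain
      (fun x hx ↦ h₂ x (List.mem_append_left _ (List.mem_of_getLast? (by simpa using hx))))
      (by simpa using h₁ a)⟩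
  · exact ⟨a, v :: (a' :: l₁ ++ (l₂ ++ [b])), .swap .., cycle_chain_cons (by simp) hl.tail
      (by simpa [List.getLast?_cons] using h₂ b) (by simpa using h₁ a')⟩

-- A transitive tournament has no cycles at all, hence the second alternative.
theorem exists_cycle_chain_or_isChain_head_getLast {l : List ι} (hlen : 4 ≤ l.length)
    (h : ∀ x ∈ l, ∀ y ∈ l, R x y ∨ R y x) :
    (∃ v p, (v :: p).Perm l ∧ Cycle.Chain R (p : List ι)) ∨
      ∃ p : List ι, p.Perm l ∧ p.IsChain R ∧ ∀ x ∈ p.head?, ∀ y ∈ p.getLast?, R x y := by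
  rcases l with _ | ⟨v, t⟩
  · simp at hlen
  obtain ⟨p, hpt, hp⟩ : ∃ p : List ι, p.Perm t ∧ p.IsChain R :=
    exists_perm_isChain fun x hx y hy ↦ h x (by simp [hx]) y (by simp [hy])
  by_cases hends : ∀ x ∈ p.head?, ∀ y ∈ p.getLast?, R x y
  · have hv : ∀ x ∈ p, R x v ∨ R v x := fun x hx ↦ h x (by simp [hpt.mem_iff.1 hx]) v (by simp)
    have hlen' : 3 ≤ p.length := by simpa [hpt.length_eq] using hlen
    rcases exists_cycle_chain_or_exists_isChain_cons hlen' hp hends hv with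
      ⟨w, q, hq, hc⟩ | ⟨q, hq, hc⟩
    · exact .inl ⟨w, q, hq.trans (.cons v hpt), hc⟩
    · exact .inr ⟨q, hq.trans (.cons v hpt), hc⟩
  · rcases p with _ | ⟨x, p⟩
    · simp at hends
    push Not at hends
    obtain ⟨x', hx', y, hy, hxy⟩ := hends
    obtain rfl : x = x' := by simpa using hx'
    have hyx : R y x := (h x (by simp [← hpt.mem_iff]) y (by
      simp [← hpt.mem_iff, List.mem_of_getLast? hy])).resolve_left hxy
    refine .inl ⟨v, x :: p, .cons v hpt, ?_⟩
    rw [Cycle.chain_coe_cons, ← List.cons_append]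
    exact List.isChain_append.2 ⟨hp, .singleton x, by simp_all⟩

theorem exists_append_getLast_head {P Q : ι → Prop} [DecidablePred P] [DecidablePred Q]
    (a b : ι) (l : List ι)
    (h : (a :: l).countP (¬ P ·) + (l ++ [b]).countP (¬ Q ·) < l.length + 1) :
    ∃ l₁ l₂, l₁ ≠ [] ∧ a :: l = l₁ ++ l₂ ∧ (∀ x ∈ l₁.getLast?, P x) ∧
      ∀ y ∈ (l₂ ++ [b]).head?, Q y := by
  induction l generalizing a with
  | nil =>
    refine ⟨[a], [], by simp, rfl, ?_⟩
    simpa [List.countP_cons] using h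
  | cons c l ih =>
    by_cases hac : P a ∧ Q c
    · exact ⟨[a], c :: l, by simp, rfl, by simpa using hac⟩
    · obtain ⟨l₁, l₂, hne, hl, hP, hQ⟩ := ih c (by grind)
      exact ⟨a :: l₁, l₂, by simp, by simp [hl], by rwa [List.getLast?_cons_of_ne_nil hne], hQ⟩

theorem exists_isRotated_getLast_head {P Q : ι → Prop} [DecidablePred P] [DecidablePred Q]
    {l : List ι} (h : l.countP (¬ P ·) + l.countP (¬ Q ·) < l.length) :
    ∃ p : List ι, p.IsRotated l ∧ (∀ x ∈ p.getLast?, P x) ∧ ∀ y ∈ p.head?, Q y := by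
  rcases l with _ | ⟨a, l⟩
  · simp at h
  obtain ⟨l₁, l₂, hne, hl, hP, hQ⟩ := exists_append_getLast_head a a l (P := P) (Q := Q) (by grind)
  refine ⟨l₂ ++ l₁, hl ▸ List.isRotated_append, ?_, ?_⟩
  · simpa [List.getLast?_append_of_ne_nil _ hne] using hP
  · cases l₁ <;> cases l₂ <;> simp_all

end ChainsAndCycles

section StrongCliques

open Finset

variable {α β : Type*} {E : α → β → Prop} {F : Finset (α × β)} {D : ℕ}

/-- `F` is a strong clique of the bipartite relation `E`: any two edges of `F` share an endpoint or
are joined by an edge. Sharing the left endpoint `e.1 = f.1` gives `E e.1 f.2`, and likewise on the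
right, so only the joining edges need to be mentioned; `e = f` gives `E e.1 e.2`. -/
def IsStrong (E : α → β → Prop) (F : Finset (α × β)) : Prop :=
  ∀ e ∈ F, ∀ f ∈ F, E e.1 f.2 ∨ E f.1 e.2

/-- Every left vertex has at most `D` neighbours under `E`; finite sets of neighbours are counted,
so that no finiteness of `β` is needed. The condition on right vertices is
`LeftDegreeLE (flip E) D`. -/
def LeftDegreeLE (E : α → β → Prop) (D : ℕ) : Prop :=
  ∀ a, ∀ s : Finset β, (∀ b ∈ s, E a b) → #s ≤ D

/-- The neighbours of the left vertex `a` in the edge set `F`. -/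
noncomputable def row (F : Finset (α × β)) (a : α) : Finset β :=
  F.preimage (Prod.mk a) (Prod.mk_right_injective a).injOn

/-- The edge set `F` with the two sides exchanged, which reduces statements on right vertices to
statements on left vertices. -/
def transpose (F : Finset (α × β)) : Finset (β × α) :=
  F.map (Equiv.prodComm α β).toEmbedding

/-- `T` is a matching: distinct edges of `T` have distinct left and distinct right endpoints. -/
structure IsMatching (T : Finset (α × β)) : Prop where
  injOn_fst : Set.InjOn Prod.fst (T : Set (α × β))
  injOn_snd : Set.InjOn Prod.snd (T : Set (α × β))

@[simp] theorem mem_row {a : α} {b : β} : b ∈ row F a ↔ (a, b) ∈ F := by simp [row]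

@[simp] theorem mk_mem_transpose {a : α} {b : β} : (b, a) ∈ transpose F ↔ (a, b) ∈ F := by
  simp [transpose]

@[simp] theorem transpose_transpose : transpose (transpose F) = F := by
  ext ⟨a, b⟩
  simp

@[simp] theorem card_transpose : #(transpose F) = #F := card_map _

theorem image_fst_transpose [DecidableEq β] : (transpose F).image Prod.fst = F.image Prod.snd := by
  ext b
  simp

theorem IsMatching.transpose {T : Finset (α × β)} (hT : IsMatching T) :
    IsMatching (transpose T) where
  injOn_fst := by
    rintro ⟨b, a⟩ he ⟨b', a'⟩ hf hb
    exact congrArg Prod.swap (hT.injOn_snd (mk_mem_transpose.1 he) (mk_mem_transpose.1 hf) hb)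
  injOn_snd := by
    rintro ⟨b, a⟩ he ⟨b', a'⟩ hf ha
    exact congrArg Prod.swap (hT.injOn_fst (mk_mem_transpose.1 he) (mk_mem_transpose.1 hf) ha)

theorem IsMatching.mono {T U : Finset (α × β)} (hU : IsMatching U) (h : T ⊆ U) : IsMatching T :=
  ⟨hU.injOn_fst.mono h, hU.injOn_snd.mono h⟩

theorem IsMatching.union [DecidableEq α] [DecidableEq β] {T U : Finset (α × β)}
    (hT : IsMatching T) (hU : IsMatching U) (hfst : ∀ e ∈ T, ∀ f ∈ U, e.1 ≠ f.1)
    (hsnd : ∀ e ∈ T, ∀ f ∈ U, e.2 ≠ f.2) : IsMatching (T ∪ U) := by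
  have hdisj : Disjoint (T : Set (α × β)) U :=
    Set.disjoint_left.2 fun e heT heU ↦ hfst e heT e heU rfl
  constructor <;> rw [coe_union, Set.injOn_union hdisj]
  · exact ⟨hT.injOn_fst, hU.injOn_fst, hfst⟩
  · exact ⟨hT.injOn_snd, hU.injOn_snd, hsnd⟩

theorem IsStrong.adj (hF : IsStrong E F) {e : α × β} (he : e ∈ F) : E e.1 e.2 :=
  or_self_iff.1 (hF e he e he)

theorem IsStrong.mono {T : Finset (α × β)} (hF : IsStrong E F) (h : T ⊆ F) : IsStrong E T :=
  fun e he f hf ↦ hF e (h he) f (h hf)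

theorem IsStrong.flip_transpose (hF : IsStrong E F) : IsStrong (flip E) (transpose F) := by
  rintro ⟨b, a⟩ he ⟨b', a'⟩ hf
  exact (hF (a, b) (by simpa using he) (a', b') (by simpa using hf)).symm

theorem card_row_eq_card_filter [DecidableEq α] (F : Finset (α × β)) (a : α) :
    #(row F a) = #{e ∈ F | e.1 = a} := by
  rw [← card_map ⟨Prod.mk a, Prod.mk_right_injective a⟩]
  congr 1
  ext ⟨x, b⟩
  simp only [mem_map, mem_row, Function.Embedding.coeFn_mk, mem_filter]
  grind

theorem LeftDegreeLE.card_row_le (hE : LeftDegreeLE E D) (hF : ∀ e ∈ F, E e.1 e.2) (a : α) :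
    #(row F a) ≤ D :=
  hE a _ fun b hb ↦ hF (a, b) (mem_row.1 hb)

theorem LeftDegreeLE.card_le_of_injOn_snd (hE : LeftDegreeLE E D) {a : α}
    (hinj : Set.InjOn Prod.snd (F : Set (α × β))) (ha : ∀ e ∈ F, E a e.2) : #F ≤ D := by
  classical
  rw [← card_image_of_injOn hinj]
  exact hE a _ (forall_mem_image.2 ha)

theorem card_row_transpose_eq_card_filter [DecidableEq β] (F : Finset (α × β)) (b : β) :
    #(row (transpose F) b) = #{e ∈ F | e.2 = b} := by
  rw [card_row_eq_card_filter, transpose, filter_map, card_map]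
  rfl

theorem card_filter_adj_le [DecidableRel E] (hl : LeftDegreeLE E D) {a : α} {s : ℕ}
    (hcol : ∀ e ∈ F, #(row (transpose F) e.2) ≤ s) : #{e ∈ F | E a e.2} ≤ s * D := by
  classical
  have hfib : ∀ b ∈ ({e ∈ F | E a e.2} : Finset _).image Prod.snd,
      #{e ∈ ({e ∈ F | E a e.2} : Finset _) | e.2 = b} ≤ s := by
    refine forall_mem_image.2 fun e he ↦ ?_
    calc _ ≤ #{f ∈ F | f.2 = e.2} := card_le_card (filter_subset_filter _ (filter_subset _ _))
      _ = #(row (transpose F) e.2) := (card_row_transpose_eq_card_filter F e.2).symm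
      _ ≤ s := hcol e (mem_filter.1 he).1
  exact (card_le_mul_card_image _ s hfib).trans (Nat.mul_le_mul_left s
    (hl a _ (forall_mem_image.2 fun e he ↦ (mem_filter.1 he).2)))

theorem IsStrong.card_filter_not_adj_le [DecidableRel E] (hF : IsStrong E F)
    (hl : LeftDegreeLE E D) (hr : LeftDegreeLE (flip E) D) {a : α} (ha : (row F a).Nonempty) :
    #{e ∈ F | ¬ E a e.2} ≤ (D - #(row F a)) * (D - 1) := by
  classical
  set F' := {e ∈ F | ¬ E a e.2} with hF'
  have hadj : ∀ e ∈ F', ∀ b ∈ row F a, E e.1 b := fun e he b hb ↦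
    (hF e (mem_filter.1 he).1 (a, b) (mem_row.1 hb)).resolve_right (mem_filter.1 he).2
  have himage : #(F'.image Prod.fst) ≤ D - 1 := by
    obtain ⟨b, hb⟩ := ha
    have hnot : a ∉ F'.image Prod.fst := by
      simp only [mem_image, not_exists, not_and]
      rintro e he rfl
      exact (mem_filter.1 he).2 (hF.adj (mem_filter.1 he).1)
    have := hr b (insert a (F'.image Prod.fst)) (forall_mem_insert .. |>.2
      ⟨hF.adj (mem_row.1 hb), forall_mem_image.2 fun e he ↦ hadj e he b hb⟩)
    rw [card_insert_of_notMem hnot] at this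
    lia
  have hfib : ∀ x ∈ F'.image Prod.fst, #{e ∈ F' | e.1 = x} ≤ D - #(row F a) := by
    refine forall_mem_image.2 fun e he ↦ ?_
    have hdisj : Disjoint (row F' e.1) (row F a) := by
      refine disjoint_left.2 fun b hb hb' ↦ ?_
      exact (mem_filter.1 (mem_row.1 hb)).2 (hF.adj (mem_row.1 hb'))
    have := hl e.1 (row F' e.1 ∪ row F a) fun b hb ↦ (mem_union.1 hb).elim
      (fun hb ↦ hF.adj (mem_filter.1 (mem_row.1 hb)).1) (hadj e he b)
    rw [card_union_of_disjoint hdisj] at this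
    exact (card_row_eq_card_filter F' e.1).symm.trans_le (Nat.le_sub_of_add_le this)
  exact (card_le_mul_card_image _ _ hfib).trans (Nat.mul_le_mul_left _ himage)

theorem IsStrong.card_le_sq_of_card_row_transpose_le (hF : IsStrong E F)
    (hl : LeftDegreeLE E D) (hr : LeftDegreeLE (flip E) D) {a : α} (ha : (row F a).Nonempty)
    (hcol : ∀ e ∈ F, #(row (transpose F) e.2) ≤ #(row F a)) : #F ≤ D * D := by
  classical
  have hD : #(row F a) ≤ D := hl.card_row_le (fun e ↦ hF.adj) a
  calc #F = #{e ∈ F | E a e.2} + #{e ∈ F | ¬ E a e.2} :=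
        (card_filter_add_card_filter_not _).symm
    _ ≤ #(row F a) * D + (D - #(row F a)) * (D - 1) :=
        add_le_add (card_filter_adj_le hl hcol) (hF.card_filter_not_adj_le hl hr ha)
    _ ≤ #(row F a) * D + (D - #(row F a)) * D := by gcongr; lia
    _ = D * D := by rw [← add_mul, Nat.add_sub_cancel' hD]

theorem IsStrong.card_le_sq (hF : IsStrong E F) (hl : LeftDegreeLE E D)
    (hr : LeftDegreeLE (flip E) D) : #F ≤ D * D := by
  rcases F.eq_empty_or_nonempty with rfl | hne
  · simp
  obtain ⟨e, he, hemax⟩ := exists_max_image F (fun e ↦ #(row F e.1)) hne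
  obtain ⟨f, hf, hfmax⟩ := exists_max_image F (fun f ↦ #(row (transpose F) f.2)) hne
  rcases le_total #(row (transpose F) f.2) #(row F e.1) with h | h
  · exact hF.card_le_sq_of_card_row_transpose_le hl hr ⟨e.2, mem_row.2 he⟩
      fun g hg ↦ (hfmax g hg).trans h
  · rw [← card_transpose]
    refine hF.flip_transpose.card_le_sq_of_card_row_transpose_le hr hl (a := f.2)
      ⟨f.1, by simpa using hf⟩ ?_
    rintro ⟨b, a⟩ hg
    rw [transpose_transpose]
    exact (hemax (a, b) (by simpa using hg)).trans h

end StrongCliques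

section AltCycles

variable {α β : Type*} {E : α → β → Prop}

/-- An alternating cycle of a bipartite relation `E`: the cyclic list `a₁b₁, …, aₗbₗ` of edges
stands for the cycle `b₁a₁b₂a₂…bₗaₗ` of length `2l`, in which `aᵢ` is adjacent to `bᵢ₊₁`. -/
structure IsAltCycle (E : α → β → Prop) (l : List (α × β)) : Prop where
  nodup_fst : (l.map Prod.fst).Nodup
  nodup_snd : (l.map Prod.snd).Nodup
  adj : ∀ e ∈ l, E e.1 e.2
  chain : Cycle.Chain (fun e f ↦ E e.1 f.2) (l : Cycle (α × β))

/-- `E` has no alternating cycle of length `2k`. -/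
def AltCycleFree (E : α → β → Prop) (k : ℕ) : Prop :=
  ∀ l, IsAltCycle E l → l.length ≠ k

theorem IsAltCycle.swap {l : List (α × β)} (h : IsAltCycle E l) :
    IsAltCycle (flip E) (l.reverse.map Prod.swap) where
  nodup_fst := by simpa [Function.comp_def] using h.nodup_snd
  nodup_snd := by simpa [Function.comp_def] using h.nodup_fst
  adj := by
    simp only [List.forall_mem_map, List.mem_reverse]
    exact h.adj
  chain := by
    rw [← Cycle.map_coe, Cycle.chain_map]
    exact cycle_chain_reverse.2 h.chain

theorem AltCycleFree.swap {k : ℕ} (h : AltCycleFree E k) : AltCycleFree (flip E) k :=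
  fun l hl ↦ by simpa using h _ hl.swap

theorem AltCycleFree.not_quadrilateral (h : AltCycleFree E 2) {a a' : α} {b b' : β} (ha : a ≠ a')
    (hb : b ≠ b') (hab : E a b) (hab' : E a b') (ha'b : E a' b) : ¬ E a' b' := fun ha'b' ↦
  h [(a, b), (a', b')]
    ⟨by simpa using ha, by simpa using hb, by simp [hab, ha'b'], by simp [hab', ha'b]⟩ rfl

theorem isAltCycle_cons_of_isChain {x y : α × β} {l : List (α × β)} (hne : l ≠ [])
    (hfst : ((x :: (l ++ [y])).map Prod.fst).Nodup) (hsnd : ((x :: (l ++ [y])).map Prod.snd).Nodup)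
    (hadj : ∀ e ∈ l, E e.1 e.2) (hl : (x :: (l ++ [y])).IsChain fun e f ↦ E e.1 f.2)
    (hxy : E x.1 y.2) : IsAltCycle E ((x.1, y.2) :: l) where
  nodup_fst := by
    refine hfst.sublist ?_
    simp
  nodup_snd := by
    have := hsnd.of_cons
    rw [List.map_append] at this
    exact (List.perm_append_singleton y.2 _).nodup_iff.1 this
  adj := List.forall_mem_cons.2 ⟨hxy, hadj⟩
  chain := by
    obtain ⟨hx, hly⟩ := List.isChain_cons.1 hl
    obtain ⟨hchain, -, hlast⟩ := List.isChain_append.1 hly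
    refine cycle_chain_cons hne hchain (by simpa using hlast) ?_
    simpa [List.head?_append_of_ne_nil _ hne] using hx

open Finset

theorem IsMatching.exists_isAltCycle {T : Finset (α × β)} (hM : IsMatching T) (hT : IsStrong E T)
    (hcard : 4 ≤ #T) : ∃ l, IsAltCycle E l ∧ l.length + 1 = #T := by
  have hlen : 4 ≤ T.toList.length := by simpa using hcard
  have hmem : ∀ p : List (α × β), p.Perm T.toList → ∀ e ∈ p, E e.1 e.2 := fun p hp e he ↦
    hT.adj (by simpa [hp.mem_iff] using he)
  rcases exists_cycle_chain_or_isChain_head_getLast (R := fun e f : α × β ↦ E e.1 f.2) hlen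
    (fun e he f hf ↦ hT e (by simpa using he) f (by simpa using hf)) with
    ⟨v, p, hp, hc⟩ | ⟨p, hp, hc, hends⟩
  · exact ⟨p, ⟨(nodup_map_of_perm_toList hM.injOn_fst hp).of_cons,
      (nodup_map_of_perm_toList hM.injOn_snd hp).of_cons,
      fun e he ↦ hmem _ hp e (by simp [he]), hc⟩, by simpa using hp.length_eq⟩
  · rcases p with _ | ⟨x, p⟩
    · simp [← hp.length_eq] at hlen
    rcases p.eq_nil_or_concat' with rfl | ⟨l, y, rfl⟩
    · simp [← hp.length_eq] at hlen
    have hne : l ≠ [] := by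
      rintro rfl
      simp [← hp.length_eq] at hlen
    exact ⟨_, isAltCycle_cons_of_isChain hne (nodup_map_of_perm_toList hM.injOn_fst hp)
      (nodup_map_of_perm_toList hM.injOn_snd hp) (fun e he ↦ hmem _ hp e (by simp [he])) hc
      (hends x (by simp) y (by simp [List.getLast?_cons])), by simpa using hp.length_eq⟩

section NearComplete

variable [DecidableRel E]

theorem countP_add_countP_le_card_interedges {l : List (α × β)} {S : Finset α} {X : Finset β}
    {r : α} {z : β} (hfst : (l.map Prod.fst).Nodup) (hsnd : (l.map Prod.snd).Nodup)
    (hlS : ∀ e ∈ l, e.1 ∈ S ∧ e.1 ≠ r) (hlX : ∀ e ∈ l, e.2 ∈ X ∧ e.2 ≠ z)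
    (hr : r ∈ S) (hz : z ∈ X) :
    (l.countP fun e ↦ ¬ E e.1 z) + (l.countP fun e ↦ ¬ E r e.2) ≤
      #(Rel.interedges (fun a b ↦ ¬ E a b) S X) := by
  set L₁ := ((l.filter fun e ↦ ¬ E e.1 z).map Prod.fst).map (·, z) with hL₁
  set L₂ := ((l.filter fun e ↦ ¬ E r e.2).map Prod.snd).map (r, ·) with hL₂
  have hnodup : (L₁ ++ L₂).Nodup := by
    refine List.nodup_append'.2 ⟨(hfst.sublist (List.filter_sublist.map _)).map
      (Prod.mk_left_injective z), (hsnd.sublist (List.filter_sublist.map _)).map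
      (Prod.mk_right_injective r), ?_⟩
    intro e he₁ he₂
    obtain ⟨b, -, rfl⟩ : ∃ b, (∃ a, (a, b) ∈ l) ∧ (r, b) = e := by
      simp only [hL₂, List.mem_map, List.mem_filter] at he₂
      grind
    simp only [hL₁, List.mem_map, List.mem_filter] at he₁
    grind
  have hsub : L₁ ++ L₂ ⊆ (Rel.interedges (fun a b ↦ ¬ E a b) S X).toList := by
    intro e he
    simp only [hL₁, hL₂, List.mem_append, List.mem_map, List.mem_filter] at he
    rw [mem_toList, Rel.mem_interedges_iff]
    grind
  simpa [hL₁, hL₂, List.countP_eq_length_filter] using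
    (List.subperm_of_subset hnodup hsub).length_le

theorem exists_isAltCycle_cons {l : List (α × β)} {S : Finset α} {X : Finset β} {r : α} {z : β}
    (h : IsAltCycle E l) (hlS : ∀ e ∈ l, e.1 ∈ S ∧ e.1 ≠ r)
    (hlX : ∀ e ∈ l, e.2 ∈ X ∧ e.2 ≠ z) (hr : r ∈ S) (hz : z ∈ X) (hrz : E r z)
    (hmiss : #(Rel.interedges (fun a b ↦ ¬ E a b) S X) < l.length) :
    ∃ p : List (α × β), p.Perm l ∧ IsAltCycle E ((r, z) :: p) := by
  obtain ⟨p, hp, hlast, hhead⟩ := exists_isRotated_getLast_head (P := fun e : α × β ↦ E e.1 z)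
    (Q := fun e ↦ E r e.2) ((countP_add_countP_le_card_interedges h.nodup_fst h.nodup_snd
      hlS hlX hr hz).trans_lt hmiss)
  have hchain : Cycle.Chain (fun e f ↦ E e.1 f.2) (p : Cycle (α × β)) := by
    rw [Cycle.coe_eq_coe.2 hp]
    exact h.chain
  refine ⟨p, hp.perm, ?_, ?_, ?_, ?_⟩
  · rw [List.map_cons, List.nodup_cons, (hp.perm.map _).nodup_iff]
    refine ⟨?_, h.nodup_fst⟩
    simp only [List.mem_map, hp.mem_iff]
    grind
  · rw [List.map_cons, List.nodup_cons, (hp.perm.map _).nodup_iff]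
    refine ⟨?_, h.nodup_snd⟩
    simp only [List.mem_map, hp.mem_iff]
    grind
  · exact List.forall_mem_cons.2 ⟨hrz, fun e he ↦ h.adj e (hp.mem_iff.1 he)⟩
  · rcases p with _ | ⟨e, p⟩
    · exact absurd hmiss (by simp [← List.isRotated_nil_iff'.1 hp])
    rw [Cycle.chain_coe_cons, ← List.cons_append] at hchain
    exact cycle_chain_cons (by simp) hchain.left_of_append hlast hhead

theorem exists_adj_card_interedges_erase_le [DecidableEq α] [DecidableEq β] {S : Finset α}
    {X : Finset β} (hS : S.Nonempty) (hX : #(Rel.interedges (fun a b ↦ ¬ E a b) S X) < #X) :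
    ∃ r ∈ S, ∃ z ∈ X, E r z ∧ #(Rel.interedges (fun a b ↦ ¬ E a b) (S.erase r) (X.erase z)) ≤
      #(Rel.interedges (fun a b ↦ ¬ E a b) S X) - 1 := by
  set M := Rel.interedges (fun a b ↦ ¬ E a b) S X
  obtain ⟨r, hr, hrM⟩ : ∃ r ∈ S, M = ∅ ∨ ∃ b, (r, b) ∈ M := by
    rcases M.eq_empty_or_nonempty with h | ⟨⟨a, b⟩, h⟩
    · exact hS.imp fun r hr ↦ ⟨hr, .inl h⟩
    · exact ⟨a, (Rel.mk_mem_interedges_iff.1 h).1, .inr ⟨b, h⟩⟩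
  obtain ⟨z, hz, hrz⟩ : ∃ z ∈ X, E r z := by
    by_contra! h
    exact hX.not_ge (card_le_card_of_injOn (r, ·)
      (fun b hb ↦ Rel.mk_mem_interedges_iff.2 ⟨hr, hb, h b hb⟩) (Prod.mk_right_injective r).injOn)
  have hsub : Rel.interedges (fun a b ↦ ¬ E a b) (S.erase r) (X.erase z) ⊆ M :=
    Rel.interedges_mono (erase_subset r S) (erase_subset z X)
  refine ⟨r, hr, z, hz, hrz, ?_⟩
  rcases hrM with h | ⟨b, hb⟩
  · simp [subset_empty.1 (h ▸ hsub)]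
  · exact Nat.le_sub_one_of_lt (card_lt_card
      ⟨hsub, fun h ↦ by simpa using (Rel.mem_interedges_iff.1 (h hb)).1⟩)

theorem exists_isAltCycle_of_card_interedges_le {k : ℕ} (hk : 1 ≤ k) {S : Finset α} {X : Finset β}
    (hS : #S = k) (hX : k ≤ #X) (hmiss : #(Rel.interedges (fun a b ↦ ¬ E a b) S X) ≤ k - 2) :
    ∃ l, IsAltCycle E l ∧ l.length = k ∧ ∀ e ∈ l, e.1 ∈ S ∧ e.2 ∈ X := by
  classical
  induction k, hk using Nat.le_induction generalizing S X with
  | base =>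
    obtain ⟨r, hr, z, hz, hrz, -⟩ :=
      exists_adj_card_interedges_erase_le (E := E) (S := S) (X := X)
        (card_pos.1 (by lia)) (by lia)
    exact ⟨[(r, z)], ⟨by simp, by simp, by simpa, by simpa⟩, rfl, by simp [hr, hz]⟩
  | succ m hm ih =>
    obtain ⟨r, hr, z, hz, hrz, hmiss'⟩ :=
      exists_adj_card_interedges_erase_le (E := E) (S := S) (X := X)
        (card_pos.1 (by lia)) (by lia)
    obtain ⟨l, hl, hlen, hlSX⟩ := ih (S := S.erase r) (X := X.erase z)
      (by rw [card_erase_of_mem hr]; lia) (by rw [card_erase_of_mem hz]; lia) (by lia)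
    simp only [mem_erase] at hlSX
    obtain ⟨p, hp, hcyc⟩ := exists_isAltCycle_cons hl (S := S) (X := X) (by grind)
      (by grind) hr hz hrz (by lia)
    refine ⟨_, hcyc, by simp [hp.length_eq, hlen], List.forall_mem_cons.2 ⟨⟨hr, hz⟩, ?_⟩⟩
    exact fun e he ↦ ⟨(hlSX e (hp.mem_iff.1 he)).1.2, (hlSX e (hp.mem_iff.1 he)).2.2⟩

end NearComplete

end AltCycles

section CardinalityBounds

open Finset

variable {α β : Type*} {E : α → β → Prop} {F : Finset (α × β)} {D k : ℕ} {A : Finset α}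
  {B : Finset β}

theorem IsStrong.adj_of_fst_eq (hF : IsStrong E F) (h : AltCycleFree E 2) {e f g : α × β}
    (he : e ∈ F) (hf : f ∈ F) (hef : e ≠ f) (hfst : e.1 = f.1) (hg : g ∈ F) : E e.1 g.2 := by
  by_contra hn
  have hge : E g.1 e.2 := (hF e he g hg).resolve_left hn
  have hgf : E g.1 f.2 := (hF f hf g hg).resolve_left (hfst ▸ hn)
  have hne : e.1 ≠ g.1 := fun h ↦ hn (h ▸ hF.adj hg)
  exact h.not_quadrilateral hne (fun hsnd ↦ hef (Prod.ext hfst hsnd)) (hF.adj he)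
    (hfst ▸ hF.adj hf) hge hgf

theorem IsStrong.adj_of_snd_eq (hF : IsStrong E F) (h : AltCycleFree E 2) {e f g : α × β}
    (he : e ∈ F) (hf : f ∈ F) (hef : e ≠ f) (hsnd : e.2 = f.2) (hg : g ∈ F) : E g.1 e.2 :=
  hF.flip_transpose.adj_of_fst_eq h.swap (e := e.swap) (f := f.swap) (g := g.swap)
    (mk_mem_transpose.2 he) (mk_mem_transpose.2 hf) (Prod.swap_injective.ne hef) hsnd
    (mk_mem_transpose.2 hg)

theorem IsStrong.injOn_snd_of_snd_eq (hF : IsStrong E F) (h : AltCycleFree E 2) {e f : α × β}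
    (he : e ∈ F) (hf : f ∈ F) (hef : e ≠ f) (hsnd : e.2 = f.2) :
    Set.InjOn Prod.snd {g | g ∈ F ∧ (g.2 = e.2 → g = e)} := by
  rintro g ⟨hg, hge⟩ g' ⟨hg', hge'⟩ hgg
  by_contra hne
  have hcol : ∀ x ∈ F, E x.1 e.2 := fun x ↦ hF.adj_of_snd_eq h he hf hef hsnd
  have hcol' : ∀ x ∈ F, E x.1 g.2 := fun x ↦ hF.adj_of_snd_eq h hg hg' hne hgg
  have hb : e.2 ≠ g.2 := fun heg ↦ hne ((hge heg.symm).trans (hge' (hgg ▸ heg.symm)).symm)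
  exact h.not_quadrilateral (fun hfst ↦ hef (Prod.ext hfst hsnd)) hb (hcol e he) (hcol' e he)
    (hcol f hf) (hcol' f hf)

theorem IsStrong.card_lt_two_mul_of_fst_eq (hF : IsStrong E F) (hl : LeftDegreeLE E D)
    (hr : LeftDegreeLE (flip E) D) (h : AltCycleFree E 2) {e f : α × β} (he : e ∈ F) (hf : f ∈ F)
    (hef : e ≠ f) (hfst : e.1 = f.1) : #F < 2 * D := by
  classical
  have hadj : ∀ g ∈ F, E e.1 g.2 := fun g ↦ hF.adj_of_fst_eq h he hf hef hfst
  by_cases hinj : Set.InjOn Prod.snd (F : Set (α × β))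
  · have := hl.card_le_of_injOn_snd hinj hadj
    have := card_pos.2 ⟨e, he⟩
    lia
  obtain ⟨x, hx, y, hy, hsnd, hxy⟩ : ∃ x ∈ F, ∃ y ∈ F, x.2 = y.2 ∧ x ≠ y := by
    simpa only [Set.InjOn, mem_coe, not_forall, exists_prop] using hinj
  have hcol : #{g ∈ F | g.2 = x.2} ≤ D :=
    (card_row_transpose_eq_card_filter F x.2).symm.trans_le
      (hr.card_row_le (fun g ↦ hF.flip_transpose.adj) x.2)
  have hrest : #(insert x {g ∈ F | g.2 ≠ x.2}) ≤ D := by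
    refine hl.card_le_of_injOn_snd ((hF.injOn_snd_of_snd_eq h hx hy hxy hsnd).mono ?_)
      (a := e.1) ?_ <;> grind
  rw [card_insert_of_notMem (by simp)] at hrest
  have := card_filter_add_card_filter_not (s := F) fun g ↦ g.2 = x.2
  lia

theorem IsMatching.card_lt_two_mul (hM : IsMatching F) (hF : IsStrong E F)
    (hl : LeftDegreeLE E D) (hr : LeftDegreeLE (flip E) D) (hD : 1 ≤ D) : #F < 2 * D := by
  classical
  rcases F.eq_empty_or_nonempty with rfl | ⟨e, he⟩
  · rw [card_empty]
    lia
  have hout : #{f ∈ F | E e.1 f.2} ≤ D :=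
    hl.card_le_of_injOn_snd (hM.mono (filter_subset _ _)).injOn_snd
      fun f hf ↦ (mem_filter.1 hf).2
  have hin : #{f ∈ F | E f.1 e.2} ≤ D := by
    rw [← card_image_of_injOn (hM.mono (filter_subset _ _)).injOn_fst]
    exact hr e.2 _ (forall_mem_image.2 fun f hf ↦ (mem_filter.1 hf).2)
  have hunion : {f ∈ F | E e.1 f.2} ∪ {f ∈ F | E f.1 e.2} = F := by
    rw [← filter_or, filter_true_of_mem fun f hf ↦ hF e he f hf]
  have hinter : 0 < #({f ∈ F | E e.1 f.2} ∩ {f ∈ F | E f.1 e.2}) :=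
    card_pos.2 ⟨e, by simp [he, hF.adj he]⟩
  have := card_union_add_card_inter {f ∈ F | E e.1 f.2} {f ∈ F | E f.1 e.2}
  rw [hunion] at this
  lia

theorem IsStrong.card_lt_two_mul (hF : IsStrong E F) (hl : LeftDegreeLE E D)
    (hr : LeftDegreeLE (flip E) D) (hD : 1 ≤ D) (h : AltCycleFree E 2) : #F < 2 * D := by
  by_cases hfst : Set.InjOn Prod.fst (F : Set (α × β))
  · by_cases hsnd : Set.InjOn Prod.snd (F : Set (α × β))
    · exact IsMatching.card_lt_two_mul ⟨hfst, hsnd⟩ hF hl hr hD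
    obtain ⟨x, hx, y, hy, hsnd, hxy⟩ : ∃ x ∈ F, ∃ y ∈ F, x.2 = y.2 ∧ x ≠ y := by
      simpa only [Set.InjOn, mem_coe, not_forall, exists_prop] using hsnd
    rw [← card_transpose]
    exact hF.flip_transpose.card_lt_two_mul_of_fst_eq hr hl h.swap (e := x.swap) (f := y.swap)
      (mk_mem_transpose.2 hx) (mk_mem_transpose.2 hy) (Prod.swap_injective.ne hxy) hsnd
  · obtain ⟨x, hx, y, hy, hfst, hxy⟩ : ∃ x ∈ F, ∃ y ∈ F, x.1 = y.1 ∧ x ≠ y := by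
      simpa only [Set.InjOn, mem_coe, not_forall, exists_prop] using hfst
    exact hF.card_lt_two_mul_of_fst_eq hl hr h hx hy hxy hfst

theorem card_filter_fst_mem [DecidableEq α] (F : Finset (α × β)) (A : Finset α) :
    #{e ∈ F | e.1 ∈ A} = ∑ a ∈ A, #(row F a) := by
  have hmaps : Set.MapsTo Prod.fst (F.filter (·.1 ∈ A) : Set (α × β)) (A : Set α) := by
    simp +contextual [Set.MapsTo]
  rw [card_eq_sum_card_fiberwise hmaps]
  refine sum_congr rfl fun a ha ↦ ?_
  rw [card_row_eq_card_filter, filter_filter]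
  congr 1
  exact filter_congr (by grind)

theorem card_filter_snd_mem [DecidableEq β] (F : Finset (α × β)) (B : Finset β) :
    #{e ∈ F | e.2 ∈ B} = #{e ∈ transpose F | e.1 ∈ B} := by
  rw [transpose, filter_map, card_map]
  rfl

theorem LeftDegreeLE.card_filter_fst_mem_le [DecidableEq α] (hl : LeftDegreeLE E D)
    (hF : ∀ e ∈ F, E e.1 e.2) (A : Finset α) : #{e ∈ F | e.1 ∈ A} ≤ #A * D := by
  rw [card_filter_fst_mem, ← smul_eq_mul]
  exact sum_le_card_nsmul _ _ _ fun a _ ↦ hl.card_row_le hF a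

theorem LeftDegreeLE.card_filter_fst_mem_add_card_le [DecidableEq α] (hl : LeftDegreeLE E D)
    (hF : ∀ e ∈ F, E e.1 e.2) (A : Finset α) :
    #{e ∈ F | e.1 ∈ A} + #A ≤ #A * D + #{a ∈ A | #(row F a) = D} := by
  rw [card_filter_fst_mem, card_filter, card_eq_sum_ones, sum_mul, ← sum_add_distrib,
    ← sum_add_distrib]
  refine sum_le_sum fun a _ ↦ ?_
  have := hl.card_row_le hF a
  grind

theorem IsStrong.mk_mem_of_card_row_eq (hF : IsStrong E F) (hl : LeftDegreeLE E D) {a : α}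
    (ha : #(row F a) = D) {e : α × β} (he : e ∈ F) : (a, e.2) ∈ F := by
  classical
  by_contra hn
  have hlt : D < #(insert e.2 (row F a)) := by
    rw [card_insert_of_notMem (mt mem_row.1 hn), ha]
    exact D.lt_succ_self
  by_cases hadj : E a e.2
  · exact hlt.not_ge (hl a _ ((forall_mem_insert ..).2
      ⟨hadj, fun b hb ↦ hF.adj (mem_row.1 hb)⟩))
  · exact hlt.not_ge (hl e.1 _ ((forall_mem_insert ..).2
      ⟨hF.adj he, fun b hb ↦ (hF e he (a, b) (mem_row.1 hb)).resolve_right hadj⟩))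

theorem IsStrong.card_add_le_of_fst_mem (hF : IsStrong E F) (hl : LeftDegreeLE E D)
    (h : AltCycleFree E k) (hk : 1 ≤ k) (hkD : k ≤ D) {A : Finset α} (hA : #A = k)
    (hFA : ∀ e ∈ F, e.1 ∈ A) : #F + k ≤ k * D + 1 := by
  classical
  by_contra! hlt
  have hsum := hl.card_filter_fst_mem_add_card_le (fun e ↦ hF.adj) A
  rw [filter_true_of_mem hFA, hA] at hsum
  obtain ⟨a, ha⟩ : ({a ∈ A | #(row F a) = D} : Finset α).Nonempty := card_pos.1 (by lia)
  obtain ⟨-, ha⟩ := mem_filter.1 ha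
  have hF_sub : F ⊆ A ×ˢ row F a := fun e he ↦
    mem_product.2 ⟨hFA e he, mem_row.2 (hF.mk_mem_of_card_row_eq hl ha he)⟩
  have hmissing : #(Rel.interedges (fun a b ↦ ¬ E a b) A (row F a)) ≤ k - 2 := by
    calc _ ≤ #((A ×ˢ row F a) \ F) := card_le_card fun e he ↦ by
          obtain ⟨h1, h2, h3⟩ := Rel.mem_interedges_iff.1 he
          exact mem_sdiff.2 ⟨mem_product.2 ⟨h1, h2⟩, fun heF ↦ h3 (hF.adj heF)⟩
      _ = k * D - #F := by rw [card_sdiff_of_subset hF_sub, card_product, hA, ha]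
      _ ≤ k - 2 := by lia
  obtain ⟨l, hl, hlen, -⟩ :=
    exists_isAltCycle_of_card_interedges_le hk hA (hkD.trans ha.ge) hmissing
  exact h l hl hlen

/-- `(A, B)` is a vertex cover of the bipartite edge set `F`: every edge of `F` has its left
endpoint in `A` or its right endpoint in `B`. -/
def IsVertexCover (F : Finset (α × β)) (A : Finset α) (B : Finset β) : Prop :=
  ∀ e ∈ F, e.1 ∈ A ∨ e.2 ∈ B

theorem IsVertexCover.transpose (h : IsVertexCover F A B) :
    IsVertexCover (transpose F) B A := by
  rintro ⟨b, a⟩ he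
  exact (h (a, b) (by simpa using he)).symm

theorem IsVertexCover.card_add_card_inter [DecidableEq α] [DecidableEq β]
    (h : IsVertexCover F A B) :
    #F + #{e ∈ F | e.1 ∈ A ∧ e.2 ∈ B} = #{e ∈ F | e.1 ∈ A} + #{e ∈ F | e.2 ∈ B} := by
  rw [← card_union_add_card_inter {e ∈ F | e.1 ∈ A}, ← filter_or, ← filter_and,
    filter_true_of_mem h]

theorem IsStrong.card_le_of_isVertexCover (hF : IsStrong E F) (hl : LeftDegreeLE E D)
    (hr : LeftDegreeLE (flip E) D) (h : IsVertexCover F A B) :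
    #F ≤ (#A + #B) * D := by
  classical
  have hA := hl.card_filter_fst_mem_le (fun e ↦ hF.adj) A
  have hB := hr.card_filter_fst_mem_le (fun e ↦ hF.flip_transpose.adj) B
  rw [← card_filter_snd_mem] at hB
  have := h.card_add_card_inter
  lia

theorem IsStrong.card_add_le_of_isVertexCover [DecidableEq α] [DecidableEq β]
    (hF : IsStrong E F) (hl : LeftDegreeLE E D) (hr : LeftDegreeLE (flip E) D)
    (h : IsVertexCover F A B) (hA : A.Nonempty) (hB : B.Nonempty) (hFA : A ⊆ F.image Prod.fst)
    (hFB : B ⊆ F.image Prod.snd) : #F + (#A + #B) ≤ (#A + #B) * D + 1 := by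
  set A₀ := {a ∈ A | #(row F a) = D} with hA₀
  set B₀ := {b ∈ B | #(row (transpose F) b) = D} with hB₀
  have hcardA := hl.card_filter_fst_mem_add_card_le (fun e ↦ hF.adj) A
  have hcardB := hr.card_filter_fst_mem_add_card_le (fun e ↦ hF.flip_transpose.adj) B
  rw [← card_filter_snd_mem] at hcardB
  obtain ⟨a, ha⟩ := hA
  obtain ⟨b, hb⟩ := hB
  have hleft : A₀ ×ˢ {b} ⊆ {e ∈ F | e.1 ∈ A ∧ e.2 ∈ B} := by
    rintro ⟨x, y⟩ hxy
    obtain ⟨⟨hx, hxD⟩, rfl⟩ : (x ∈ A ∧ #(row F x) = D) ∧ b = y := by simpa [hA₀] using hxy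
    obtain ⟨e, he, rfl⟩ := mem_image.1 (hFB hb)
    exact mem_filter.2 ⟨hF.mk_mem_of_card_row_eq hl hxD he, hx, hb⟩
  have hright : {a} ×ˢ B₀ ⊆ {e ∈ F | e.1 ∈ A ∧ e.2 ∈ B} := by
    rintro ⟨x, y⟩ hxy
    obtain ⟨⟨hy, hyD⟩, rfl⟩ : (y ∈ B ∧ #(row (transpose F) y) = D) ∧ a = x := by
      simpa [hB₀] using hxy
    obtain ⟨e, he, rfl⟩ := mem_image.1 (hFA ha)
    exact mem_filter.2 ⟨mk_mem_transpose.1 (hF.flip_transpose.mk_mem_of_card_row_eq hr hyD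
      (mk_mem_transpose.2 he)), ha, hy⟩
  have hcross : #((A₀ ×ˢ {b}) ∩ ({a} ×ˢ B₀)) ≤ 1 := by
    rw [← card_singleton (a, b)]
    exact card_le_card (by grind)
  have hunion := card_le_card (union_subset hleft hright)
  have := card_union_add_card_inter (A₀ ×ˢ {b}) ({a} ×ˢ B₀)
  rw [card_product, card_product, card_singleton, card_singleton] at this
  have := h.card_add_card_inter
  lia

theorem IsVertexCover.card_le_card_biUnion_row [DecidableEq β] (hcov : IsVertexCover F A B)
    (hmin : ∀ A' B', IsVertexCover F A' B' → #A + #B ≤ #A' + #B') (s : Finset A) :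
    #s ≤ #(s.biUnion fun a ↦ row F a \ B) := by
  classical
  set U := s.biUnion fun a ↦ row F a \ B
  have hcov' : IsVertexCover F (A \ s.map (.subtype _)) (B ∪ U) := by
    intro e he
    by_cases hb : e.2 ∈ B
    · exact .inr (mem_union_left _ hb)
    have ha : e.1 ∈ A := (hcov e he).resolve_right hb
    by_cases has : ⟨e.1, ha⟩ ∈ s
    · exact .inr (mem_union_right _ (mem_biUnion.2 ⟨_, has, by simpa using ⟨he, hb⟩⟩))
    · exact .inl (mem_sdiff.2 ⟨ha, by simpa [ha] using has⟩)
  have hsub : s.map (.subtype _) ⊆ A := map_subtype_subset s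
  have hle := hmin _ _ hcov'
  rw [card_sdiff_of_subset hsub, card_map] at hle
  have hsA := card_le_card hsub
  rw [card_map] at hsA
  have := card_union_le B U
  lia

theorem IsVertexCover.exists_isMatching_left [DecidableEq α] (hcov : IsVertexCover F A B)
    (hmin : ∀ A' B', IsVertexCover F A' B' → #A + #B ≤ #A' + #B') :
    ∃ T ⊆ F, IsMatching T ∧ T.image Prod.fst = A ∧ ∀ e ∈ T, e.2 ∉ B := by
  classical
  obtain ⟨m, hm, hmem⟩ := (all_card_le_biUnion_card_iff_exists_injective _).1
    (hcov.card_le_card_biUnion_row hmin)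
  have hrange : ((univ.image fun a : A ↦ (a.1, m a) : Finset (α × β)) : Set (α × β)) =
      Set.range fun a ↦ (a.1, m a) := by simp
  refine ⟨univ.image fun a : A ↦ (a.1, m a), ?_, ⟨?_, ?_⟩, ?_, ?_⟩
  · exact image_subset_iff.2 fun a _ ↦ mem_row.1 (mem_sdiff.1 (hmem a)).1
  · rw [hrange]
    exact Function.Injective.injOn_range Subtype.val_injective
  · rw [hrange]
    exact Function.Injective.injOn_range hm
  · rw [image_image]
    exact attach_image_val
  · exact forall_mem_image.2 fun a _ ↦ (mem_sdiff.1 (hmem a)).2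

theorem exists_isVertexCover_minimal (F : Finset (α × β)) :
    ∃ A B, IsVertexCover F A B ∧ ∀ A' B', IsVertexCover F A' B' → #A + #B ≤ #A' + #B' := by
  classical
  obtain ⟨⟨A, B⟩, hcov, hmin⟩ := exists_minimalFor_of_wellFoundedLT
    (fun c : Finset α × Finset β ↦ IsVertexCover F c.1 c.2) (fun c ↦ #c.1 + #c.2)
    ⟨(F.image Prod.fst, ∅), fun e he ↦ .inl (mem_image_of_mem _ he)⟩
  exact ⟨A, B, hcov, fun A' B' h ↦ (le_total _ _).elim id fun hle ↦ hmin (j := (A', B')) h hle⟩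

theorem exists_isVertexCover_isMatching [DecidableEq α] [DecidableEq β] (F : Finset (α × β)) :
    ∃ A B, IsVertexCover F A B ∧ ∃ T ⊆ F, IsMatching T ∧ #T = #A + #B ∧
      A ⊆ T.image Prod.fst ∧ B ⊆ T.image Prod.snd := by
  obtain ⟨A, B, hcov, hmin⟩ := exists_isVertexCover_minimal F
  obtain ⟨T, hTF, hT, rfl, hTB⟩ := hcov.exists_isMatching_left hmin
  obtain ⟨U, hUF, hU, rfl, hUA⟩ := hcov.transpose.exists_isMatching_left fun B' A' h ↦ by
    rw [add_comm #B, add_comm #B']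
    exact hmin A' B' (by simpa using h.transpose)
  obtain ⟨U, rfl⟩ : ∃ U' : Finset (α × β), U = transpose U' := ⟨transpose U, by simp⟩
  rw [image_fst_transpose] at hTB hcov
  replace hU : IsMatching U := by simpa using hU.transpose
  replace hUA : ∀ e ∈ U, e.1 ∉ T.image Prod.fst := fun e he ↦ hUA e.swap (mk_mem_transpose.2 he)
  have hUF : U ⊆ F := fun e he ↦ mk_mem_transpose.1 (hUF (mk_mem_transpose.2 he))
  have hdisj : Disjoint T U :=
    disjoint_left.2 fun e heT heU ↦ hUA e heU (mem_image_of_mem _ heT)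
  refine ⟨_, _, hcov, T ∪ U, union_subset hTF hUF, hT.union hU ?_ ?_, ?_,
    image_subset_image subset_union_left, image_subset_image subset_union_right⟩
  · exact fun e he f hf hef ↦ hUA f hf (mem_image.2 ⟨e, he, hef⟩)
  · exact fun e he f hf hef ↦ hTB e he (mem_image.2 ⟨f, hf, hef.symm⟩)
  · rw [card_union_of_disjoint hdisj, card_image_of_injOn hT.injOn_fst,
      card_image_of_injOn hU.injOn_snd]

theorem AltCycleFree.card_isMatching_le (h : AltCycleFree E k) (hk : 3 ≤ k) {T : Finset (α × β)}
    (hM : IsMatching T) (hT : IsStrong E T) : #T ≤ k := by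
  by_contra! hlt
  obtain ⟨T', hsub, hcard⟩ := exists_subset_card_eq hlt
  obtain ⟨l, hl, hlen⟩ := (hM.mono hsub).exists_isAltCycle (hT.mono hsub) (by lia)
  exact h l hl (by lia)

theorem IsStrong.card_add_le_of_three_le (hF : IsStrong E F) (hl : LeftDegreeLE E D)
    (hr : LeftDegreeLE (flip E) D) (hk : 3 ≤ k) (hkD : k ≤ D) (h : AltCycleFree E k) :
    #F + k ≤ k * D + 1 := by
  classical
  obtain ⟨A, B, hcov, T, hTF, hT, hcard, hA, hB⟩ := exists_isVertexCover_isMatching F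
  have hABk : #A + #B ≤ k := hcard ▸ h.card_isMatching_le hk hT (hF.mono hTF)
  rcases hABk.eq_or_lt with hABk | hABk
  · rcases A.eq_empty_or_nonempty with rfl | hAne
    · rw [← card_transpose]
      refine hF.flip_transpose.card_add_le_of_fst_mem hr h.swap (by lia) hkD (A := B)
        (by simpa using hABk) fun e he ↦ ?_
      simpa using hcov.transpose e he
    rcases B.eq_empty_or_nonempty with rfl | hBne
    · exact hF.card_add_le_of_fst_mem hl h (by lia) hkD (A := A) (by simpa using hABk)
        fun e he ↦ by simpa using hcov e he
    rw [← hABk]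
    exact hF.card_add_le_of_isVertexCover hl hr hcov hAne hBne
      (hA.trans (image_subset_image hTF)) (hB.trans (image_subset_image hTF))
  · calc #F + k ≤ (k - 1) * D + D := by
          gcongr
          exact (hF.card_le_of_isVertexCover hl hr hcov).trans (by gcongr; lia)
      _ = k * D := by rw [← Nat.succ_mul]; congr 1; lia
      _ ≤ k * D + 1 := Nat.le_succ _

theorem IsStrong.card_add_le (hF : IsStrong E F) (hl : LeftDegreeLE E D)
    (hr : LeftDegreeLE (flip E) D) (hD : 1 ≤ D) (hk : 2 ≤ k) (h : AltCycleFree E k) :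
    #F + k ≤ k * D + 1 := by
  rcases lt_or_ge D k with hDk | hkD
  · have := hF.card_le_sq hl hr
    nlinarith
  rcases hk.eq_or_lt with rfl | hk
  · have := hF.card_lt_two_mul hl hr hD h
    lia
  · exact hF.card_add_le_of_three_le hl hr hk hkD h

end CardinalityBounds

section BipartiteGraphs

variable {V : Type*} {G : SimpleGraph V} {s t : Set V}

theorem exists_walk_support_eq_flatMap {e : V × V} {l : List (V × V)}
    (hadj : ∀ f ∈ e :: l, G.Adj f.1 f.2) (hl : (e :: l).IsChain fun f g ↦ G.Adj f.1 g.2) :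
    ∃ w : G.Walk e.2 ((e :: l).getLast (by simp)).1,
      w.support = (e :: l).flatMap fun f ↦ [f.2, f.1] := by
  induction l generalizing e with
  | nil => exact ⟨.cons (hadj e (by simp)).symm .nil, by simp⟩
  | cons f l ih =>
    obtain ⟨hef, hl⟩ := List.isChain_cons_cons.1 hl
    obtain ⟨w, hw⟩ := ih (fun g hg ↦ hadj g (by simp [hg])) hl
    refine ⟨(SimpleGraph.Walk.cons (hadj e (by simp)).symm (.cons hef w)).copy rfl ?_, ?_⟩
    · simp
    · simp [hw]

/-- `a` is a vertex of `s` adjacent to `b`. For a bipartite graph `G` with `s` as left side, this is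
the relation between left and right vertices whose pairs are the edges of `G`. -/
def AdjFrom (G : SimpleGraph V) (s : Set V) (a b : V) : Prop :=
  a ∈ s ∧ G.Adj a b

theorem IsAltCycle.exists_isCycle (hG : G.IsBipartiteWith s t) {l : List (V × V)}
    (h : IsAltCycle (AdjFrom G s) l) (hlen : 2 ≤ l.length) :
    ∃ (v : V) (c : G.Walk v v), c.IsCycle ∧ c.length = 2 * l.length := by
  rcases l with _ | ⟨e, l⟩
  · simp at hlen
  have hchain := h.chain
  rw [Cycle.chain_coe_cons, ← List.cons_append, List.isChain_append] at hchain
  obtain ⟨hl, -, hlast⟩ := hchain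
  obtain ⟨w, hw⟩ := exists_walk_support_eq_flatMap (G := G) (fun f hf ↦ (h.adj f hf).2)
    (hl.imp fun f g hfg ↦ hfg.2)
  have hclose : G.Adj ((e :: l).getLast (by simp)).1 e.2 :=
    (hlast _ (List.getLast_mem_getLast? (by simp)) e (by simp)).2
  have hnodup : w.support.Nodup := by
    have hperm : (((e :: l).map Prod.snd) ++ (e :: l).map Prod.fst).Perm w.support := by
      rw [hw, ← List.flatMap_singleton' ((e :: l).map Prod.fst), List.flatMap_map]
      exact List.map_append_flatMap_perm ..
    refine hperm.nodup_iff.1 (List.nodup_append'.2 ⟨h.nodup_snd, h.nodup_fst, ?_⟩)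
    intro x hxB hxA
    obtain ⟨f, hf, rfl⟩ := List.mem_map.1 hxB
    obtain ⟨g, hg, hgf⟩ := List.mem_map.1 hxA
    exact Set.disjoint_left.1 hG.disjoint (h.adj g hg).1
      (hgf ▸ hG.mem_of_mem_adj (h.adj f hf).1 (h.adj f hf).2)
  have hwlen : w.length + 1 = 2 * (e :: l).length := by
    rw [← w.length_support, hw]
    simp only [List.flatMap_cons, List.cons_append, List.nil_append, List.length_cons,
      List.length_flatMap, List.length_nil, zero_add, Nat.reduceAdd, List.map_const',
      List.sum_replicate, smul_eq_mul]
    lia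
  refine ⟨_, .cons hclose w, ?_, by simpa using hwlen⟩
  rw [SimpleGraph.Walk.cons_isCycle_iff]
  refine ⟨.mk' hnodup, ?_⟩
  intro hmem
  have := (SimpleGraph.Walk.IsPath.mk' hnodup).length_eq_one_of_mem_edges (Sym2.eq_swap ▸ hmem)
  lia

theorem leftDegreeLE_adjFrom [G.LocallyFinite] {D : ℕ} (hdeg : ∀ v, G.degree v ≤ D) :
    LeftDegreeLE (AdjFrom G s) D := fun a _ hu ↦
  (Finset.card_le_card fun b hb ↦ (G.mem_neighborFinset a b).2 (hu b hb).2).trans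
    ((G.card_neighborFinset_eq_degree a).trans_le (hdeg a))

theorem leftDegreeLE_flip_adjFrom [G.LocallyFinite] {D : ℕ} (hdeg : ∀ v, G.degree v ≤ D) :
    LeftDegreeLE (flip (AdjFrom G s)) D := fun b _ hu ↦
  (Finset.card_le_card fun a ha ↦ (G.mem_neighborFinset b a).2 (hu a ha).2.symm).trans
    ((G.card_neighborFinset_eq_degree b).trans_le (hdeg b))

theorem CycleFree.altCycleFree_adjFrom {k : ℕ} (hk : 2 ≤ k) (h : CycleFree G (2 * k))
    (hG : G.IsBipartiteWith s t) : AltCycleFree (AdjFrom G s) k := by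
  rintro l hl rfl
  obtain ⟨v, c, hc, hlen⟩ := hl.exists_isCycle hG hk
  exact h v c hc hlen

theorem IsStrongClique.isStrong_adjFrom (hG : G.IsBipartiteWith s t) {F : Finset (V × V)}
    (hF : ∀ e ∈ F, e.1 ∈ s)
    (hS : IsStrongClique G ((fun e : V × V ↦ s(e.1, e.2)) '' F)) : IsStrong (AdjFrom G s) F := by
  have hedge : ∀ e ∈ F, e.1 ∈ s ∧ G.Adj e.1 e.2 := fun e he ↦ ⟨hF e he, hS.1 ⟨e, he, rfl⟩⟩
  intro e he f hf
  obtain ⟨hes, hadj_e⟩ := hedge e he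
  obtain ⟨hfs, hadj_f⟩ := hedge f hf
  have het := hG.mem_of_mem_adj hes hadj_e
  have hft := hG.mem_of_mem_adj hfs hadj_f
  have hdisj : ∀ v ∈ s, v ∉ t := fun _ hv ↦ Set.disjoint_left.1 hG.disjoint hv
  obtain ⟨x, y, hx, hy, hxy⟩ := hS.2 _ ⟨e, he, rfl⟩ _ ⟨f, hf, rfl⟩
  rcases hxy with rfl | hxy
  · have : e.1 = f.1 ∨ e.2 = f.2 := by
      grind
    grind [AdjFrom]
  · have : G.Adj e.1 f.2 ∨ G.Adj f.1 e.2 := by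
      grind [hG.mem_of_adj hxy, G.adj_comm]
    grind [AdjFrom]

theorem IsStrongClique.exists_isStrong_card_le (hG : G.IsBipartiteWith s t)
    {S : Finset (Sym2 V)} (hS : IsStrongClique G S) :
    ∃ F : Finset (V × V), IsStrong (AdjFrom G s) F ∧ S.card ≤ F.card := by
  classical
  have hsub : (S : Set (Sym2 V)) ⊆ (fun e : V × V ↦ s(e.1, e.2)) '' {e | e.1 ∈ s} := by
    intro e he
    induction e with | _ a b
    rcases hG.mem_of_adj (hS.1 he) with ⟨ha, -⟩ | ⟨-, hb⟩
    · exact ⟨(a, b), ha, rfl⟩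
    · exact ⟨(b, a), hb, Sym2.eq_swap⟩
  obtain ⟨F, hFs, rfl⟩ := Finset.subset_set_image_iff.1 hsub
  rw [Finset.coe_image] at hS
  exact ⟨F, hS.isStrong_adjFrom hG hFs, Finset.card_image_le⟩

end BipartiteGraphs

theorem stmt9_general {V : Type*} (G : SimpleGraph V) [G.LocallyFinite] {k D : ℕ} (hk : 2 ≤ k)
    (hbip : G.Colorable 2) (hc2k : CycleFree G (2 * k)) (hD : 1 ≤ D)
    (hdeg : ∀ v, G.degree v ≤ D) (S : Finset (Sym2 V)) (hS : IsStrongClique G ↑S) :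
    (S.card : ℤ) ≤ k * D - (k - 1) := by
  obtain ⟨s, t, hG⟩ := SimpleGraph.IsBipartite.exists_isBipartiteWith hbip
  obtain ⟨F, hF, hSF⟩ := hS.exists_isStrong_card_le hG
  have hcard := hF.card_add_le (leftDegreeLE_adjFrom hdeg) (leftDegreeLE_flip_adjFrom hdeg) hD hk
    (hc2k.altCycleFree_adjFrom hk hG)
  push_cast [← Int.ofNat_le] at *
  lia

/-- For `k ≥ 2`, if `G` is a `C₂ₖ`-free bipartite graph with `Δ(G) ≥ 1`, then the strong
clique number of `G` is at most `kΔ(G) - (k - 1)`. -/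
theorem stmt9 {V : Type*} [Fintype V] [DecidableEq V] (G : SimpleGraph V)
    [DecidableRel G.Adj] (k : ℕ) (hk : 2 ≤ k)
    (hbip : G.Colorable 2) (hc2k : CycleFree G (2 * k))
    (hΔ : 1 ≤ G.maxDegree)
    (S : Finset (Sym2 V)) (hS : IsStrongClique G ↑S) :
    (S.card : ℤ) ≤ k * G.maxDegree - (k - 1) := by
  exact stmt9_general G hk hbip hc2k hΔ G.degree_le_maxDegree S hS
end

section
/- For every integer k ≥ 4, if G is a graph with no cycle of length 5 and no cycle of length 2k, and Δ(G) ≥ 1, then the strong clique number of G is at most kΔ(G) − (k−1). -/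
/-!
A connected vertex cover of `S` with at most four vertices already bounds `#S` by `4 * Δ(G) - 3`,
each vertex after the first sharing an edge of `G` with an earlier one. If there is no such cover,
then excluding 5-cycles leaves no triangle among the edges of `G` that lie in `S` or join two
disjoint members of `S`. These edges then form a bipartite graph, so `S` can be oriented from one
side `C` to the other, and any two members are linked: the tail of one is adjacent to the head of
the other.

A directed cycle of `k` links between pairwise disjoint members is an alternating cycle of length
`2 * k` in `G`, so by Moon's theorem `k` disjoint members are never strongly connected under
linking. By König's theorem `S` either has a vertex cover with fewer than `k` vertices or contains
`k` disjoint members. In the second case the `k` members split into two parts with all links going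
one way; the tails `A` of the first part are completely joined to the heads `B` of the second, and
since spanning paths of links that leave through another member of `S` would again close up to a
`2k`-cycle, the split can be chosen so that the `k` vertices of `A ∪ B` cover `S`. The edges between
`A` and `B` are counted twice at these vertices, and there are at least `k - 1` of them.
-/

section TotalRelation

open List Relation

variable {ι : Type*} {R : ι → ι → Prop}

theorem exists_eq_cons_concat_of_two_le_length {l : List ι} (hl : 2 ≤ l.length) :
    ∃ x m z, l = x :: (m ++ [z]) := by
  obtain ⟨x, t, rfl⟩ := exists_cons_of_length_pos (by omega : 0 < l.length)
  obtain ⟨m, z, rfl⟩ := (eq_nil_or_concat' t).resolve_left (by rintro rfl; simp at hl)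
  exact ⟨x, m, z, rfl⟩

theorem length_eq_card_of_nodup_of_forall_mem {l : List ι} (hl : l.Nodup) (hspan : ∀ x, x ∈ l) :
    l.length = Nat.card ι := by
  classical
  simpa using Nat.card_congr (hl.getEquivOfForallMemList l hspan)

theorem isChain_cons_orderedInsert [Std.Total R] [DecidableRel R] {v y : ι} {l : List ι}
    (hl : IsChain R (y :: l)) (hy : R y v) : IsChain R (y :: l.orderedInsert R v) := by
  induction l generalizing y with
  | nil => simpa using hy
  | cons x l ih =>
    rw [isChain_cons_cons] at hl
    by_cases hvx : R v x
    · rw [orderedInsert_cons_of_le _ _ hvx]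
      exact (hl.2.cons_cons hvx).cons_cons hy
    · rw [orderedInsert, if_neg hvx]
      exact (ih hl.2 ((total_of R x v).resolve_right hvx)).cons_cons hl.1

theorem isChain_orderedInsert [Std.Total R] [DecidableRel R] {l : List ι} (hl : IsChain R l)
    (v : ι) : IsChain R (l.orderedInsert R v) := by
  cases l with
  | nil => simp
  | cons x l =>
    by_cases hvx : R v x
    · rw [orderedInsert_cons_of_le _ _ hvx]
      exact hl.cons_cons hvx
    · rw [orderedInsert, if_neg hvx]
      exact isChain_cons_orderedInsert hl ((total_of R x v).resolve_right hvx)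

theorem isChain_insertionSort [Std.Total R] [DecidableRel R] (l : List ι) :
    IsChain R (l.insertionSort R) := by
  induction l with
  | nil => simp
  | cons v l ih => exact isChain_orderedInsert ih v

theorem orderedInsert_append_singleton [DecidableRel R] {v z : ι} {l : List ι}
    (h : ∃ x ∈ l ++ [z], R v x) :
    (l ++ [z]).orderedInsert R v = l.orderedInsert R v ++ [z] := by
  induction l with
  | nil => simp_all
  | cons y l ih =>
    by_cases hvy : R v y
    · simp [hvy]
    · simp_all

theorem exists_crossing_of_reflTransGen {s : Set ι} {x y : ι} (h : ReflTransGen R x y)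
    (hx : x ∈ s) (hy : y ∉ s) : ∃ p ∈ s, ∃ q ∉ s, R p q := by
  induction h with
  | refl => exact absurd hx hy
  | @tail p q _ hpq ih =>
    by_cases hp : p ∈ s
    · exact ⟨p, hp, q, hy, hpq⟩
    · exact ih hp

theorem reflTransGen_of_isChain_cons {x y : ι} {l : List ι} (hl : IsChain R (x :: l))
    (hy : y ∈ x :: l) : ReflTransGen R x y := by
  have h := isChain_iff_pairwise.1 (hl.imp fun _ _ => ReflTransGen.single)
  rcases mem_cons.1 hy with rfl | hy
  exacts [.refl, (pairwise_cons.1 h).1 y hy]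

theorem reflTransGen_of_isChain_concat {x y : ι} {l : List ι} (hl : IsChain R (l ++ [y]))
    (hx : x ∈ l ++ [y]) : ReflTransGen R x y := by
  have h := isChain_iff_pairwise.1 (hl.imp fun _ _ => ReflTransGen.single)
  rcases mem_append.1 hx with hx | hx
  · exact (pairwise_append.1 h).2.2 x hx y (mem_singleton_self y)
  · rw [mem_singleton.1 hx]

theorem exists_nodup_isChain_of_reflTransGen {x y : ι} (h : ReflTransGen R x y) :
    ∃ l : List ι, (l ++ [y]).head? = some x ∧ (l ++ [y]).Nodup ∧ IsChain R (l ++ [y]) := by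
  induction h using ReflTransGen.head_induction_on with
  | refl => exact ⟨[], by simp⟩
  | @head p q hpq _ ih =>
    obtain ⟨l, hhead, hnodup, hchain⟩ := ih
    by_cases hp : p ∈ l ++ [y]
    · have hsuffix : ∃ m t, l ++ [y] = m ++ (t ++ [y]) ∧ (t ++ [y]).head? = some p := by
        rcases mem_append.1 hp with hp | hp
        · obtain ⟨m, t, rfl⟩ := append_of_mem hp
          exact ⟨m, p :: t, by simp, by simp⟩
        · exact ⟨l, [], by simp, by simp_all⟩
      obtain ⟨m, t, heq, ht⟩ := hsuffix
      rw [heq] at hnodup hchain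
      exact ⟨t, ht, hnodup.of_append_right, hchain.right_of_append⟩
    · refine ⟨p :: l, by simp, nodup_cons.2 ⟨hp, hnodup⟩, ?_⟩
      refine isChain_cons.2 ⟨fun z hz => ?_, hchain⟩
      obtain rfl : q = z := Option.some_injective _ (hhead.symm.trans hz)
      exact hpq

theorem exists_spanning_isChain_concat [Finite ι] [Std.Total R] {j : ι}
    (hj : ∀ x, ReflTransGen R x j) :
    ∃ l : List ι, (l ++ [j]).Nodup ∧ IsChain R (l ++ [j]) ∧ ∀ x, x ∈ l ++ [j] := by
  classical
  have := Fintype.ofFinite ι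
  have hlong : ∀ n, ∃ l : List ι, (l ++ [j]).Nodup ∧ IsChain R (l ++ [j]) ∧
      (n ≤ l.length ∨ ∀ x, x ∈ l ++ [j]) := by
    intro n
    induction n with
    | zero => exact ⟨[], by simp⟩
    | succ n ih =>
      obtain ⟨l, hnodup, hchain, hlen | hspan⟩ := ih
      swap
      · exact ⟨l, hnodup, hchain, .inr hspan⟩
      by_cases! hspan : ∀ x, x ∈ l ++ [j]
      · exact ⟨l, hnodup, hchain, .inr hspan⟩
      obtain ⟨v, hv⟩ := hspan
      obtain ⟨p, hp, x, hx, hpx⟩ :=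
        exists_crossing_of_reflTransGen (s := {x | x ∉ l ++ [j]}) (hj v) hv (by simp)
      have hinsert := orderedInsert_append_singleton (R := R) ⟨x, not_not.1 hx, hpx⟩
      refine ⟨l.orderedInsert R p, ?_, hinsert ▸ isChain_orderedInsert hchain p, .inl ?_⟩
      · rw [← hinsert, (perm_orderedInsert R p _).nodup_iff, nodup_cons]
        exact ⟨hp, hnodup⟩
      · rw [orderedInsert_length]
        exact Nat.succ_le_succ hlen
  obtain ⟨l, hnodup, hchain, hlen | hspan⟩ := hlong (Fintype.card ι)
  · have := hnodup.length_le_card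
    rw [length_append, length_singleton] at this
    omega
  · exact ⟨l, hnodup, hchain, hspan⟩

theorem exists_spanning_isChain_cons [Finite ι] [Std.Total R] {i : ι}
    (hi : ∀ x, ReflTransGen R i x) :
    ∃ l : List ι, (i :: l).Nodup ∧ IsChain R (i :: l) ∧ ∀ x, x ∈ i :: l := by
  have : Std.Total (Function.swap R) := ⟨fun x y => total_of R y x⟩
  obtain ⟨l, hnodup, hchain, hspan⟩ := exists_spanning_isChain_concat (R := Function.swap R)
    fun x => reflTransGen_swap.2 (hi x)
  refine ⟨l.reverse, ?_, ?_, fun x => ?_⟩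
  · simpa [and_comm] using nodup_reverse.2 hnodup
  · simpa using isChain_reverse.2 hchain
  · simpa [or_comm] using hspan x

/-- Rédei's theorem. -/
theorem exists_nodup_isChain_mem_iff [Std.Total R] (T : Finset ι) :
    ∃ l : List ι, l.Nodup ∧ IsChain R l ∧ ∀ x, x ∈ l ↔ x ∈ T := by
  classical
  have hperm := T.toList.perm_insertionSort R
  exact ⟨_, hperm.nodup_iff.2 T.nodup_toList, isChain_insertionSort _,
    fun x => hperm.mem_iff.trans Finset.mem_toList⟩

theorem exists_coe_cons_eq_of_mem {c : Cycle ι} {y : ι} (hy : y ∈ c) :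
    ∃ l : List ι, c = ↑(y :: l) := by
  induction c using Quotient.inductionOn' with
  | _ l =>
    obtain ⟨s, t, rfl⟩ := append_of_mem (Cycle.mem_coe_iff.1 hy)
    exact ⟨t ++ s, Cycle.coe_eq_coe.2 (isRotated_append ..)⟩

theorem exists_arc_of_forall_notMem_not_both {s : Set ι} (hstrong : ∀ x y, ReflTransGen R x y)
    (hs : s.Nonempty) (hs' : sᶜ.Nonempty)
    (hboth : ∀ v ∉ s, (∃ y ∈ s, R y v) → ∀ x ∈ s, ¬ R v x) :
    ∃ o i, R o i ∧ (∀ x ∈ s, ¬ R o x) ∧ ∀ y ∈ s, ¬ R y i := by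
  obtain ⟨c, hc⟩ := hs
  obtain ⟨v, hv⟩ := hs'
  obtain ⟨p, hp, q, hq, hpq⟩ := exists_crossing_of_reflTransGen (hstrong c v) hc hv
  obtain ⟨o, ⟨-, ho⟩, i, hi, hoi⟩ := exists_crossing_of_reflTransGen
    (s := {z | z ∉ s ∧ ∀ x ∈ s, ¬ R z x}) (hstrong q c) ⟨hq, hboth q hq ⟨p, hp, hpq⟩⟩ (·.1 hc)
  have his : i ∉ s := fun his => ho i his hoi
  refine ⟨o, i, hoi, ho, fun y hy hyi => hi ⟨his, hboth i his ⟨y, hy, hyi⟩⟩⟩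

theorem exists_closed_set_between [Finite ι] [Std.Total R] [IsTrans ι R] {I J : Set ι}
    (hJ : ∀ j ∈ J, ¬ ∀ x, R x j) (hI : ∀ i ∈ I, ¬ ∀ x, R i x) (hIJ : ∀ i ∈ I, ∀ j ∈ J, ¬ R i j)
    (hr : ∃ x y, ¬ R x y) :
    ∃ P : Set ι, P.Nonempty ∧ Pᶜ.Nonempty ∧ (∀ x y, R x y → y ∈ P → x ∈ P) ∧ J ⊆ P ∧
      ∀ i ∈ I, i ∉ P := by
  obtain ⟨x, y, hxy⟩ := hr
  have : Nonempty ι := ⟨x⟩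
  obtain ⟨top, htop⟩ : ∃ t, ∀ x, R x t :=
    (Std.Total.directed (r := R) (id : ι → ι)).finite_le id
  obtain ⟨bot, hbot⟩ : ∃ b, ∀ x, R b x :=
    (Std.Total.directed (r := Function.swap R) (id : ι → ι)).finite_le id
  refine ⟨{x | R x bot ∨ ∃ j ∈ J, R x j}, ⟨bot, .inl (refl_of R bot)⟩, ⟨top, ?_⟩, ?_,
    fun j hj => .inr ⟨j, hj, refl_of R j⟩, ?_⟩
  · rintro (h | ⟨j, hj, h⟩)
    · exact hxy (_root_.trans (htop x) (_root_.trans h (hbot y)))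
    · exact hJ j hj fun x => _root_.trans (htop x) h
  · rintro x y hxy (h | ⟨j, hj, h⟩)
    exacts [.inl (_root_.trans hxy h), .inr ⟨j, hj, _root_.trans hxy h⟩]
  · rintro i hi (h | ⟨j, hj, h⟩)
    exacts [hI i hi fun x => _root_.trans h (hbot x), hIJ i hi j hj h]

variable [Std.Total R]

theorem exists_cycle_insert {c : Cycle ι} (hnodup : c.Nodup) (hchain : c.Chain R) {v x y : ι}
    (hv : v ∉ c) (hy : y ∈ c) (hyv : R y v) (hx : x ∈ c) (hvx : R v x) :
    ∃ c' : Cycle ι, c'.Nodup ∧ c'.Chain R ∧ c'.length = c.length + 1 := by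
  classical
  obtain ⟨l, rfl⟩ := exists_coe_cons_eq_of_mem hy
  have hinsert : (l ++ [y]).orderedInsert R v = l.orderedInsert R v ++ [y] :=
    orderedInsert_append_singleton
      ⟨x, by simpa [or_comm, eq_comm] using Cycle.mem_coe_iff.1 hx, hvx⟩
  refine ⟨(y :: l.orderedInsert R v : List ι), ?_, ?_, ?_⟩
  · have hperm : y :: l.orderedInsert R v ~ v :: y :: l :=
      ((perm_orderedInsert R v l).cons y).trans (.swap ..)
    exact Cycle.nodup_coe_iff.2 (hperm.nodup_iff.2 (nodup_cons.2 ⟨hv, hnodup⟩))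
  · rw [Cycle.chain_coe_cons] at hchain ⊢
    exact hinsert ▸ isChain_cons_orderedInsert hchain hyv
  · simp [orderedInsert_length]

theorem exists_mem_of_cycle_length_pos {c : Cycle ι} (hc : 0 < c.length) : ∃ y, y ∈ c := by
  induction c using Quotient.inductionOn' with
  | _ l => exact length_pos_iff_exists_mem.1 hc

theorem exists_notMem_of_cycle_length_lt_card {c : Cycle ι} (hc : c.length < Nat.card ι) :
    ∃ v, v ∉ c := by
  induction c using Quotient.inductionOn' with
  | _ l =>
    by_contra! hall
    have := Nat.card_le_card_of_surjective l.get fun v => mem_iff_get.1 (hall v)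
    exact (this.trans_eq (Nat.card_fin _)).not_gt hc

/-- The length jumps from `1` to `3` because a one-vertex cycle is a loop and a strong total
relation may have no two vertices joined both ways. -/
theorem exists_longer_cycle (hstrong : ∀ x y, ReflTransGen R x y) {c : Cycle ι}
    (hnodup : c.Nodup) (hchain : c.Chain R) (hpos : 0 < c.length) (hlt : c.length < Nat.card ι) :
    ∃ c' : Cycle ι, c'.Nodup ∧ c'.Chain R ∧
      (c'.length = c.length + 1 ∨ c.length = 1 ∧ c'.length = 3) := by
  have hc : ∃ y, y ∈ c := exists_mem_of_cycle_length_pos hpos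
  have hc' : ∃ v, v ∉ c := exists_notMem_of_cycle_length_lt_card hlt
  by_cases! hboth : ∃ v ∉ c, (∃ y ∈ c, R y v) ∧ ∃ x ∈ c, R v x
  · obtain ⟨v, hv, ⟨y, hy, hyv⟩, x, hx, hvx⟩ := hboth
    obtain ⟨c', h₁, h₂, h₃⟩ := exists_cycle_insert hnodup hchain hv hy hyv hx hvx
    exact ⟨c', h₁, h₂, .inl h₃⟩
  obtain ⟨o, i, hoi, ho, hi⟩ :=
    exists_arc_of_forall_notMem_not_both (s := {z | z ∈ c}) hstrong hc hc' hboth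
  obtain ⟨y, hy⟩ := hc
  obtain ⟨l, rfl⟩ := exists_coe_cons_eq_of_mem hy
  have hto_o : ∀ x ∈ y :: l, R x o := fun x hx => (total_of R o x).resolve_left (ho x hx)
  have hfrom_i : ∀ x ∈ y :: l, R i x := fun x hx => (total_of R x i).resolve_left (hi x hx)
  have ho_notMem : o ∉ y :: l := fun h => ho o h (refl_of R o)
  have hi_notMem : i ∉ y :: l := fun h => hi i h (refl_of R i)
  have hoi_ne : o ≠ i := fun h => ho y mem_cons_self (h ▸ hfrom_i y mem_cons_self)
  have hnodup' : (o :: i :: y :: l).Nodup :=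
    nodup_cons.2 ⟨not_mem_cons_of_ne_of_not_mem hoi_ne ho_notMem, nodup_cons.2 ⟨hi_notMem, hnodup⟩⟩
  cases l with
  | nil =>
    refine ⟨([o, i, y] : List ι), hnodup', ?_, .inr ⟨rfl, rfl⟩⟩
    simp [hoi, hto_o, hfrom_i]
  | cons z l =>
    refine ⟨(o :: i :: z :: l : List ι), hnodup'.sublist (by simp), ?_, .inl rfl⟩
    rw [Cycle.chain_coe_cons] at hchain ⊢
    have hpath : IsChain R (z :: l) := ((isChain_cons_cons.1 hchain).2).left_of_append
    have hlast : ∀ x ∈ (z :: l).getLast?, R x o := fun x hx =>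
      hto_o x (mem_cons_of_mem _ (mem_of_mem_getLast? hx))
    exact ((hpath.append (.singleton o) (by simpa using hlast)).cons_cons
      (hfrom_i z (by simp))).cons_cons hoi

/-- Moon's theorem that a strong tournament has cycles of all lengths from `3` on. -/
theorem exists_cycle_length_eq (hstrong : ∀ x y, ReflTransGen R x y) {n : ℕ}
    (hn : 3 ≤ n) (hn' : n ≤ Nat.card ι) :
    ∃ c : Cycle ι, c.Nodup ∧ c.Chain R ∧ c.length = n := by
  induction n, hn using Nat.le_induction with
  | base =>
    obtain ⟨y⟩ : Nonempty ι := (Nat.card_pos_iff.1 (by omega)).1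
    have hloop : Cycle.Chain R ([y] : List ι) := (Cycle.chain_singleton R y).2 (refl_of R y)
    have hlen₁ : (([y] : List ι) : Cycle ι).length = 1 := Cycle.length_coe [y]
    obtain ⟨c, hnodup, hchain, hlen | ⟨-, hlen⟩⟩ :=
      exists_longer_cycle hstrong (Cycle.nodup_coe_iff.2 (nodup_singleton y)) hloop
        (by omega) (by omega)
    · obtain ⟨c', hnodup', hchain', hlen'⟩ :=
        exists_longer_cycle hstrong hnodup hchain (by omega) (by omega)
      exact ⟨c', hnodup', hchain', by omega⟩
    · exact ⟨c, hnodup, hchain, hlen⟩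
  | succ n hn ih =>
    obtain ⟨c, hnodup, hchain, rfl⟩ := ih (by omega)
    obtain ⟨c', hnodup', hchain', hlen⟩ :=
      exists_longer_cycle hstrong hnodup hchain (by omega) (by omega)
    exact ⟨c', hnodup', hchain', by omega⟩

end TotalRelation

section CycleFree

variable {V : Type*} {G : SimpleGraph V} {n : ℕ}

theorem CycleFree.length_ne_of_chain (hG : CycleFree G n) {c : Cycle V} (hc : c.Nodup)
    (hchain : c.Chain G.Adj) (hlen : 3 ≤ c.length) : c.length ≠ n := by
  induction c using Cycle.induction_on with
  | nil => simp at hlen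
  | cons v l _ =>
    rw [Cycle.chain_coe_cons, ← List.cons_append] at hchain
    rw [Cycle.length_coe] at hlen ⊢
    have hne : v :: l ≠ [] := List.cons_ne_nil v l
    have hadj : G.Adj ((v :: l).getLast hne) v :=
      (List.isChain_append.1 hchain).2.2 _ (List.getLast?_eq_some_getLast hne) v rfl
    set w := SimpleGraph.Walk.ofSupport (v :: l) hne hchain.left_of_append
    have hpath : w.IsPath := by
      rw [SimpleGraph.Walk.isPath_def, SimpleGraph.Walk.support_ofSupport]
      exact Cycle.nodup_coe_iff.1 hc
    have hlength : w.length + 1 = (v :: l).length := by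
      rw [SimpleGraph.Walk.length_ofSupport, Nat.sub_add_cancel (by simp)]
    have hcycle : (SimpleGraph.Walk.cons hadj w).IsCycle := by
      refine SimpleGraph.Walk.cons_isCycle_iff _ _ |>.2 ⟨hpath, fun hmem => ?_⟩
      have := hpath.length_eq_one_of_mem_edges (by rwa [Sym2.eq_swap])
      omega
    exact hlength ▸ hG _ _ hcycle

theorem CycleFree.mono {H : SimpleGraph V} (hG : CycleFree G n) (hle : H ≤ G) : CycleFree H n :=
  fun v c hc => by
    simpa using hG v (c.mapLe hle) (hc.mapLe hle)

theorem CycleFree.false_of_five_cycle (hG : CycleFree G 5) {a b c d e : V} (hab : G.Adj a b)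
    (hbc : G.Adj b c) (hcd : G.Adj c d) (hde : G.Adj d e) (hea : G.Adj e a) (hac : a ≠ c)
    (had : a ≠ d) (hbd : b ≠ d) (hbe : b ≠ e) (hce : c ≠ e) : False := by
  refine hG.length_ne_of_chain (c := ([a, b, c, d, e] : List V)) ?_ ?_ (by simp) (by simp)
  · simp [hab.ne, hac, had, hea.ne', hbc.ne, hbd, hbe, hcd.ne, hce, hde.ne]
  · simp [hab, hbc, hcd, hde, hea]

end CycleFree

section LinkedMatching

open List Relation

variable {V : Type*} {G : SimpleGraph V} {C : Set V}

/-- The oriented edge `p` is linked to the oriented edge `q` if the tail of `p` is adjacent to the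
head of `q`. An alternating cycle of `G` is a closed walk in this digraph on oriented edges. -/
def Link (G : SimpleGraph V) (p q : V × V) : Prop :=
  G.Adj p.1 q.2

/-- A strong clique all of whose edges leave `C`, with every edge oriented from `C` to its
complement. Taking `p = q` in `link` says that the members are edges of `G`. -/
structure IsLinkedFamily (G : SimpleGraph V) (C : Set V) (S : Set (V × V)) : Prop where
  fst_mem : ∀ p ∈ S, p.1 ∈ C
  snd_notMem : ∀ p ∈ S, p.2 ∉ C
  link : ∀ p ∈ S, ∀ q ∈ S, Link G p q ∨ Link G q p

/-- A linked family of pairwise disjoint edges. A directed cycle of links through such edges is a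
cycle of `G`, twice as long. -/
structure IsLinkedMatching (G : SimpleGraph V) (C : Set V) (M : Finset (V × V)) : Prop
    extends IsLinkedFamily G C ↑M where
  injOn_fst : Set.InjOn Prod.fst (M : Set (V × V))
  injOn_snd : Set.InjOn Prod.snd (M : Set (V × V))

/-- The digraph of links between the members of `M`, on the subtype so that the theorems on total
relations apply. -/
def LinkIn (G : SimpleGraph V) (M : Finset (V × V)) (p q : M) : Prop :=
  Link G p q

theorem isChain_link_replace_ends {x x' z z' : V × V} {m : List (V × V)} (hx : x'.1 = x.1)
    (hz : z'.2 = z.2) (h : IsChain (Link G) (x :: (m ++ [z]))) :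
    IsChain (Link G) (x' :: (m ++ [z'])) := by
  induction m generalizing x x' with
  | nil => simpa [Link, hx, hz] using h
  | cons y m ih =>
    rw [cons_append, isChain_cons_cons] at h ⊢
    exact ⟨by simpa only [Link, hx] using h.1, ih rfl h.2⟩

theorem isChain_adj_flatMap_of_isChain_link {l : List (V × V)} (hl : IsChain (Link G) l)
    (hadj : ∀ p ∈ l, G.Adj p.1 p.2) : IsChain G.Adj (l.flatMap fun p => [p.2, p.1]) := by
  induction l with
  | nil => simp
  | cons p l ih =>
    have hp : G.Adj p.2 p.1 := (hadj p mem_cons_self).symm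
    have ih := ih hl.tail fun q hq => hadj q (mem_cons_of_mem p hq)
    cases l with
    | nil => simpa using hp
    | cons q l => exact (ih.cons_cons (show G.Adj p.1 q.2 from hl.rel)).cons_cons hp

theorem CycleFree.false_of_link_cycle {k : ℕ} (hk : 2 ≤ k) (hG : CycleFree G (2 * k)) {p : V × V}
    {l : List (V × V)} (hchain : IsChain (Link G) (p :: (l ++ [p])))
    (hC : ∀ q ∈ p :: l, q.1 ∈ C ∧ q.2 ∉ C ∧ G.Adj q.1 q.2)
    (hfst : ((p :: l).map Prod.fst).Nodup) (hsnd : ((p :: l).map Prod.snd).Nodup)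
    (hlen : (p :: l).length = k) : False := by
  set c := (p :: l).flatMap fun q => [q.2, q.1] with hc
  have hperm : (p :: l).map Prod.snd ++ (p :: l).map Prod.fst ~ c := by
    rw [map_eq_flatMap, map_eq_flatMap]
    exact flatMap_append_perm (p :: l) (fun q => [q.2]) (fun q => [q.1])
  have hnodup : c.Nodup := by
    rw [← hperm.nodup_iff, nodup_append]
    refine ⟨hsnd, hfst, fun v hv w hw hvw => ?_⟩
    obtain ⟨q, hq, rfl⟩ := mem_map.1 hv
    obtain ⟨r, hr, rfl⟩ := mem_map.1 hw
    exact (hC q hq).2.1 (hvw ▸ (hC r hr).1)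
  have hclen : c.length = 2 * k := by
    rw [← hperm.length_eq, length_append, length_map, length_map, hlen, two_mul]
  have hcchain : Cycle.Chain G.Adj c := by
    have h := isChain_adj_flatMap_of_isChain_link (l := p :: (l ++ [p])) hchain
      fun q hq => (hC q (by simpa [or_comm] using hq)).2.2
    have hsplit : (p :: (l ++ [p])).flatMap (fun q => [q.2, q.1]) =
        p.2 :: (p.1 :: (l.flatMap fun q => [q.2, q.1]) ++ [p.2]) ++ [p.1] := by simp
    rw [hsplit] at h
    rw [hc, flatMap_cons, cons_append, Cycle.chain_coe_cons]
    exact h.left_of_append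
  exact hG.length_ne_of_chain (Cycle.nodup_coe_iff.2 hnodup) hcchain
    (by rw [Cycle.length_coe]; omega) hclen

theorem IsLinkedFamily.mono {S T : Set (V × V)} (hS : IsLinkedFamily G C S) (hTS : T ⊆ S) :
    IsLinkedFamily G C T :=
  ⟨fun p hp => hS.fst_mem p (hTS hp), fun p hp => hS.snd_notMem p (hTS hp),
    fun p hp q hq => hS.link p (hTS hp) q (hTS hq)⟩

theorem IsLinkedFamily.crosses {S : Set (V × V)} (hS : IsLinkedFamily G C S) {p : V × V}
    (hp : p ∈ S) : p.1 ∈ C ∧ p.2 ∉ C ∧ G.Adj p.1 p.2 :=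
  ⟨hS.fst_mem p hp, hS.snd_notMem p hp, or_self_iff.1 (hS.link p hp p hp)⟩

theorem forall_crosses_map_val {S : Finset (V × V)} (hS : IsLinkedFamily G C S) (l : List S) :
    ∀ q ∈ l.map Subtype.val, q.1 ∈ C ∧ q.2 ∉ C ∧ G.Adj q.1 q.2 := by
  intro q hq
  obtain ⟨p, -, rfl⟩ := mem_map.1 hq
  exact hS.crosses p.2

namespace IsLinkedMatching

variable {M : Finset (V × V)} {k : ℕ}

theorem total_linkIn (hM : IsLinkedMatching G C M) : Std.Total (LinkIn G M) :=
  ⟨fun p q => hM.link p p.2 q q.2⟩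

theorem nodup_map_fst (hM : IsLinkedMatching G C M) {l : List M} (hl : l.Nodup) :
    ((l.map Subtype.val).map Prod.fst).Nodup := by
  rw [List.map_map]
  exact hl.map hM.injOn_fst.injective

theorem nodup_map_snd (hM : IsLinkedMatching G C M) {l : List M} (hl : l.Nodup) :
    ((l.map Subtype.val).map Prod.snd).Nodup := by
  rw [List.map_map]
  exact hl.map hM.injOn_snd.injective

theorem notMem_map_fst {u : V} (hu : ∀ p ∈ M, p.1 ≠ u) (l : List M) :
    u ∉ (l.map Subtype.val).map Prod.fst := by
  rw [List.map_map, mem_map]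
  rintro ⟨p, -, hp⟩
  exact hu p p.2 hp

theorem notMem_map_snd {u : V} (hu : ∀ p ∈ M, p.2 ≠ u) (l : List M) :
    u ∉ (l.map Subtype.val).map Prod.snd := by
  rw [List.map_map, mem_map]
  rintro ⟨p, -, hp⟩
  exact hu p p.2 hp

theorem isChain_link_map {l : List M} (hl : IsChain (LinkIn G M) l) :
    IsChain (Link G) (l.map Subtype.val) :=
  (isChain_map _).2 hl

theorem exists_not_reflTransGen (hM : IsLinkedMatching G C M) (hk : 3 ≤ k)
    (hG : CycleFree G (2 * k)) (hcard : k ≤ M.card) :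
    ∃ p q, ¬ ReflTransGen (LinkIn G M) p q := by
  by_contra! hstrong
  have := hM.total_linkIn
  obtain ⟨c, hnodup, hchain, hlen⟩ :=
    exists_cycle_length_eq hstrong hk (by rwa [Nat.card_eq_finsetCard])
  induction c using Cycle.induction_on with
  | nil => simp at hlen; omega
  | cons p l _ =>
    rw [Cycle.chain_coe_cons] at hchain
    rw [Cycle.nodup_coe_iff] at hnodup
    refine hG.false_of_link_cycle (C := C) (by omega) (p := p) (l := l.map Subtype.val) ?_
      (forall_crosses_map_val hM.toIsLinkedFamily (p :: l)) (hM.nodup_map_fst hnodup)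
      (hM.nodup_map_snd hnodup) (by simpa using hlen)
    simpa using isChain_link_map hchain

theorem not_link_of_spanning (hM : IsLinkedMatching G C M) (hk : 3 ≤ k)
    (hG : CycleFree G (2 * k)) (hcard : k ≤ M.card) {x z : M} {m : List M}
    (hchain : IsChain (LinkIn G M) (x :: (m ++ [z]))) (hmem : ∀ p, p ∈ x :: (m ++ [z])) :
    ¬ Link G z x := by
  intro hzx
  obtain ⟨p, q, hpq⟩ := hM.exists_not_reflTransGen hk hG hcard
  have hpz : ReflTransGen (LinkIn G M) p z :=
    reflTransGen_of_isChain_concat (l := x :: m) hchain (hmem p)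
  have hxq : ReflTransGen (LinkIn G M) x q := reflTransGen_of_isChain_cons hchain (hmem q)
  exact hpq ((hpz.tail hzx).trans hxq)

theorem card_ne_succ (hM : IsLinkedMatching G C M) (hk : 3 ≤ k) (hG : CycleFree G (2 * k)) :
    M.card ≠ k + 1 := by
  intro hcard
  have := hM.total_linkIn
  obtain ⟨l, hnodup, hchain, hmem⟩ :=
    exists_nodup_isChain_mem_iff (R := LinkIn G M) Finset.univ
  replace hmem : ∀ p, p ∈ l := fun p => (hmem p).2 (Finset.mem_univ p)
  have hlen := length_eq_card_of_nodup_of_forall_mem hnodup hmem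
  rw [Nat.card_eq_finsetCard, hcard] at hlen
  obtain ⟨x, m, z, rfl⟩ := exists_eq_cons_concat_of_two_le_length (l := l) (by omega)
  have hxz : Link G x z := (hM.link x x.2 z z.2).resolve_right
    (hM.not_link_of_spanning hk hG (by omega) hchain hmem)
  refine hG.false_of_link_cycle (C := C) (by omega) (p := (x.1.1, z.1.2))
    (l := m.map Subtype.val) ?_ ?_ ?_ ?_ (by simpa using hlen)
  · exact isChain_link_replace_ends (x := x) (z := z) rfl rfl
      (by simpa using isChain_link_map hchain)
  · exact forall_mem_cons.2 ⟨⟨hM.fst_mem x x.2, hM.snd_notMem z z.2, hxz⟩,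
      forall_crosses_map_val hM.toIsLinkedFamily m⟩
  · exact hM.nodup_map_fst (l := x :: m) (hnodup.sublist (by simp))
  · exact hM.nodup_map_snd (l := z :: m)
      ((perm_append_singleton z m).nodup_iff.1 hnodup.of_cons)

theorem exists_fst_eq_or_exists_snd_eq {S : Set (V × V)} (hS : IsLinkedFamily G C S)
    (hM : IsLinkedMatching G C M) (hMS : (M : Set (V × V)) ⊆ S) (hk : 3 ≤ k)
    (hG : CycleFree G (2 * k)) (hcard : M.card = k) {s : V × V} (hs : s ∈ S) :
    (∃ p ∈ M, p.1 = s.1) ∨ ∃ p ∈ M, p.2 = s.2 := by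
  classical
  by_contra! hnew
  have hsM : s ∉ (M : Set (V × V)) := fun h => hnew.1 s h rfl
  have hinsert : IsLinkedMatching G C (insert s M) :=
    { toIsLinkedFamily := hS.mono (by simpa [Set.insert_subset_iff] using ⟨hs, hMS⟩)
      injOn_fst := by
        rw [Finset.coe_insert, Set.injOn_insert hsM]
        exact ⟨hM.injOn_fst, by rintro ⟨p, hp, h⟩; exact hnew.1 p hp h⟩
      injOn_snd := by
        rw [Finset.coe_insert, Set.injOn_insert hsM]
        exact ⟨hM.injOn_snd, by rintro ⟨p, hp, h⟩; exact hnew.2 p hp h⟩ }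
  exact hinsert.card_ne_succ hk hG (by rw [Finset.card_insert_of_notMem hsM, hcard])

variable {S : Set (V × V)}

theorem not_forall_reflTransGen_right (hS : IsLinkedFamily G C S) (hM : IsLinkedMatching G C M)
    (hMS : (M : Set (V × V)) ⊆ S) (hk : 3 ≤ k) (hG : CycleFree G (2 * k)) (hcard : M.card = k)
    {j : M} {u : V} (hu : (j.1.1, u) ∈ S) (hu_new : ∀ p ∈ M, p.2 ≠ u) :
    ¬ ∀ x, ReflTransGen (LinkIn G M) x j := by
  intro hj
  have := hM.total_linkIn
  obtain ⟨l, hnodup, hchain, hmem⟩ := exists_spanning_isChain_concat hj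
  have hlen := length_eq_card_of_nodup_of_forall_mem hnodup hmem
  rw [Nat.card_eq_finsetCard, hcard, length_append, length_singleton] at hlen
  obtain ⟨x, m, rfl⟩ := exists_cons_of_length_pos (by omega : 0 < l.length)
  have hxu : G.Adj x.1.1 u := (hS.link x (hMS x.2) (j.1.1, u) hu).resolve_right
    (hM.not_link_of_spanning hk hG hcard.ge hchain hmem)
  refine hG.false_of_link_cycle (C := C) (by omega) (p := (x.1.1, u))
    (l := (m ++ [j]).map Subtype.val) ?_ ?_ (hM.nodup_map_fst hnodup) ?_ (by simpa using hlen)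
  · refine isChain_link_replace_ends (x := x) (z := (x.1.1, u)) rfl rfl ?_
    have hju : Link G j (x.1.1, u) := (hS.crosses hu).2.2
    simpa using (isChain_split (l₁ := x.1 :: m.map Subtype.val)).2
      ⟨by simpa using isChain_link_map hchain, isChain_pair.2 hju⟩
  · exact forall_mem_cons.2 ⟨⟨hM.fst_mem x x.2, (hS.crosses hu).2.1, hxu⟩,
      forall_crosses_map_val hM.toIsLinkedFamily _⟩
  · exact nodup_cons.2 ⟨notMem_map_snd hu_new _, hM.nodup_map_snd hnodup.of_cons⟩

theorem not_forall_reflTransGen_left (hS : IsLinkedFamily G C S) (hM : IsLinkedMatching G C M)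
    (hMS : (M : Set (V × V)) ⊆ S) (hk : 3 ≤ k) (hG : CycleFree G (2 * k)) (hcard : M.card = k)
    {i : M} {u : V} (hu : (u, i.1.2) ∈ S) (hu_new : ∀ p ∈ M, p.1 ≠ u) :
    ¬ ∀ x, ReflTransGen (LinkIn G M) i x := by
  intro hi
  have := hM.total_linkIn
  obtain ⟨l, hnodup, hchain, hmem⟩ := exists_spanning_isChain_cons hi
  have hlen := length_eq_card_of_nodup_of_forall_mem hnodup hmem
  rw [Nat.card_eq_finsetCard, hcard] at hlen
  obtain ⟨x, m, z, hl⟩ := exists_eq_cons_concat_of_two_le_length (l := i :: l) (by omega)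
  obtain ⟨rfl, rfl⟩ := cons_eq_cons.1 hl
  have huz : G.Adj u z.1.2 := (hS.link z (hMS z.2) (u, i.1.2) hu).resolve_left
    (hM.not_link_of_spanning hk hG hcard.ge hchain hmem)
  have hperm : z :: (i :: m) ~ i :: (m ++ [z]) :=
    (perm_append_singleton z (i :: m)).symm
  refine hG.false_of_link_cycle (C := C) (by omega) (p := (u, z.1.2))
    (l := (i :: m).map Subtype.val) ?_ ?_ ?_ (hM.nodup_map_snd (hperm.nodup_iff.2 hnodup))
    (by simpa using hlen)
  · have hui : Link G (u, z.1.2) i := (hS.crosses hu).2.2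
    exact .cons_cons hui (isChain_link_replace_ends (x := i) (z := z) rfl rfl
      (by simpa using isChain_link_map hchain))
  · exact forall_mem_cons.2 ⟨⟨(hS.crosses hu).1, hM.snd_notMem z z.2, huz⟩,
      forall_crosses_map_val hM.toIsLinkedFamily _⟩
  · exact nodup_cons.2 ⟨notMem_map_fst hu_new _,
      hM.nodup_map_fst (hnodup.sublist (by simp))⟩

/-- The alternating cycle runs along `l` from `i` to `j`, through `u` into `m`, and back through
`u'`; it trades the head of `x` and the tail of `z` for `u` and `u'`. -/
theorem false_of_path_union_path (hS : IsLinkedFamily G C S) (hM : IsLinkedMatching G C M)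
    (hk : 2 ≤ k) (hG : CycleFree G (2 * k)) (hcard : M.card = k) {i j x z : M} {l m : List M}
    {u u' : V} (hhead : (l ++ [j]).head? = some i) (hchain : IsChain (LinkIn G M) (l ++ [j]))
    (hchain' : IsChain (LinkIn G M) (x :: (m ++ [z])))
    (hnodup : (l ++ [j] ++ x :: (m ++ [z])).Nodup) (hmem : ∀ p, p ∈ l ++ [j] ++ x :: (m ++ [z]))
    (hu : (j.1.1, u) ∈ S) (hu_new : ∀ p ∈ M, p.2 ≠ u) (hu' : (u', i.1.2) ∈ S)
    (hu'_new : ∀ p ∈ M, p.1 ≠ u') (hxu : G.Adj x.1.1 u) (hu'z : G.Adj u' z.1.2) : False := by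
  have hlen := length_eq_card_of_nodup_of_forall_mem hnodup hmem
  rw [Nat.card_eq_finsetCard, hcard] at hlen
  set w : V × V := (x.1.1, u)
  set w' : V × V := (u', z.1.2)
  have hjw : Link G j w := (hS.crosses hu).2.2
  have hwi : Link G w' i := (hS.crosses hu').2.2
  refine hG.false_of_link_cycle (C := C) hk (p := w')
    (l := (l ++ [j]).map Subtype.val ++ w :: m.map Subtype.val) ?_ ?_ ?_ ?_ ?_
  · have hwm : IsChain (Link G) (w :: (m.map Subtype.val ++ [w'])) :=
      isChain_link_replace_ends (x := x) (z := z) rfl rfl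
        (by simpa using isChain_link_map hchain')
    have hij : IsChain (Link G) (w' :: (l ++ [j]).map Subtype.val) :=
      isChain_cons.2 ⟨by rw [head?_map, hhead]; simpa using hwi,
        isChain_link_map hchain⟩
    simpa using (isChain_split (l₁ := w' :: l.map Subtype.val)).2
      ⟨by simpa using hij, hwm.cons_cons hjw⟩
  · refine forall_mem_cons.2 ⟨⟨(hS.crosses hu').1, hM.snd_notMem z z.2, hu'z⟩, ?_⟩
    refine forall_mem_append.2 ⟨forall_crosses_map_val hM.toIsLinkedFamily _, ?_⟩
    exact forall_mem_cons.2 ⟨⟨hM.fst_mem x x.2, (hS.crosses hu).2.1, hxu⟩,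
      forall_crosses_map_val hM.toIsLinkedFamily m⟩
  · have hfst := hM.nodup_map_fst (l := l ++ [j] ++ x :: m) (hnodup.sublist (by simp))
    have hnew := notMem_map_fst hu'_new (l ++ [j] ++ x :: m)
    simp only [map_append, map_cons, map_nil] at hfst hnew ⊢
    exact nodup_cons.2 ⟨hnew, hfst⟩
  · have hperm : z :: (l ++ [j] ++ m) ~ l ++ [j] ++ (m ++ [z]) := by
      rw [← append_assoc]
      exact (perm_append_singleton ..).symm
    have hsnd := hM.nodup_map_snd (hperm.nodup_iff.2 (hnodup.sublist (by simp)))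
    have hnew := notMem_map_snd hu_new (z :: (l ++ [j] ++ m))
    have hmiddle : w' :: ((l ++ [j]).map Subtype.val ++ w :: m.map Subtype.val) ~
        w :: w' :: (l ++ [j] ++ m).map Subtype.val := by
      rw [map_append (l₂ := m)]
      exact perm_middle (l₁ := w' :: (l ++ [j]).map Subtype.val)
    exact (hmiddle.map Prod.snd).nodup_iff.2 (nodup_cons.2 ⟨hnew, hsnd⟩)
  · simp only [length_cons, length_append, length_map] at hlen ⊢
    omega

theorem not_reflTransGen (hS : IsLinkedFamily G C S) (hM : IsLinkedMatching G C M)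
    (hMS : (M : Set (V × V)) ⊆ S) (hk : 3 ≤ k) (hG : CycleFree G (2 * k)) (hcard : M.card = k)
    {i j : M} {u u' : V} (hu : (j.1.1, u) ∈ S) (hu_new : ∀ p ∈ M, p.2 ≠ u)
    (hu' : (u', i.1.2) ∈ S) (hu'_new : ∀ p ∈ M, p.1 ≠ u') :
    ¬ ReflTransGen (LinkIn G M) i j := by
  classical
  intro hij
  have := hM.total_linkIn
  obtain ⟨q, hq⟩ :=
    not_forall.1 (not_forall_reflTransGen_right hS hM hMS hk hG hcard hu hu_new)
  obtain ⟨p, hp⟩ :=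
    not_forall.1 (not_forall_reflTransGen_left hS hM hMS hk hG hcard hu' hu'_new)
  obtain ⟨l, hhead, hnodup, hchain⟩ := exists_nodup_isChain_of_reflTransGen hij
  obtain ⟨t, htnodup, htchain, htmem⟩ :=
    exists_nodup_isChain_mem_iff (R := LinkIn G M) (Finset.univ \ (l ++ [j]).toFinset)
  replace htmem : ∀ r, r ∈ t ↔ r ∉ l ++ [j] := fun r => by
    rw [htmem, Finset.mem_sdiff, mem_toFinset, and_iff_right (Finset.mem_univ r)]
  have hpt : p ∈ t := (htmem p).2 fun h => by
    obtain ⟨l', hl'⟩ := head?_eq_some_iff.1 hhead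
    rw [hl'] at h hchain
    exact hp (reflTransGen_of_isChain_cons hchain h)
  have hqt : q ∈ t := (htmem q).2 fun h => hq (reflTransGen_of_isChain_concat hchain h)
  have hpq : p ≠ q := by
    rintro rfl
    rcases total_of (LinkIn G M) p j with hpj | hjp
    exacts [hq (.single hpj), hp (hij.tail hjp)]
  have htlen : 2 ≤ t.length :=
    (subperm_of_subset (l₁ := [p, q]) (by simpa) (by simp [hpt, hqt])).length_le
  obtain ⟨x, m, z, rfl⟩ := exists_eq_cons_concat_of_two_le_length htlen
  have hjx : ¬ Link G j x := fun h =>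
    hp ((hij.tail h).trans (reflTransGen_of_isChain_cons htchain hpt))
  have hzi : ¬ Link G z i := fun h =>
    hq (((reflTransGen_of_isChain_concat (l := x :: m) htchain hqt).tail h).trans hij)
  refine hM.false_of_path_union_path hS (by omega) hG hcard hhead hchain htchain ?_ ?_
    hu hu_new hu' hu'_new ((hS.link x (hMS x.2) _ hu).resolve_right hjx)
    ((hS.link z (hMS z.2) _ hu').resolve_left hzi)
  · exact hnodup.append htnodup fun r hr hr' => (htmem r).1 hr' hr
  · exact fun r => mem_append.2 (or_iff_not_imp_left.2 (htmem r).2)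

theorem exists_separating_set (hS : IsLinkedFamily G C S) (hM : IsLinkedMatching G C M)
    (hMS : (M : Set (V × V)) ⊆ S) (hk : 3 ≤ k) (hG : CycleFree G (2 * k)) (hcard : M.card = k) :
    ∃ P : Set M, P.Nonempty ∧ Pᶜ.Nonempty ∧ (∀ p ∈ P, ∀ q ∉ P, ¬ Link G q p) ∧
      (∀ j : M, ∀ u, (j.1.1, u) ∈ S → (∀ p ∈ M, p.2 ≠ u) → j ∈ P) ∧
      ∀ i : M, ∀ u, (u, i.1.2) ∈ S → (∀ p ∈ M, p.1 ≠ u) → i ∉ P := by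
  have : Std.Total (ReflTransGen (LinkIn G M)) :=
    ⟨fun p q => (hM.total_linkIn.total p q).imp .single .single⟩
  obtain ⟨P, hP, hP', hclosed, hJ, hI⟩ := exists_closed_set_between
    (R := ReflTransGen (LinkIn G M))
    (J := {j | ∃ u, (j.1.1, u) ∈ S ∧ ∀ p ∈ M, p.2 ≠ u})
    (I := {i | ∃ u, (u, i.1.2) ∈ S ∧ ∀ p ∈ M, p.1 ≠ u})
    (fun j ⟨u, hu, hu_new⟩ => not_forall_reflTransGen_right hS hM hMS hk hG hcard hu hu_new)
    (fun i ⟨u, hu, hu_new⟩ => not_forall_reflTransGen_left hS hM hMS hk hG hcard hu hu_new)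
    (fun i ⟨u', hu', hu'_new⟩ j ⟨u, hu, hu_new⟩ =>
      hM.not_reflTransGen hS hMS hk hG hcard hu hu_new hu' hu'_new)
    (hM.exists_not_reflTransGen hk hG hcard.ge)
  exact ⟨P, hP, hP', fun p hp q hq hqp => hq (hclosed q p (.single hqp) hp),
    fun j u hu hu_new => hJ ⟨u, hu, hu_new⟩, fun i u hu hu_new => hI i ⟨u, hu, hu_new⟩⟩

end IsLinkedMatching
end LinkedMatching

section Konig

open Finset

theorem exists_injective_of_card_le_card_biUnion_add {ι α : Type*} [Fintype ι] [DecidableEq α]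
    {t : ι → Finset α} {d : ℕ} (ht : ∀ s : Finset ι, #s ≤ #(s.biUnion t) + d) :
    ∃ (T : Finset α) (g : T → ι), g.Injective ∧ (∀ a, ↑a ∈ t (g a)) ∧ Fintype.card ι ≤ #T + d := by
  classical
  obtain ⟨f, hf, hft⟩ : ∃ f : ι → α ⊕ Fin d, f.Injective ∧ ∀ x, f x ∈ (t x).disjSum univ := by
    refine (all_card_le_biUnion_card_iff_exists_injective _).1 fun s => ?_
    obtain rfl | ⟨x, hx⟩ := s.eq_empty_or_nonempty
    · simp
    · have hsub : (s.biUnion t).disjSum (univ : Finset (Fin d)) ⊆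
          s.biUnion fun x => (t x).disjSum univ := by
        rintro (a | i) h
        · simpa using h
        · exact mem_biUnion.2 ⟨x, hx, by simp⟩
      simpa using (ht s).trans (by simpa using card_le_card hsub)
  have hpre : ∀ a : (univ.image f).toLeft, ∃ x, f x = .inl a.1 := fun a => by
    simpa using mem_toLeft.1 a.2
  choose g hg using hpre
  refine ⟨(univ.image f).toLeft, g, fun a b hab => ?_, fun a => ?_, ?_⟩
  · exact Subtype.ext (Sum.inl_injective ((hg a).symm.trans ((congrArg f hab).trans (hg b))))
  · simpa [hg a] using hft (g a)
  · rw [← card_univ, ← card_image_of_injective univ hf, ← card_toLeft_add_card_toRight]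
    exact Nat.add_le_add_left (by simpa using card_le_univ (univ.image f).toRight) _

/-- König's theorem. -/
theorem exists_matching_of_forall_le_card_cover {α β : Type*} {S : Finset (α × β)} {k : ℕ}
    (hS : ∀ (A : Finset α) (B : Finset β), (∀ p ∈ S, p.1 ∈ A ∨ p.2 ∈ B) → k ≤ #A + #B) :
    ∃ M ⊆ S, #M = k ∧ Set.InjOn Prod.fst (M : Set (α × β)) ∧
      Set.InjOn Prod.snd (M : Set (α × β)) := by
  classical
  let L := S.image Prod.fst
  let t (x : L) : Finset β := (S.filter (·.1 = x.1)).image Prod.snd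
  have hmem (x : L) (y : β) : y ∈ t x ↔ (x.1, y) ∈ S := by simp [t]
  have hk : k ≤ #L := by
    simpa using hS L ∅ fun p hp => .inl (mem_image_of_mem _ hp)
  have hcover (s : Finset L) : k ≤ #(L \ s.map (.subtype _)) + #(s.biUnion t) := by
    refine hS _ _ fun p hp => ?_
    by_cases hps : p.1 ∈ s.map (.subtype _)
    · obtain ⟨x, hx, hxp : x.1 = p.1⟩ := mem_map.1 hps
      exact .inr (mem_biUnion.2 ⟨x, hx, (hmem x p.2).2 (by rwa [hxp])⟩)
    · exact .inl (mem_sdiff.2 ⟨mem_image_of_mem _ hp, hps⟩)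
  have hall (s : Finset L) : #s ≤ #(s.biUnion t) + (#L - k) := by
    have hsub : s.map (.subtype _) ⊆ L := fun x hx => property_of_mem_map_subtype s hx
    have := hcover s
    have := card_le_card hsub
    rw [card_sdiff_of_subset hsub, card_map] at *
    omega
  obtain ⟨T, g, hg, hgt, hT⟩ := exists_injective_of_card_le_card_biUnion_add hall
  let e : T ↪ α × β := ⟨fun a => ((g a).1, a.1), fun a b h => Subtype.ext (congrArg Prod.snd h)⟩
  obtain ⟨T', -, hT'⟩ := exists_subset_card_eq (s := (univ : Finset T)) (n := k)
    (by simp only [Fintype.card_coe, univ_eq_attach, card_attach] at hT ⊢; omega)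
  refine ⟨T'.map e, fun p hp => ?_, by rw [card_map, hT'], ?_, ?_⟩
  · obtain ⟨a, -, rfl⟩ := mem_map.1 hp
    exact (hmem (g a) a.1).1 (hgt a)
  all_goals
    rw [coe_map]
    rintro - ⟨a, -, rfl⟩ - ⟨b, -, rfl⟩ hab
  · exact congrArg e (hg (Subtype.ext hab))
  · exact congrArg e (Subtype.ext hab)

end Konig

section DegreeCount

open Finset

variable {V : Type*} {G : SimpleGraph V} {C : Set V}

theorem IsLinkedMatching.exists_complete_cover {S M : Finset (V × V)} {k : ℕ}
    (hM : IsLinkedMatching G C M) (hS : IsLinkedFamily G C S) (hMS : M ⊆ S) (hk : 3 ≤ k)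
    (hG : CycleFree G (2 * k)) (hcard : #M = k) :
    ∃ A B : Finset V, #A + #B = k ∧ A.Nonempty ∧ B.Nonempty ∧
      (∀ p ∈ S, p.1 ∈ A ∨ p.2 ∈ B) ∧ ∀ x ∈ A, ∀ y ∈ B, G.Adj x y := by
  classical
  have hMS' : (M : Set (V × V)) ⊆ S := coe_subset.2 hMS
  obtain ⟨P, ⟨a, ha⟩, ⟨b, hb⟩, hP, hnew_snd, hnew_fst⟩ :=
    hM.exists_separating_set hS hMS' hk hG hcard
  let A := (univ.filter (· ∈ P)).image fun p : M => p.1.1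
  let B := (univ.filter (· ∉ P)).image fun p : M => p.1.2
  have hA {p : M} (hp : p ∈ P) : p.1.1 ∈ A := mem_image_of_mem _ (by simpa using hp)
  have hB {q : M} (hq : q ∉ P) : q.1.2 ∈ B := mem_image_of_mem _ (by simpa using hq)
  have hAcard : #A = #(univ.filter (· ∈ P)) :=
    card_image_of_injective _ fun p q h => Subtype.ext (hM.injOn_fst p.2 q.2 h)
  have hBcard : #B = #(univ.filter (· ∉ P)) :=
    card_image_of_injective _ fun p q h => Subtype.ext (hM.injOn_snd p.2 q.2 h)
  refine ⟨A, B, ?_, ⟨_, hA ha⟩, ⟨_, hB hb⟩, fun s hs => ?_, fun x hx y hy => ?_⟩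
  · rw [hAcard, hBcard, card_filter_add_card_filter_not, card_univ, Fintype.card_coe, hcard]
  · by_cases hfst : ∃ p ∈ M, p.1 = s.1
    · obtain ⟨p, hp, hps⟩ := hfst
      by_cases hpP : ⟨p, hp⟩ ∈ P
      · exact .inl (hps ▸ hA hpP)
      · obtain ⟨q, hq, hqs⟩ : ∃ q ∈ M, q.2 = s.2 := by
          by_contra! hsnd
          exact hpP (hnew_snd ⟨p, hp⟩ s.2 (by rwa [hps]) hsnd)
        have hpq : Link G p q := by
          rw [Link, hps, hqs]
          exact (hS.crosses hs).2.2
        exact .inr (hqs ▸ hB fun hqP => hP ⟨q, hq⟩ hqP ⟨p, hp⟩ hpP hpq)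
    · obtain ⟨q, hq, hqs⟩ :=
        (hM.exists_fst_eq_or_exists_snd_eq hS hMS' hk hG hcard hs).resolve_left hfst
      have hs_new : ∀ p ∈ M, p.1 ≠ s.1 := by simpa only [not_exists, not_and] using hfst
      exact .inr (hqs ▸ hB (hnew_fst ⟨q, hq⟩ s.1 (by rwa [hqs]) hs_new))
  · obtain ⟨p, hp, rfl⟩ := mem_image.1 hx
    obtain ⟨q, hq, rfl⟩ := mem_image.1 hy
    exact (hM.link p.1 p.2 q.1 q.2).resolve_right
      (hP p (mem_filter.1 hp).2 q (mem_filter.1 hq).2)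

theorem card_le_of_cover [DecidableEq V] {S : Finset (V × V)} {A B : Finset V} {d e : ℕ}
    (hcov : ∀ p ∈ S, p.1 ∈ A ∨ p.2 ∈ B) (hA : ∀ x ∈ A, #{p ∈ S | p.1 = x} ≤ d)
    (hB : ∀ y ∈ B, #{p ∈ S | p.1 ∉ A ∧ p.2 = y} ≤ e) : #S ≤ #A * d + #B * e := by
  rw [← card_filter_add_card_filter_not (s := S) (·.1 ∈ A), mul_comm #A, mul_comm #B]
  refine add_le_add (card_le_mul_card_image_of_maps_to (f := Prod.fst) (by simp) d fun x hx => ?_)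
    (card_le_mul_card_image_of_maps_to (f := Prod.snd) ?_ e fun y hy => ?_)
  · exact (card_le_card (filter_subset_filter _ (filter_subset _ _))).trans (hA x hx)
  · simpa using fun a b hab ha => (hcov (a, b) hab).resolve_left ha
  · simpa only [filter_filter] using hB y hy

variable [G.LocallyFinite] {D : ℕ}

theorem card_filter_fst_eq_le_degree [DecidableEq V] {S : Finset (V × V)}
    (hadj : ∀ p ∈ S, G.Adj p.1 p.2) (x : V) : #{p ∈ S | p.1 = x} ≤ G.degree x := by
  rw [← G.card_neighborFinset_eq_degree]
  refine card_le_card_of_injOn Prod.snd (fun p hp => ?_) fun p hp q hq h => ?_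
  · obtain ⟨hpS, rfl⟩ := mem_filter.1 (mem_coe.1 hp)
    simpa using hadj p hpS
  · exact Prod.ext ((mem_filter.1 hp).2.trans (mem_filter.1 hq).2.symm) h

theorem card_filter_snd_eq_le_card_sdiff [DecidableEq V] {S : Finset (V × V)}
    (hadj : ∀ p ∈ S, G.Adj p.1 p.2) (A : Finset V) (y : V) :
    #{p ∈ S | p.1 ∉ A ∧ p.2 = y} ≤ #(G.neighborFinset y \ A) := by
  refine card_le_card_of_injOn Prod.fst (fun p hp => ?_) fun p hp q hq h => ?_
  · obtain ⟨hpS, hpA, rfl⟩ := mem_filter.1 (mem_coe.1 hp)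
    simpa using ⟨(hadj p hpS).symm, hpA⟩
  · exact Prod.ext h ((mem_filter.1 hp).2.2.trans (mem_filter.1 hq).2.2.symm)

theorem card_le_mul_of_cover {S : Finset (V × V)} {A B : Finset V}
    (hdeg : ∀ v, G.degree v ≤ D) (hadj : ∀ p ∈ S, G.Adj p.1 p.2)
    (hcov : ∀ p ∈ S, p.1 ∈ A ∨ p.2 ∈ B) : #S ≤ (#A + #B) * D := by
  classical
  rw [add_mul]
  refine card_le_of_cover hcov (fun x _ => (card_filter_fst_eq_le_degree hadj x).trans (hdeg x))
    fun y _ => ?_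
  exact (card_filter_snd_eq_le_card_sdiff hadj A y).trans
    ((card_le_card sdiff_subset).trans (hdeg y))

theorem card_add_mul_le_of_complete_cover [DecidableEq V] {S : Finset (V × V)} {A B : Finset V}
    {d : ℕ} (hdeg : ∀ v, G.degree v ≤ D) (hadj : ∀ p ∈ S, G.Adj p.1 p.2)
    (hcov : ∀ p ∈ S, p.1 ∈ A ∨ p.2 ∈ B) (hAB : ∀ x ∈ A, ∀ y ∈ B, G.Adj x y)
    (hA : ∀ x ∈ A, #{p ∈ S | p.1 = x} ≤ d) : #S + #A * #B ≤ #A * d + #B * D := by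
  have hsub : ∀ y ∈ B, A ⊆ G.neighborFinset y := fun y hy x hx => by
    simpa using (hAB x hx y hy).symm
  have hcard : #S ≤ #A * d + #B * (D - #A) := by
    refine card_le_of_cover hcov hA fun y hy => ?_
    refine (card_filter_snd_eq_le_card_sdiff hadj A y).trans ?_
    rw [card_sdiff_of_subset (hsub y hy)]
    exact Nat.sub_le_sub_right (hdeg y) _
  obtain rfl | ⟨y, hy⟩ := B.eq_empty_or_nonempty
  · simpa using hcard
  · have hAD : #A ≤ D := (card_le_card (hsub y hy)).trans (hdeg y)
    calc #S + #A * #B ≤ #A * d + #B * (D - #A) + #A * #B := Nat.add_le_add_right hcard _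
      _ = #A * d + #B * (D - #A + #A) := by ring
      _ = #A * d + #B * D := by rw [Nat.sub_add_cancel hAD]

theorem card_le_degree_mul_of_link [DecidableEq V] {S : Finset (V × V)} {v : V}
    (hdeg : ∀ v, G.degree v ≤ D) (hlink : ∀ p ∈ S, ∀ q ∈ S, Link G p q ∨ Link G q p)
    (hmax : ∀ p ∈ S, #{q ∈ S | q.1 = p.1} ≤ #{q ∈ S | q.1 = v}) : #S ≤ G.degree v * D := by
  classical
  have hadj : ∀ p ∈ S, G.Adj p.1 p.2 := fun p hp => or_self_iff.1 (hlink p hp p hp)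
  let N := {q ∈ S | q.1 = v}.image Prod.snd
  let X := {x ∈ S.image Prod.fst | ∀ y ∈ N, G.Adj x y}
  have hNv : N ⊆ G.neighborFinset v := fun y hy => by
    obtain ⟨q, hq, rfl⟩ := mem_image.1 hy
    obtain ⟨hqS, rfl⟩ := mem_filter.1 hq
    simpa using hadj q hqS
  have hN : #N = #{q ∈ S | q.1 = v} := card_image_of_injOn fun p hp q hq h =>
    Prod.ext ((mem_filter.1 hp).2.trans (mem_filter.1 hq).2.symm) h
  have hfst (x : V) (hx : x ∈ S.image Prod.fst) : #{q ∈ S | q.1 = x} ≤ #N := by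
    obtain ⟨q, hq, rfl⟩ := mem_image.1 hx
    exact (hmax q hq).trans hN.ge
  have hnear : #{p ∈ S | p.1 ∈ X ∨ p.2 ∈ N} ≤ #N * D := by
    have := card_add_mul_le_of_complete_cover (S := {p ∈ S | p.1 ∈ X ∨ p.2 ∈ N}) (d := #N) hdeg
      (fun p hp => hadj p (mem_filter.1 hp).1) (fun p hp => (mem_filter.1 hp).2)
      (fun x hx => (mem_filter.1 hx).2) fun x hx =>
        (card_le_card (filter_subset_filter _ (filter_subset _ _))).trans
          (hfst x (mem_filter.1 hx).1)
    omega
  have hfar_mem (p) (hp : p ∈ {p ∈ S | ¬ (p.1 ∈ X ∨ p.2 ∈ N)}) :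
      p.1 ∈ (∅ : Finset V) ∨ p.2 ∈ G.neighborFinset v \ N := by
    obtain ⟨hpS, hpXN⟩ := mem_filter.1 hp
    obtain ⟨hpX, hpN⟩ := not_or.1 hpXN
    obtain ⟨q, hq, hpq⟩ : ∃ q ∈ {q ∈ S | q.1 = v}, ¬ G.Adj p.1 q.2 := by
      simpa [X, N, mem_image_of_mem Prod.fst hpS] using hpX
    obtain ⟨hqS, rfl⟩ := mem_filter.1 hq
    have hqp : G.Adj q.1 p.2 := (hlink p hpS q hqS).resolve_left hpq
    exact .inr (mem_sdiff.2 ⟨by simpa using hqp, hpN⟩)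
  have hfar : #{p ∈ S | ¬ (p.1 ∈ X ∨ p.2 ∈ N)} ≤ #(G.neighborFinset v \ N) * D := by
    simpa using card_le_mul_of_cover hdeg (fun p hp => hadj p (mem_filter.1 hp).1) hfar_mem
  calc #S = #{p ∈ S | p.1 ∈ X ∨ p.2 ∈ N} + #{p ∈ S | ¬ (p.1 ∈ X ∨ p.2 ∈ N)} :=
        (card_filter_add_card_filter_not _).symm
    _ ≤ #N * D + #(G.neighborFinset v \ N) * D := add_le_add hnear hfar
    _ = G.degree v * D := by
      rw [← add_mul, add_comm, card_sdiff_add_card_eq_card hNv, G.card_neighborFinset_eq_degree]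

theorem card_le_sq_of_link {S : Finset (V × V)} (hdeg : ∀ v, G.degree v ≤ D)
    (hlink : ∀ p ∈ S, ∀ q ∈ S, Link G p q ∨ Link G q p) : #S ≤ D ^ 2 := by
  classical
  obtain rfl | hne := S.eq_empty_or_nonempty
  · simp
  obtain ⟨p, -, hmax⟩ := exists_max_image S (fun p => #{q ∈ S | q.1 = p.1}) hne
  rw [sq]
  exact (card_le_degree_mul_of_link hdeg hlink hmax).trans (Nat.mul_le_mul_right _ (hdeg p.1))

theorem IsLinkedFamily.card_add_le {S : Finset (V × V)} {k : ℕ} (hS : IsLinkedFamily G C S)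
    (hdeg : ∀ v, G.degree v ≤ D) (hD : 1 ≤ D) (hk : 3 ≤ k) (hG : CycleFree G (2 * k)) :
    #S + k ≤ k * D + 1 := by
  classical
  have hadj : ∀ p ∈ S, G.Adj p.1 p.2 := fun p hp => (hS.crosses hp).2.2
  obtain hDk | hkD := Nat.lt_or_ge D k
  · have := card_le_sq_of_link hdeg hS.link
    nlinarith
  by_cases hcover : ∀ A B : Finset V, (∀ p ∈ S, p.1 ∈ A ∨ p.2 ∈ B) → k ≤ #A + #B
  · obtain ⟨M, hMS, hcard, hfst, hsnd⟩ := exists_matching_of_forall_le_card_cover hcover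
    have hM : IsLinkedMatching G C M := ⟨hS.mono (coe_subset.2 hMS), hfst, hsnd⟩
    obtain ⟨A, B, hAB, hA, hB, hcov, hcomplete⟩ :=
      hM.exists_complete_cover hS hMS hk hG hcard
    have := card_add_mul_le_of_complete_cover hdeg hadj hcov hcomplete fun x _ =>
      (card_filter_fst_eq_le_degree hadj x).trans (hdeg x)
    have := hA.card_pos
    have := hB.card_pos
    rw [← hAB]
    nlinarith
  · push Not at hcover
    obtain ⟨A, B, hcov, hAB⟩ := hcover
    have := card_le_mul_of_cover hdeg hadj hcov
    nlinarith

end DegreeCount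

section ConnectedCover

open Finset

variable {V : Type*} {G : SimpleGraph V}

/-- Lists of vertices in which every vertex but the last has a neighbor further down the list; they
enumerate the connected sets of vertices. Repetitions are allowed. -/
inductive IsConnectedList (G : SimpleGraph V) : List V → Prop
  | singleton (v : V) : IsConnectedList G [v]
  | cons {w v : V} {l : List V} (hv : v ∈ l) (hwv : G.Adj w v) (hl : IsConnectedList G l) :
    IsConnectedList G (w :: l)

/-- The set `S` of edges has a connected vertex cover with at most four vertices. For such `S`,
counting the edges at the cover is enough. -/
def HasSmallCover (G : SimpleGraph V) (S : Set (Sym2 V)) : Prop :=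
  ∃ l, IsConnectedList G l ∧ l.length ≤ 4 ∧ ∀ e ∈ S, ∃ v ∈ l, v ∈ e

theorem exists_edge_avoiding {S : Set (Sym2 V)} (hcov : ¬ HasSmallCover G S) {l : List V}
    (hl : IsConnectedList G l) (hlen : l.length ≤ 4) : ∃ x y, s(x, y) ∈ S ∧ x ∉ l ∧ y ∉ l := by
  by_contra! h
  refine hcov ⟨l, hl, hlen, Sym2.ind fun x y hxy => ?_⟩
  by_cases hx : x ∈ l
  · exact ⟨x, hx, Sym2.mem_mk_left x y⟩
  · exact ⟨y, h x y hxy hx, Sym2.mem_mk_right x y⟩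

variable [G.LocallyFinite] {D : ℕ}

theorem IsConnectedList.card_add_length_le {l : List V} (hl : IsConnectedList G l)
    (hdeg : ∀ v, G.degree v ≤ D) {S : Finset (Sym2 V)} (hSG : (S : Set (Sym2 V)) ⊆ G.edgeSet)
    (hcov : ∀ e ∈ S, ∃ v ∈ l, v ∈ e) : #S + l.length ≤ l.length * D + 1 := by
  classical
  have hinc (v : V) : #(G.incidenceFinset v) ≤ D :=
    (G.card_incidenceFinset_eq_degree v).trans_le (hdeg v)
  induction hl generalizing S with
  | singleton v =>
    have hsub : S ⊆ G.incidenceFinset v := fun e he => by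
      simpa [SimpleGraph.incidenceSet] using ⟨hSG he, by simpa using hcov e he⟩
    simpa using (card_le_card hsub).trans (hinc v)
  | @cons w v l hv hwv _ ih =>
    have hrest : #{e ∈ S | ¬ ∃ v ∈ l, v ∈ e} + 1 ≤ D := by
      have hsub : {e ∈ S | ¬ ∃ v ∈ l, v ∈ e} ⊆ (G.incidenceFinset w).erase s(w, v) := fun e he => by
        obtain ⟨heS, hel⟩ := mem_filter.1 he
        obtain ⟨u, hu, hue⟩ := hcov e heS
        obtain rfl | hul := List.mem_cons.1 hu
        · refine mem_erase.2 ⟨?_, by simpa [SimpleGraph.incidenceSet] using ⟨hSG heS, hue⟩⟩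
          rintro rfl
          exact hel ⟨v, hv, Sym2.mem_mk_right _ _⟩
        · exact absurd ⟨u, hul, hue⟩ hel
      have hmem : s(w, v) ∈ G.incidenceFinset w := by simpa [SimpleGraph.incidenceSet] using hwv
      calc #{e ∈ S | ¬ ∃ v ∈ l, v ∈ e} + 1 ≤ #((G.incidenceFinset w).erase s(w, v)) + 1 :=
            Nat.add_le_add_right (card_le_card hsub) 1
        _ = #(G.incidenceFinset w) := card_erase_add_one hmem
        _ ≤ D := hinc w
    have hcovered := ih (S := {e ∈ S | ∃ v ∈ l, v ∈ e})
      (fun e he => hSG (mem_filter.1 he).1) fun e he => (mem_filter.1 he).2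
    rw [← card_filter_add_card_filter_not (s := S) fun e => ∃ v ∈ l, v ∈ e, List.length_cons,
      add_one_mul]
    omega

theorem HasSmallCover.card_add_le {S : Finset (Sym2 V)} {k : ℕ} (h : HasSmallCover G S)
    (hSG : (S : Set (Sym2 V)) ⊆ G.edgeSet) (hdeg : ∀ v, G.degree v ≤ D) (hD : 1 ≤ D) (hk : 4 ≤ k) :
    #S + k ≤ k * D + 1 := by
  obtain ⟨l, hl, hlen, hcov⟩ := h
  have := hl.card_add_length_le hdeg hSG hcov
  nlinarith

end ConnectedCover

section StrongClique

variable {V : Type*} {G : SimpleGraph V} {S : Set (Sym2 V)} {a b c a' b' c' x y : V}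

theorem mk_swap_mem (h : s(x, y) ∈ S) : s(y, x) ∈ S :=
  Sym2.eq_swap ▸ h

theorem IsStrongClique.adj (hS : IsStrongClique G S) (h : s(x, y) ∈ S) : G.Adj x y :=
  hS.1 h

theorem IsStrongClique.adj_of_disjoint (hS : IsStrongClique G S) (hxy : s(x, y) ∈ S)
    (hab : s(a, b) ∈ S) (hxa : x ≠ a) (hxb : x ≠ b) (hya : y ≠ a) (hyb : y ≠ b) :
    G.Adj x a ∨ G.Adj x b ∨ G.Adj y a ∨ G.Adj y b := by
  obtain ⟨u, v, hu, hv, huv⟩ := hS.2 _ hxy _ hab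
  rw [Sym2.mem_iff] at hu hv
  grind

theorem IsConnectedList.of_adj_of_adj (hba : G.Adj b a) (hca : G.Adj c a) :
    IsConnectedList G [c, b, a] :=
  .cons (by simp) hca (.cons (by simp) hba (.singleton a))

/-- A triangle `abc` of `G` together with three pairwise disjoint pendant edges `aa'`, `bb'`, `cc'`
in `S`. In a strong clique without 5-cycles this configuration forces a small cover. -/
structure IsNet (G : SimpleGraph V) (S : Set (Sym2 V)) (a b c a' b' c' : V) : Prop where
  adj_ab : G.Adj a b
  adj_bc : G.Adj b c
  adj_ca : G.Adj c a
  mem_a : s(a, a') ∈ S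
  mem_b : s(b, b') ∈ S
  mem_c : s(c, c') ∈ S
  a'_ne_b' : a' ≠ b'
  b'_ne_c' : b' ≠ c'
  c'_ne_a' : c' ≠ a'
  a'_ne_b : a' ≠ b
  a'_ne_c : a' ≠ c
  b'_ne_c : b' ≠ c
  b'_ne_a : b' ≠ a
  c'_ne_a : c' ≠ a
  c'_ne_b : c' ≠ b

namespace IsNet

theorem rotate (h : IsNet G S a b c a' b' c') : IsNet G S b c a b' c' a' :=
  ⟨h.adj_bc, h.adj_ca, h.adj_ab, h.mem_b, h.mem_c, h.mem_a, h.b'_ne_c', h.c'_ne_a', h.a'_ne_b',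
    h.b'_ne_c, h.b'_ne_a, h.c'_ne_a, h.c'_ne_b, h.a'_ne_b, h.a'_ne_c⟩

theorem adj_of_adj (h : IsNet G S a b c a' b' c') (hS : IsStrongClique G S) (h5 : CycleFree G 5)
    (hxy : s(x, y) ∈ S) (hx : x ≠ a ∧ x ≠ b ∧ x ≠ c) (hy : y ≠ a ∧ y ≠ b ∧ y ≠ c)
    (hxa : G.Adj x a) : G.Adj x b := by
  obtain ⟨-, hxb, hxc⟩ := hx
  obtain ⟨hya, hyb, hyc⟩ := hy
  have hxy' := hS.adj hxy
  have hbb' := hS.adj h.mem_b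
  have not_adj_yb (hyb' : G.Adj y b) : False :=
    h5.false_of_five_cycle hxy' hyb' h.adj_bc h.adj_ca hxa.symm hxb hxc hyc hya h.adj_ab.ne'
  rcases eq_or_ne x b' with rfl | hxb'
  · exact hbb'.symm
  rcases eq_or_ne y b' with rfl | hyb'
  · exact (not_adj_yb hbb'.symm).elim
  obtain hadj | hadj | hadj | hadj := hS.adj_of_disjoint hxy h.mem_b hxb hxb' hyb hyb'
  · exact hadj
  · exact (h5.false_of_five_cycle hadj hbb'.symm h.adj_bc h.adj_ca hxa.symm hxb hxc h.b'_ne_c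
      h.b'_ne_a h.adj_ab.ne').elim
  · exact (not_adj_yb hadj).elim
  · exact (h5.false_of_five_cycle hxy' hadj hbb'.symm h.adj_ab.symm hxa.symm hxb' hxb hyb hya
      h.b'_ne_a).elim

theorem adj_triangle (h : IsNet G S a b c a' b' c') (hS : IsStrongClique G S)
    (h5 : CycleFree G 5) (hxy : s(x, y) ∈ S) (hx : x ≠ a ∧ x ≠ b ∧ x ≠ c)
    (hy : y ≠ a ∧ y ≠ b ∧ y ≠ c) (hadj : G.Adj x a ∨ G.Adj x b ∨ G.Adj x c) :
    G.Adj x a ∧ G.Adj x b ∧ G.Adj x c := by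
  have hab : G.Adj x a → G.Adj x b := h.adj_of_adj hS h5 hxy hx hy
  have hbc : G.Adj x b → G.Adj x c := h.rotate.adj_of_adj hS h5 hxy (by tauto) (by tauto)
  have hca : G.Adj x c → G.Adj x a := h.rotate.rotate.adj_of_adj hS h5 hxy (by tauto) (by tauto)
  tauto

theorem not_adj_pendants (h : IsNet G S a b c a' b' c') (hS : IsStrongClique G S)
    (h5 : CycleFree G 5) (hxa : x ≠ a) (hxb : x ≠ b) : ¬ (G.Adj x a' ∧ G.Adj x b') :=
  fun ⟨hxa', hxb'⟩ => h5.false_of_five_cycle hxa' (hS.adj h.mem_a).symm h.adj_ab (hS.adj h.mem_b)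
    hxb'.symm hxa hxb h.a'_ne_b h.a'_ne_b' h.b'_ne_a.symm

theorem adj_pendant (h : IsNet G S a b c a' b' c') (hS : IsStrongClique G S)
    (hxy : s(x, y) ∈ S) (hxa : x ≠ a) (hya : y ≠ a) (hnx : ¬ G.Adj x a) (hny : ¬ G.Adj y a) :
    G.Adj x a' ∨ G.Adj y a' := by
  have haa' := (hS.adj h.mem_a).symm
  have := hS.adj_of_disjoint hxy h.mem_a hxa (by rintro rfl; exact hnx haa') hya
    (by rintro rfl; exact hny haa')
  tauto

theorem adj_triangle_or (h : IsNet G S a b c a' b' c') (hS : IsStrongClique G S)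
    (h5 : CycleFree G 5) (hxy : s(x, y) ∈ S) (hx : x ≠ a ∧ x ≠ b ∧ x ≠ c)
    (hy : y ≠ a ∧ y ≠ b ∧ y ≠ c) :
    (G.Adj x a ∧ G.Adj x b ∧ G.Adj x c) ∨ (G.Adj y a ∧ G.Adj y b ∧ G.Adj y c) := by
  by_contra! hcon
  have hnx : ¬ (G.Adj x a ∨ G.Adj x b ∨ G.Adj x c) := fun hadj => by
    obtain ⟨hxa, hxb, hxc⟩ := h.adj_triangle hS h5 hxy hx hy hadj
    exact hcon.1 hxa hxb hxc
  have hny : ¬ (G.Adj y a ∨ G.Adj y b ∨ G.Adj y c) := fun hadj => by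
    obtain ⟨hya, hyb, hyc⟩ := h.adj_triangle hS h5 (mk_swap_mem hxy) hy hx hadj
    exact hcon.2 hya hyb hyc
  push Not at hnx hny
  -- Each of the three pendants is adjacent to `x` or to `y`, so two of them share a neighbor.
  have ha := h.adj_pendant hS hxy hx.1 hy.1 hnx.1 hny.1
  have hb := h.rotate.adj_pendant hS hxy hx.2.1 hy.2.1 hnx.2.1 hny.2.1
  have hc := h.rotate.rotate.adj_pendant hS hxy hx.2.2 hy.2.2 hnx.2.2 hny.2.2
  have not_adj_two {v : V} (hv : v ≠ a ∧ v ≠ b ∧ v ≠ c) : ¬ (G.Adj v a' ∧ G.Adj v b') ∧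
      ¬ (G.Adj v b' ∧ G.Adj v c') ∧ ¬ (G.Adj v c' ∧ G.Adj v a') :=
    ⟨h.not_adj_pendants hS h5 hv.1 hv.2.1, h.rotate.not_adj_pendants hS h5 hv.2.1 hv.2.2,
      h.rotate.rotate.not_adj_pendants hS h5 hv.2.2 hv.1⟩
  have hx' := not_adj_two hx
  have hy' := not_adj_two hy
  clear hcon hnx hny hx hy
  tauto

theorem eq_of_adj_triangle (h : IsNet G S a b c a' b' c') (h5 : CycleFree G 5)
    (hx : G.Adj x a ∧ G.Adj x b ∧ G.Adj x c) (hy : G.Adj y a ∧ G.Adj y b ∧ G.Adj y c) : x = y := by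
  by_contra hne
  exact h5.false_of_five_cycle hx.1 hy.1.symm hy.2.1 h.adj_bc hx.2.2.symm hne hx.2.1.ne
    h.adj_ab.ne h.adj_ca.ne' hy.2.2.ne

theorem hasSmallCover (h : IsNet G S a b c a' b' c') (hS : IsStrongClique G S)
    (h5 : CycleFree G 5) : HasSmallCover G S := by
  by_contra hcov
  have hl : IsConnectedList G [c, b, a] := .of_adj_of_adj h.adj_ab.symm h.adj_ca
  have exists_common_nbr {l : List V} (hl : IsConnectedList G l) (hlen : l.length ≤ 4)
      (hsub : [c, b, a] ⊆ l) : ∃ w ∉ l, G.Adj w a ∧ G.Adj w b ∧ G.Adj w c := by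
    obtain ⟨x, y, hxy, hx, hy⟩ := exists_edge_avoiding hcov hl hlen
    obtain hadj | hadj := h.adj_triangle_or hS h5 hxy (by grind) (by grind)
    · exact ⟨x, hx, hadj⟩
    · exact ⟨y, hy, hadj⟩
  obtain ⟨z, -, hz⟩ := exists_common_nbr hl (by simp) (List.Subset.refl _)
  obtain ⟨w, hw, hwadj⟩ := exists_common_nbr (hl.cons (by simp) hz.1) (by simp) (by simp)
  exact hw (h.eq_of_adj_triangle h5 hwadj hz ▸ List.mem_cons_self)

end IsNet

theorem not_adj_of_triangle_of_pendant (hS : IsStrongClique G S) (h5 : CycleFree G 5)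
    (hcov : ¬ HasSmallCover G S) (hab : s(a, b) ∈ S) (hca : G.Adj c a) (hcb : G.Adj c b)
    (hcc' : s(c, c') ∈ S) (hc'a : c' ≠ a) (hc'b : c' ≠ b) (hxy : s(x, y) ∈ S)
    (hx : x ∉ [c', c, b, a]) (hy : y ∉ [c', c, b, a]) : ¬ G.Adj x a := by
  intro hxa
  have hadj_ab := hS.adj hab
  have hadj_cc' := hS.adj hcc'
  have hadj_xy := hS.adj hxy
  simp only [List.mem_cons, List.not_mem_nil, or_false, not_or] at hx hy
  obtain ⟨hxc', hxc, hxb, -⟩ := hx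
  obtain ⟨hyc', hyc, hyb, hya⟩ := hy
  obtain hadj | hadj | hadj | hadj := hS.adj_of_disjoint hxy hcc' hxc hxc' hyc hyc'
  · have hnet : IsNet G S c a x c' b y :=
      ⟨hca, hxa.symm, hadj, hcc', hab, hxy, hc'b, Ne.symm hyb, hyc', hc'a, Ne.symm hxc',
        Ne.symm hxb, hcb.ne', hyc, hya⟩
    exact hcov (hnet.hasSmallCover hS h5)
  · exact h5.false_of_five_cycle hadj hadj_cc'.symm hcb hadj_ab.symm hxa.symm hxc hxb hc'b hc'a
      hca.ne
  · exact h5.false_of_five_cycle hxa hadj_ab hcb.symm hadj.symm hadj_xy.symm hxb hxc hca.ne'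
      (Ne.symm hya) (Ne.symm hyb)
  · exact h5.false_of_five_cycle hadj_xy hadj hadj_cc'.symm hca hxa.symm hxc' hxc hyc hya hc'a

theorem hasSmallCover_of_triangle_of_pendant (hS : IsStrongClique G S) (h5 : CycleFree G 5)
    (hab : s(a, b) ∈ S) (hca : G.Adj c a) (hcb : G.Adj c b) (hcc' : s(c, c') ∈ S) (hc'a : c' ≠ a)
    (hc'b : c' ≠ b) : HasSmallCover G S := by
  by_contra hcov
  have hl : IsConnectedList G [c', c, b, a] :=
    (IsConnectedList.of_adj_of_adj (hS.adj hab).symm hca).cons (by simp) (hS.adj hcc').symm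
  obtain ⟨x, y, hxy, hx, hy⟩ := exists_edge_avoiding hcov hl (by simp)
  have not_adj {u v : V} (huv : s(u, v) ∈ S) (hu : u ∉ [c', c, b, a]) (hv : v ∉ [c', c, b, a]) :
      ¬ G.Adj u a ∧ ¬ G.Adj u b :=
    ⟨not_adj_of_triangle_of_pendant hS h5 hcov hab hca hcb hcc' hc'a hc'b huv hu hv,
      not_adj_of_triangle_of_pendant hS h5 hcov (mk_swap_mem hab) hcb hca hcc' hc'b hc'a huv
        (by grind) (by grind)⟩
  have hnx := not_adj hxy hx hy
  have hny := not_adj (mk_swap_mem hxy) hy hx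
  have := hS.adj_of_disjoint hxy hab (by grind) (by grind) (by grind) (by grind)
  tauto

theorem not_adj_of_triangle_subset (hS : IsStrongClique G S) (h5 : CycleFree G 5)
    (hcov : ¬ HasSmallCover G S) (hab : s(a, b) ∈ S) (hbc : s(b, c) ∈ S) (hca : s(c, a) ∈ S)
    (hxy : s(x, y) ∈ S) (hx : x ∉ [c, b, a]) (hy : y ∉ [c, b, a]) : ¬ G.Adj x a := by
  intro hxa
  have hadj_ab := hS.adj hab
  have hadj_bc := hS.adj hbc
  have hadj_ca := hS.adj hca
  have hadj_xy := hS.adj hxy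
  simp only [List.mem_cons, List.not_mem_nil, or_false, not_or] at hx hy
  obtain ⟨hxc, hxb, -⟩ := hx
  obtain ⟨hyc, hyb, hya⟩ := hy
  obtain hadj | hadj | hadj | hadj := hS.adj_of_disjoint hxy hbc hxb hxc hyb hyc
  · exact hcov (hasSmallCover_of_triangle_of_pendant hS h5 hab hxa hadj hxy hya hyb)
  · exact hcov (hasSmallCover_of_triangle_of_pendant hS h5 hca hadj hxa hxy hyc hya)
  · exact h5.false_of_five_cycle hxa hadj_ca.symm hadj_bc.symm hadj.symm hadj_xy.symm hxc hxb
      hadj_ab.ne (Ne.symm hya) (Ne.symm hyc)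
  · exact h5.false_of_five_cycle hxa hadj_ab hadj_bc hadj.symm hadj_xy.symm hxb hxc hadj_ca.ne'
      (Ne.symm hya) (Ne.symm hyb)

theorem hasSmallCover_of_triangle_subset (hS : IsStrongClique G S) (h5 : CycleFree G 5)
    (hab : s(a, b) ∈ S) (hbc : s(b, c) ∈ S) (hca : s(c, a) ∈ S) : HasSmallCover G S := by
  by_contra hcov
  obtain ⟨x, y, hxy, hx, hy⟩ := exists_edge_avoiding hcov
    (.of_adj_of_adj (hS.adj hab).symm (hS.adj hca)) (by simp)
  have not_adj {u v : V} (huv : s(u, v) ∈ S) (hu : u ∉ [c, b, a]) (hv : v ∉ [c, b, a]) :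
      ¬ G.Adj u a ∧ ¬ G.Adj u b :=
    ⟨not_adj_of_triangle_subset hS h5 hcov hab hbc hca huv hu hv,
      not_adj_of_triangle_subset hS h5 hcov hbc hca hab huv (by grind) (by grind)⟩
  have hnx := not_adj hxy hx hy
  have hny := not_adj (mk_swap_mem hxy) hy hx
  have := hS.adj_of_disjoint hxy hab (by grind) (by grind) (by grind) (by grind)
  tauto

end StrongClique

section LinkGraph

open Finset

variable {V : Type*} {G : SimpleGraph V} {S : Set (Sym2 V)} {x' a b c x y : V}

/-- The edges of `G` that either belong to `S` or join two disjoint members of `S`. Away from small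
covers this graph is bipartite, which orients the members of `S`. -/
def linkGraph (G : SimpleGraph V) (S : Set (Sym2 V)) : SimpleGraph V where
  Adj v w := G.Adj v w ∧ (s(v, w) ∈ S ∨ ∃ v' w', s(v, v') ∈ S ∧ s(w, w') ∈ S ∧ v' ≠ w')
  symm := ⟨fun _ _ h => ⟨h.1.symm, h.2.imp mk_swap_mem
    fun ⟨v', w', hv, hw, hne⟩ => ⟨w', v', hw, hv, hne.symm⟩⟩⟩
  loopless := ⟨fun v h => G.loopless.irrefl v h.1⟩

theorem linkGraph_le : linkGraph G S ≤ G :=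
  fun _ _ h => h.1

theorem IsStrongClique.linkGraph_adj (hS : IsStrongClique G S) (h : s(x, y) ∈ S) :
    (linkGraph G S).Adj x y :=
  ⟨hS.adj h, Or.inl h⟩

theorem exists_pendants_of_linkGraph_adj (h : (linkGraph G S).Adj x y) (hxy : s(x, y) ∉ S) :
    ∃ x' y', s(x, x') ∈ S ∧ s(y, y') ∈ S ∧ x' ≠ y' :=
  h.2.resolve_left hxy

theorem exists_mem_of_linkGraph_adj (h : (linkGraph G S).Adj x y) : ∃ y', s(y, y') ∈ S := by
  obtain ⟨-, hxy | ⟨-, y', -, hy', -⟩⟩ := h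
  · exact ⟨x, mk_swap_mem hxy⟩
  · exact ⟨y', hy'⟩

theorem hasSmallCover_of_linkGraph_triangle_of_mem_mem (hS : IsStrongClique G S)
    (h5 : CycleFree G 5) (hab : s(a, b) ∈ S) (hca : s(c, a) ∈ S)
    (hbc : (linkGraph G S).Adj b c) : HasSmallCover G S := by
  have hadj_ab := hS.adj hab
  have hadj_ca := hS.adj hca
  by_cases hbcS : s(b, c) ∈ S
  · exact hasSmallCover_of_triangle_subset hS h5 hab hbcS hca
  obtain ⟨b', c', hb, hc, hne⟩ := exists_pendants_of_linkGraph_adj hbc hbcS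
  have hb'c : b' ≠ c := by rintro rfl; exact hbcS hb
  have hc'b : c' ≠ b := by rintro rfl; exact hbcS (mk_swap_mem hc)
  rcases eq_or_ne b' a with rfl | hb'a
  · exact hasSmallCover_of_triangle_of_pendant hS h5 hab hadj_ca hbc.1.symm hc hne.symm hc'b
  · exact hasSmallCover_of_triangle_of_pendant hS h5 hca hbc.1 hadj_ab.symm hb hb'c hb'a

theorem hasSmallCover_of_linkGraph_triangle_of_mem (hS : IsStrongClique G S)
    (h5 : CycleFree G 5) (hab : s(a, b) ∈ S) (hbc : (linkGraph G S).Adj b c)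
    (hca : (linkGraph G S).Adj c a) : HasSmallCover G S := by
  obtain ⟨c', hc⟩ := exists_mem_of_linkGraph_adj hbc
  rcases eq_or_ne c' a with rfl | hne_a
  · exact hasSmallCover_of_linkGraph_triangle_of_mem_mem hS h5 hab hc hbc
  rcases eq_or_ne c' b with rfl | hne_b
  · exact hasSmallCover_of_linkGraph_triangle_of_mem_mem hS h5 (mk_swap_mem hab) hc hca.symm
  · exact hasSmallCover_of_triangle_of_pendant hS h5 hab hca.1 hbc.1.symm hc hne_a hne_b

/-- A triangle of the link graph none of whose sides belongs to `S`, the remaining obstruction to a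
triangle-free link graph. -/
structure IsBareTriangle (G : SimpleGraph V) (S : Set (Sym2 V)) (a b c : V) : Prop where
  adj_ab : (linkGraph G S).Adj a b
  adj_bc : (linkGraph G S).Adj b c
  adj_ca : (linkGraph G S).Adj c a
  ab_notMem : s(a, b) ∉ S
  bc_notMem : s(b, c) ∉ S
  ca_notMem : s(c, a) ∉ S

namespace IsBareTriangle

theorem rotate (h : IsBareTriangle G S a b c) : IsBareTriangle G S b c a :=
  ⟨h.adj_bc, h.adj_ca, h.adj_ab, h.bc_notMem, h.ca_notMem, h.ab_notMem⟩

theorem isNet {a' b' c' : V} (h : IsBareTriangle G S a b c) (ha : s(a, a') ∈ S)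
    (hb : s(b, b') ∈ S) (hc : s(c, c') ∈ S) (hab : a' ≠ b') (hbc : b' ≠ c') (hca : c' ≠ a') :
    IsNet G S a b c a' b' c' where
  adj_ab := h.adj_ab.1
  adj_bc := h.adj_bc.1
  adj_ca := h.adj_ca.1
  mem_a := ha
  mem_b := hb
  mem_c := hc
  a'_ne_b' := hab
  b'_ne_c' := hbc
  c'_ne_a' := hca
  a'_ne_b := by rintro rfl; exact h.ab_notMem ha
  a'_ne_c := by rintro rfl; exact h.ca_notMem (mk_swap_mem ha)
  b'_ne_c := by rintro rfl; exact h.bc_notMem hb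
  b'_ne_a := by rintro rfl; exact h.ab_notMem (mk_swap_mem hb)
  c'_ne_a := by rintro rfl; exact h.ca_notMem hc
  c'_ne_b := by rintro rfl; exact h.bc_notMem (mk_swap_mem hc)

theorem eq_of_common_pendant {p q : V} (h : IsBareTriangle G S a b c) (hS : IsStrongClique G S)
    (h5 : CycleFree G 5) (hcov : ¬ HasSmallCover G S) (hcp : s(c, p) ∈ S) (hap : s(a, p) ∈ S)
    (hbq : s(b, q) ∈ S) : p = q := by
  by_contra hpq
  have hpb : p ≠ b := by rintro rfl; exact h.bc_notMem (mk_swap_mem hcp)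
  have hqa : q ≠ a := by rintro rfl; exact h.ab_notMem (mk_swap_mem hbq)
  have hqc : q ≠ c := by rintro rfl; exact h.bc_notMem hbq
  obtain ⟨c', a', hc, ha, hne⟩ := exists_pendants_of_linkGraph_adj h.adj_ca h.ca_notMem
  rcases eq_or_ne a' q with rfl | ha'q
  · exact h5.false_of_five_cycle (hS.adj hap) (hS.adj hcp).symm h.adj_bc.1.symm (hS.adj hbq)
      (hS.adj ha).symm h.adj_ca.1.ne' h.adj_ab.1.ne hpb hpq hqc.symm
  rcases eq_or_ne c' q with rfl | hc'q
  · exact h5.false_of_five_cycle (hS.adj hcp) (hS.adj hap).symm h.adj_ab.1 (hS.adj hbq)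
      (hS.adj hc).symm h.adj_ca.1.ne h.adj_bc.1.ne' hpb hpq hqa.symm
  · exact hcov ((h.isNet ha hbq hc ha'q hc'q.symm hne).hasSmallCover hS h5)

theorem hasSmallCover (h : IsBareTriangle G S a b c) (hS : IsStrongClique G S)
    (h5 : CycleFree G 5) : HasSmallCover G S := by
  by_contra hcov
  obtain ⟨a', b', ha, hb, hne⟩ := exists_pendants_of_linkGraph_adj h.adj_ab h.ab_notMem
  obtain ⟨c', hc⟩ := exists_mem_of_linkGraph_adj h.adj_bc
  rcases eq_or_ne c' a' with rfl | hc'a'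
  · exact hne (h.eq_of_common_pendant hS h5 hcov hc ha hb)
  rcases eq_or_ne b' c' with rfl | hb'c'
  · exact hne (h.rotate.rotate.eq_of_common_pendant hS h5 hcov hb hc ha).symm
  · exact hcov ((h.isNet ha hb hc hne hb'c' hc'a').hasSmallCover hS h5)

end IsBareTriangle

theorem linkGraph_cliqueFree_three (hS : IsStrongClique G S) (h5 : CycleFree G 5)
    (hcov : ¬ HasSmallCover G S) : (linkGraph G S).CliqueFree 3 := by
  classical
  intro t ht
  obtain ⟨a, b, c, hab, hac, hbc, -⟩ := SimpleGraph.is3Clique_iff.1 ht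
  have notMem {u v w : V} (huv : (linkGraph G S).Adj v w) (hvw : (linkGraph G S).Adj w u) :
      s(u, v) ∉ S :=
    fun hmem => hcov (hasSmallCover_of_linkGraph_triangle_of_mem hS h5 hmem huv hvw)
  have hbare : IsBareTriangle G S a b c :=
    ⟨hab, hbc, hac.symm, notMem hbc hac.symm, notMem hac.symm hab, notMem hab hbc⟩
  exact hcov (hbare.hasSmallCover hS h5)

/-- The vertices at the end of a walk of length two from `a`: one side of the bipartition of the
link graph, when `a` is an end of a member of `S`. -/
def secondNeighborSet (H : SimpleGraph V) (a : V) : Set V :=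
  {v | ∃ p, H.Adj a p ∧ H.Adj p v}

theorem not_adj_of_mem_secondNeighborSet {H : SimpleGraph V} (h3 : H.CliqueFree 3)
    (h5 : CycleFree H 5) (hx : x ∈ secondNeighborSet H a) (hy : y ∈ secondNeighborSet H a) :
    ¬ H.Adj x y := by
  classical
  intro hxy
  obtain ⟨p, hap, hpx⟩ := hx
  obtain ⟨q, haq, hqy⟩ := hy
  have triangle_free {u v w : V} (huv : H.Adj u v) (hvw : H.Adj v w) (huw : H.Adj u w) : False :=
    h3 _ (SimpleGraph.is3Clique_triple_iff.2 ⟨huv, huw, hvw⟩)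
  refine h5.false_of_five_cycle hap hpx hxy hqy.symm haq.symm ?_ ?_ ?_ ?_ ?_
  · rintro rfl; exact triangle_free haq hqy hxy
  · rintro rfl; exact triangle_free hap hpx hxy.symm
  · rintro rfl; exact triangle_free haq hqy hap
  · rintro rfl; exact triangle_free hpx hxy hqy
  · rintro rfl; exact triangle_free hap hpx haq

theorem ne_and_adj_of_notMem_secondNeighborSet (hS : IsStrongClique G S) (hab : s(a, b) ∈ S)
    (hxy : (linkGraph G S).Adj x y) (hx : x ∉ secondNeighborSet (linkGraph G S) a)
    (hy : y ∉ secondNeighborSet (linkGraph G S) a) (hxx' : s(x, x') ∈ S) :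
    x ≠ b ∧ (linkGraph G S).Adj b x' := by
  have hab' := hS.linkGraph_adj hab
  have hx'x := (hS.linkGraph_adj hxx').symm
  have hax : ¬ (linkGraph G S).Adj a x := fun h => hy ⟨x, h, hxy⟩
  have hbx : ¬ (linkGraph G S).Adj b x := fun h => hx ⟨b, hab', h⟩
  have hax' : ¬ (linkGraph G S).Adj a x' := fun h => hx ⟨x', h, hx'x⟩
  have hxa : x ≠ a := by rintro rfl; exact hx ⟨b, hab', hab'.symm⟩
  have hxb : x ≠ b := by rintro rfl; exact hax hab'
  have hx'a : x' ≠ a := by rintro rfl; exact hax hx'x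
  have hx'b : x' ≠ b := by rintro rfl; exact hbx hx'x
  refine ⟨hxb, ?_⟩
  obtain h | h | h | h := hS.adj_of_disjoint hxx' hab hxa hxb hx'a hx'b
  · exact (hax ⟨h.symm, .inr ⟨b, x', hab, hxx', hx'b.symm⟩⟩).elim
  · exact (hbx ⟨h.symm, .inr ⟨a, x', mk_swap_mem hab, hxx', hx'a.symm⟩⟩).elim
  · exact (hax' ⟨h.symm, .inr ⟨b, x, hab, mk_swap_mem hxx', hxb.symm⟩⟩).elim
  · exact ⟨h.symm, .inr ⟨a, x, mk_swap_mem hab, mk_swap_mem hxx', hxa.symm⟩⟩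

theorem mem_secondNeighborSet_or (hS : IsStrongClique G S) (h5 : CycleFree G 5)
    (hab : s(a, b) ∈ S) (hxy : (linkGraph G S).Adj x y) :
    x ∈ secondNeighborSet (linkGraph G S) a ∨ y ∈ secondNeighborSet (linkGraph G S) a := by
  by_contra! hcon
  obtain ⟨hx, hy⟩ := hcon
  have hab' := hS.linkGraph_adj hab
  by_cases hxyS : s(x, y) ∈ S
  · exact hy ⟨b, hab', (ne_and_adj_of_notMem_secondNeighborSet hS hab hxy hx hy hxyS).2⟩
  obtain ⟨x', y', hxx', hyy', hne⟩ := exists_pendants_of_linkGraph_adj hxy hxyS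
  obtain ⟨hxb, hbx'⟩ := ne_and_adj_of_notMem_secondNeighborSet hS hab hxy hx hy hxx'
  obtain ⟨hyb, hby'⟩ := ne_and_adj_of_notMem_secondNeighborSet hS hab hxy.symm hy hx hyy'
  refine h5.false_of_five_cycle hxy.1 (hS.adj hyy') hby'.1.symm hbx'.1 (hS.adj hxx').symm ?_ hxb
    hyb ?_ hne.symm
  · rintro rfl; exact hxyS (mk_swap_mem hyy')
  · rintro rfl; exact hxyS hxx'

theorem exists_forall_linkGraph_adj_mem_iff_notMem (hS : IsStrongClique G S) (h5 : CycleFree G 5)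
    (hcov : ¬ HasSmallCover G S) (hab : s(a, b) ∈ S) :
    ∃ C : Set V, ∀ x y, (linkGraph G S).Adj x y → (x ∈ C ↔ y ∉ C) := by
  refine ⟨secondNeighborSet (linkGraph G S) a, fun x y hxy => ⟨fun hx hy => ?_, fun hy => ?_⟩⟩
  · exact not_adj_of_mem_secondNeighborSet (linkGraph_cliqueFree_three hS h5 hcov)
      (h5.mono linkGraph_le) hx hy hxy
  · exact (mem_secondNeighborSet_or hS h5 hab hxy).resolve_right hy

theorem IsStrongClique.isLinkedFamily {C : Set V} (hS : IsStrongClique G S)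
    (hC : ∀ x y, (linkGraph G S).Adj x y → (x ∈ C ↔ y ∉ C)) :
    IsLinkedFamily G C {p | p.1 ∈ C ∧ s(p.1, p.2) ∈ S} where
  fst_mem _ hp := hp.1
  snd_notMem p hp := (hC p.1 p.2 (hS.linkGraph_adj hp.2)).1 hp.1
  link := by
    rintro ⟨x, y⟩ ⟨hx, hxy⟩ ⟨u, v⟩ ⟨hu, huv⟩
    have hy := (hC x y (hS.linkGraph_adj hxy)).1 hx
    have hv := (hC u v (hS.linkGraph_adj huv)).1 hu
    rcases eq_or_ne x u with rfl | hxu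
    · exact .inl (hS.adj huv)
    rcases eq_or_ne y v with rfl | hyv
    · exact .inl (hS.adj hxy)
    obtain h | h | h | h := hS.adj_of_disjoint hxy huv hxu (ne_of_mem_of_not_mem hx hv)
      (ne_of_mem_of_not_mem hu hy).symm hyv
    · exact ((hC x u ⟨h, .inr ⟨y, v, hxy, huv, hyv⟩⟩).1 hx hu).elim
    · exact .inl h
    · exact .inr h.symm
    · exact (hy ((hC y v ⟨h, .inr ⟨x, u, mk_swap_mem hxy, mk_swap_mem huv, hxu⟩⟩).2 hv)).elim

theorem exists_isLinkedFamily_card_eq {S : Finset (Sym2 V)} (hS : IsStrongClique G S)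
    (h5 : CycleFree G 5) (hcov : ¬ HasSmallCover G S) :
    ∃ (C : Set V) (T : Finset (V × V)), #T = #S ∧ IsLinkedFamily G C T := by
  classical
  obtain rfl | ⟨⟨a, b⟩, hab⟩ := S.eq_empty_or_nonempty
  · exact ⟨∅, ∅, rfl, by constructor <;> simp⟩
  obtain ⟨C, hC⟩ := exists_forall_linkGraph_adj_mem_iff_notMem hS h5 hcov hab
  have exists_orientation (e : S) : ∃ p : V × V, p.1 ∈ C ∧ s(p.1, p.2) = e := by
    obtain ⟨e, he⟩ := e
    induction e with | _ x y
    by_cases hx : x ∈ C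
    · exact ⟨(x, y), hx, rfl⟩
    · exact ⟨(y, x), by_contra fun hy => hx ((hC x y (hS.linkGraph_adj he)).2 hy), Sym2.eq_swap⟩
  choose f hfC hf using exists_orientation
  have hf_inj : Function.Injective f := fun e e' h => Subtype.ext (by rw [← hf, ← hf, h])
  refine ⟨C, univ.map ⟨f, hf_inj⟩, by simp, (hS.isLinkedFamily hC).mono fun p hp => ?_⟩
  obtain ⟨e, rfl⟩ : ∃ e, f e = p := by simpa using hp
  exact ⟨hfC e, (hf e).symm ▸ e.2⟩

end LinkGraph

theorem stmt12_general {V : Type*} (G : SimpleGraph V) [G.LocallyFinite] {D : ℕ}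
    (hdeg : ∀ v, G.degree v ≤ D) (hD : 1 ≤ D) {k : ℕ} (hk : 4 ≤ k) (hc5 : CycleFree G 5)
    (hc2k : CycleFree G (2 * k)) (S : Finset (Sym2 V)) (hS : IsStrongClique G ↑S) :
    (S.card : ℤ) ≤ k * D - (k - 1) := by
  suffices h : S.card + k ≤ k * D + 1 by zify at h; linarith
  by_cases hcov : HasSmallCover G S
  · exact hcov.card_add_le hS.1 hdeg hD hk
  · obtain ⟨C, T, hcard, hT⟩ := exists_isLinkedFamily_card_eq hS hc5 hcov
    exact hcard ▸ hT.card_add_le hdeg hD (by omega) hc2k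

/-- For `k ≥ 4`, if `G` has no cycle of length 5 and no cycle of length `2k`, and
`Δ(G) ≥ 1`, then the strong clique number of `G` is at most `kΔ(G) - (k - 1)`. -/
theorem stmt12 {V : Type*} [Fintype V] [DecidableEq V] (G : SimpleGraph V)
    [DecidableRel G.Adj] (k : ℕ) (hk : 4 ≤ k)
    (hc5 : CycleFree G 5) (hc2k : CycleFree G (2 * k))
    (hΔ : 1 ≤ G.maxDegree)
    (S : Finset (Sym2 V)) (hS : IsStrongClique G ↑S) :
    (S.card : ℤ) ≤ k * G.maxDegree - (k - 1) :=
  stmt12_general G G.degree_le_maxDegree hΔ hk hc5 hc2k S hS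
end

section
/- Let M be a matching of a graph G that is also a strong clique of G, with |M| = m ≥ 3 and M x-special for some x ∈ V(M). Then for every ℓ ∈ {1,…,m} with ℓ ≠ 2, there exists an (x,M)-path of length ℓ in G. -/
/-- `M` is a matching of `G`: a set of edges of `G` that are pairwise disjoint. -/
def IsMatchingSet {V : Type*} (G : SimpleGraph V) (M : Set (Sym2 V)) : Prop :=
  M ⊆ G.edgeSet ∧ ∀ e ∈ M, ∀ f ∈ M, e ≠ f → ∀ v : V, v ∈ e → v ∉ f

/-- An `(x, M)`-path: a path `P` in `G[V(M)]` starting at `x` such that the last edge of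
`P` is not in `M`, and every edge of `M` with both endpoints on `P` is an edge of `P`. -/
def IsXMPath {V : Type*} (G : SimpleGraph V) (M : Finset (Sym2 V))
    {x y : V} (P : G.Walk x y) : Prop :=
  P.IsPath ∧
    (∀ v ∈ P.support, ∃ e ∈ M, v ∈ e) ∧
    (∀ e ∈ P.edges.getLast?, e ∉ M) ∧
    (∀ e ∈ M, (∀ v ∈ e, v ∈ P.support) → e ∈ P.edges)

/-- `M` is an `x`-special matching, where `x'` is the `M`-partner of `x`: every edge
`e ≠ xx'` of `M` can be written as `e = (hd e)(tl e)` where `x` is adjacent to all heads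
and to nothing else among `V(M) \ {x, x'}`, `x'` is adjacent to no head or tail, the tails
are pairwise adjacent, the heads are pairwise non-adjacent, and no head is adjacent to a
tail of a different edge. -/
def IsSpecialMatching {V : Type*} (G : SimpleGraph V) (M : Finset (Sym2 V))
    (x x' : V) : Prop :=
  s(x, x') ∈ M ∧
    ∃ hd tl : Sym2 V → V,
      ∀ e ∈ M, e ≠ s(x, x') →
        e = s(hd e, tl e) ∧
        G.Adj x (hd e) ∧ ¬ G.Adj x (tl e) ∧
        ¬ G.Adj x' (hd e) ∧ ¬ G.Adj x' (tl e) ∧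
        ∀ f ∈ M, f ≠ s(x, x') → e ≠ f →
          G.Adj (tl e) (tl f) ∧ ¬ G.Adj (hd e) (hd f) ∧ ¬ G.Adj (hd e) (tl f)

/-!
Let `s(hd e, tl e)` run through the edges of `M` other than `s(x, x')`. Listing these edges as
`e₁, …, eₘ₋₁` gives a path `x, hd e₁, tl e₁, tl e₂, …, tl eₘ₋₁` of length `m`. Every edge of `M`
other than `e₁` has an endpoint (`x'` or its head) off this path, so `e₁` is the only edge of `M`
spanned by the path, and it is the second edge of the path. Hence every initial segment of length
other than `2` is an `(x, M)`-path.
-/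

theorem IsMatchingSet.eq_of_mem {V : Type*} {G : SimpleGraph V} {M : Set (Sym2 V)}
    (hM : IsMatchingSet G M) {e f : Sym2 V} (he : e ∈ M) (hf : f ∈ M) {v : V}
    (hve : v ∈ e) (hvf : v ∈ f) : e = f := by
  by_contra hne
  exact hM.2 e he f hf hne v hve hvf

theorem mem_edges_take_of_isPath {V : Type*} {G : SimpleGraph V} {u v a b : V} {p : G.Walk u v}
    (hp : p.IsPath) {n : ℕ} (hab : s(a, b) ∈ p.edges) (ha : a ∈ (p.take n).support)
    (hb : b ∈ (p.take n).support) : s(a, b) ∈ (p.take n).edges := by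
  rw [← p.append_take_drop_eq n] at hp
  rw [← p.append_take_drop_eq n, SimpleGraph.Walk.edges_append, List.mem_append] at hab
  refine hab.resolve_right fun hdrop => ?_
  have eq_cut {w : V} (hw : w ∈ (p.take n).support) (hw' : w ∈ (p.drop n).support) :
      w = p.getVert n := by
    by_contra hne
    exact hp.ne_of_mem_support_of_append hne hw hw' rfl
  exact ((p.drop n).adj_of_mem_edges hdrop).ne <|
    (eq_cut ha ((p.drop n).fst_mem_support_of_mem_edges hdrop)).trans
      (eq_cut hb ((p.drop n).snd_mem_support_of_mem_edges hdrop)).symm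

theorem isXMPath_take {V : Type*} {G : SimpleGraph V} {M : Finset (Sym2 V)} {x y : V}
    {P : G.Walk x y} (hP : P.IsPath) (hcover : ∀ v ∈ P.support, ∃ e ∈ M, v ∈ e)
    (hspan : ∀ e ∈ M, (∀ v ∈ e, v ∈ P.support) → e ∈ P.edges) {n : ℕ}
    (hlast : ∀ e ∈ (P.take n).edges.getLast?, e ∉ M) : IsXMPath G M (P.take n) := by
  have hsub : (P.take n).support ⊆ P.support := (P.isSubwalk_take n).support_subset
  refine ⟨hP.take n, fun v hv => hcover v (hsub hv), hlast, fun e he hsupp => ?_⟩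
  have hedge : e ∈ P.edges := hspan e he fun v hv => hsub (hsupp v hv)
  induction e with
  | h a b =>
    exact mem_edges_take_of_isPath hP hedge (hsupp a (Sym2.mem_mk_left a b))
      (hsupp b (Sym2.mem_mk_right a b))

/-- `M` is a matching containing `s(x, x')`, and each other edge `e` of `M` is given a head `hd e`
adjacent to `x` and a tail `tl e`, the tails being pairwise adjacent. This is the part of
`IsSpecialMatching` that asserts adjacencies; the values of `hd` and `tl` outside
`M \ {s(x, x')}` are irrelevant. -/
structure IsHeadTailOrientation {V : Type*} (G : SimpleGraph V) (M : Set (Sym2 V)) (x x' : V)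
    (hd tl : Sym2 V → V) : Prop where
  isMatchingSet : IsMatchingSet G M
  mem : s(x, x') ∈ M
  eq_mk : ∀ e ∈ M \ {s(x, x')}, e = s(hd e, tl e)
  adj_hd : ∀ e ∈ M \ {s(x, x')}, G.Adj x (hd e)
  pairwise_adj_tl : (M \ {s(x, x')}).Pairwise fun e f => G.Adj (tl e) (tl f)

theorem IsSpecialMatching.exists_isHeadTailOrientation {V : Type*} {G : SimpleGraph V}
    {M : Finset (Sym2 V)} {x x' : V} (hspecial : IsSpecialMatching G M x x')
    (hM : IsMatchingSet G ↑M) : ∃ hd tl, IsHeadTailOrientation G ↑M x x' hd tl := by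
  obtain ⟨hmem, hd, tl, h⟩ := hspecial
  refine ⟨hd, tl, hM, hmem, fun e he => (h e he.1 he.2).1, fun e he => (h e he.1 he.2).2.1, ?_⟩
  intro e he f hf hne
  obtain ⟨-, -, -, -, -, hpair⟩ := h e he.1 he.2
  exact (hpair f hf.1 hf.2 hne).1

namespace IsHeadTailOrientation

variable {V : Type*} {G : SimpleGraph V} {x x' y : V} {hd tl : Sym2 V → V} {e : Sym2 V}

section Set

variable {M : Set (Sym2 V)}

theorem hd_mem (h : IsHeadTailOrientation G M x x' hd tl) (he : e ∈ M \ {s(x, x')}) :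
    hd e ∈ e :=
  Sym2.mem_iff_exists.2 ⟨tl e, h.eq_mk e he⟩

theorem tl_mem (h : IsHeadTailOrientation G M x x' hd tl) (he : e ∈ M \ {s(x, x')}) :
    tl e ∈ e :=
  Sym2.mem_iff_exists.2 ⟨hd e, (h.eq_mk e he).trans Sym2.eq_swap⟩

theorem adj_hd_tl (h : IsHeadTailOrientation G M x x' hd tl) (he : e ∈ M \ {s(x, x')}) :
    G.Adj (hd e) (tl e) := by
  rw [← SimpleGraph.mem_edgeSet, ← h.eq_mk e he]
  exact h.isMatchingSet.1 he.1

theorem notMem_mk_of_mem (h : IsHeadTailOrientation G M x x' hd tl) (he : e ∈ M \ {s(x, x')})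
    {v : V} (hv : v ∈ e) : v ∉ s(x, x') :=
  h.isMatchingSet.2 e he.1 _ h.mem he.2 v hv

theorem hd_ne (h : IsHeadTailOrientation G M x x' hd tl) (he : e ∈ M \ {s(x, x')}) :
    hd e ≠ x' := fun heq => h.notMem_mk_of_mem he (h.hd_mem he) (heq ▸ Sym2.mem_mk_right x x')

theorem injOn_tl (h : IsHeadTailOrientation G M x x' hd tl) :
    Set.InjOn tl (M \ {s(x, x')}) := fun _ he _ hf heq =>
  h.isMatchingSet.eq_of_mem he.1 hf.1 (h.tl_mem he) (heq ▸ h.tl_mem hf)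

theorem notMem_image_tl (h : IsHeadTailOrientation G M x x' hd tl) {v : V}
    (hv : v ∈ s(x, x')) : v ∉ tl '' (M \ {s(x, x')}) := by
  rintro ⟨e, he, rfl⟩
  exact h.notMem_mk_of_mem he (h.tl_mem he) hv

theorem hd_notMem_image_tl (h : IsHeadTailOrientation G M x x' hd tl)
    (he : e ∈ M \ {s(x, x')}) : hd e ∉ tl '' (M \ {s(x, x')}) := by
  rintro ⟨f, hf, heq⟩
  obtain rfl : f = e := h.isMatchingSet.eq_of_mem hf.1 he.1 (heq ▸ h.tl_mem hf) (h.hd_mem he)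
  exact (h.adj_hd_tl he).ne heq.symm

theorem mk_hd_notMem (h : IsHeadTailOrientation G M x x' hd tl) (he : e ∈ M \ {s(x, x')}) :
    s(x, hd e) ∉ M := fun hmem =>
  h.notMem_mk_of_mem he (h.hd_mem he) <|
    h.isMatchingSet.eq_of_mem hmem h.mem (Sym2.mem_mk_left _ _) (Sym2.mem_mk_left _ _) ▸
      Sym2.mem_mk_right _ _

theorem exists_mem_notMem_image_tl (h : IsHeadTailOrientation G M x x' hd tl) (he : e ∈ M) :
    ∃ v ∈ e, v ∉ tl '' (M \ {s(x, x')}) := by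
  by_cases hex : e = s(x, x')
  · exact ⟨x, hex ▸ Sym2.mem_mk_left x x', h.notMem_image_tl (Sym2.mem_mk_left x x')⟩
  · exact ⟨hd e, h.hd_mem ⟨he, hex⟩, h.hd_notMem_image_tl ⟨he, hex⟩⟩

theorem exists_walk_support_eq_map_tl (h : IsHeadTailOrientation G M x x' hd tl)
    {L : List (Sym2 V)} (hL : (e :: L).Nodup) (hmem : ∀ f ∈ e :: L, f ∈ M \ {s(x, x')}) :
    ∃ (y : V) (W : G.Walk (tl e) y), W.support = (e :: L).map tl := by
  have hchain : ((e :: L).map tl).IsChain G.Adj :=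
    ((List.pairwise_map).2 <| hL.imp_of_mem fun hf hg hne =>
      h.pairwise_adj_tl (hmem _ hf) (hmem _ hg) hne).isChain
  exact ⟨_, .ofSupport _ (List.cons_ne_nil _ _) hchain, SimpleGraph.Walk.support_ofSupport _ _⟩

/-- The walk `x, hd e, tl e, …` that continues along a walk `W` starting at `tl e`. -/
def consHead (h : IsHeadTailOrientation G M x x' hd tl) (he : e ∈ M \ {s(x, x')})
    (W : G.Walk (tl e) y) : G.Walk x y :=
  .cons (h.adj_hd e he) (.cons (h.adj_hd_tl he) W)

theorem length_consHead (h : IsHeadTailOrientation G M x x' hd tl) (he : e ∈ M \ {s(x, x')})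
    (W : G.Walk (tl e) y) : (h.consHead he W).length = W.length + 2 := rfl

theorem support_consHead (h : IsHeadTailOrientation G M x x' hd tl) (he : e ∈ M \ {s(x, x')})
    (W : G.Walk (tl e) y) : (h.consHead he W).support = x :: hd e :: W.support := rfl

theorem edges_consHead (h : IsHeadTailOrientation G M x x' hd tl) (he : e ∈ M \ {s(x, x')})
    (W : G.Walk (tl e) y) : (h.consHead he W).edges = s(x, hd e) :: e :: W.edges := by
  simp only [consHead, SimpleGraph.Walk.edges_cons, ← h.eq_mk e he]

theorem notMem_of_mem_edges_of_tails (h : IsHeadTailOrientation G M x x' hd tl) {u : V}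
    {W : G.Walk u y} (hW : ∀ v ∈ W.support, v ∈ tl '' (M \ {s(x, x')}))
    (he : e ∈ W.edges) : e ∉ M := fun heM => by
  obtain ⟨v, hve, hv⟩ := h.exists_mem_notMem_image_tl heM
  exact hv (hW v (W.mem_support_of_mem_edges he hve))

theorem isPath_consHead (h : IsHeadTailOrientation G M x x' hd tl) (he : e ∈ M \ {s(x, x')})
    {W : G.Walk (tl e) y} (hWp : W.IsPath)
    (hW : ∀ v ∈ W.support, v ∈ tl '' (M \ {s(x, x')})) : (h.consHead he W).IsPath := by
  have hhd : hd e ∉ W.support := fun hmem => h.hd_notMem_image_tl he (hW _ hmem)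
  have hx : x ∉ W.support := fun hmem => h.notMem_image_tl (Sym2.mem_mk_left x x') (hW _ hmem)
  refine (hWp.cons hhd).cons ?_
  rw [SimpleGraph.Walk.support_cons, List.mem_cons, not_or]
  exact ⟨(h.adj_hd e he).ne, hx⟩

theorem exists_mem_of_mem_support_consHead (h : IsHeadTailOrientation G M x x' hd tl)
    (he : e ∈ M \ {s(x, x')}) {W : G.Walk (tl e) y}
    (hW : ∀ v ∈ W.support, v ∈ tl '' (M \ {s(x, x')})) :
    ∀ v ∈ (h.consHead he W).support, ∃ f ∈ M, v ∈ f := by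
  intro v hv
  rw [support_consHead, List.mem_cons, List.mem_cons] at hv
  rcases hv with rfl | rfl | hv
  · exact ⟨_, h.mem, Sym2.mem_mk_left _ _⟩
  · exact ⟨e, he.1, h.hd_mem he⟩
  · obtain ⟨f, hf, rfl⟩ := hW v hv
    exact ⟨f, hf.1, h.tl_mem hf⟩

theorem eq_of_forall_mem_support_consHead (h : IsHeadTailOrientation G M x x' hd tl)
    (he : e ∈ M \ {s(x, x')}) {W : G.Walk (tl e) y}
    (hW : ∀ v ∈ W.support, v ∈ tl '' (M \ {s(x, x')})) {f : Sym2 V} (hf : f ∈ M)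
    (hsupp : ∀ v ∈ f, v ∈ (h.consHead he W).support) : f = e := by
  simp only [support_consHead, List.mem_cons] at hsupp
  by_cases hfx : f = s(x, x')
  · subst hfx
    rcases hsupp x' (Sym2.mem_mk_right x x') with hx' | hx' | hx'
    · exact absurd hx'.symm (SimpleGraph.Adj.ne (h.isMatchingSet.1 h.mem))
    · exact absurd hx'.symm (h.hd_ne he)
    · exact absurd (hW _ hx') (h.notMem_image_tl (Sym2.mem_mk_right x x'))
  · have hf' : f ∈ M \ {s(x, x')} := ⟨hf, hfx⟩
    rcases hsupp (hd f) (h.hd_mem hf') with hhd | hhd | hhd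
    · exact absurd hhd.symm (h.adj_hd f hf').ne
    · exact h.isMatchingSet.eq_of_mem hf he.1 (h.hd_mem hf') (hhd ▸ h.hd_mem he)
    · exact absurd (hW _ hhd) (h.hd_notMem_image_tl hf')

theorem notMem_of_mem_getLast?_take_edges (h : IsHeadTailOrientation G M x x' hd tl)
    (he : e ∈ M \ {s(x, x')}) {W : G.Walk (tl e) y}
    (hW : ∀ v ∈ W.support, v ∈ tl '' (M \ {s(x, x')})) {n : ℕ}
    (hn : n ≤ (h.consHead he W).length) (hn2 : n ≠ 2) :
    ∀ f ∈ ((h.consHead he W).take n).edges.getLast?, f ∉ M := by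
  intro f hf
  rw [SimpleGraph.Walk.edges_take, edges_consHead] at hf
  match n with
  | 0 => simp at hf
  | 1 =>
    obtain rfl : s(x, hd e) = f := by simpa using hf
    exact h.mk_hd_notMem he
  | k + 3 =>
    have hk : k < W.length := by
      rw [length_consHead] at hn
      omega
    rw [List.getLast?_take] at hf
    have hget : W.edges[k]? = some f := by simpa [hk.not_ge] using hf
    exact h.notMem_of_mem_edges_of_tails hW (List.mem_of_getElem? hget)

end Set

theorem isXMPath_take_consHead {M : Finset (Sym2 V)} (h : IsHeadTailOrientation G ↑M x x' hd tl)
    (he : e ∈ (M : Set (Sym2 V)) \ {s(x, x')}) {W : G.Walk (tl e) y} (hWp : W.IsPath)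
    (hW : ∀ v ∈ W.support, v ∈ tl '' (M \ {s(x, x')})) {n : ℕ}
    (hn : n ≤ (h.consHead he W).length) (hn2 : n ≠ 2) :
    IsXMPath G M ((h.consHead he W).take n) := by
  refine isXMPath_take (h.isPath_consHead he hWp hW) (h.exists_mem_of_mem_support_consHead he hW)
    (fun f hf hsupp => ?_) (h.notMem_of_mem_getLast?_take_edges he hW hn hn2)
  rw [h.eq_of_forall_mem_support_consHead he hW hf hsupp, edges_consHead]
  exact List.mem_cons_of_mem _ List.mem_cons_self

theorem exists_isPath_support_subset_image_tl {M : Finset (Sym2 V)}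
    (h : IsHeadTailOrientation G ↑M x x' hd tl) (hM : 2 ≤ M.card) :
    ∃ e ∈ (M : Set (Sym2 V)) \ {s(x, x')}, ∃ (y : V) (W : G.Walk (tl e) y),
      W.IsPath ∧ (∀ v ∈ W.support, v ∈ tl '' (M \ {s(x, x')})) ∧ W.length + 2 = M.card := by
  classical
  have hcard : (M.erase s(x, x')).toList.length + 1 = M.card := by
    rw [Finset.length_toList, Finset.card_erase_add_one h.mem]
  obtain ⟨e, L, hL⟩ := List.exists_cons_of_length_pos (l := (M.erase s(x, x')).toList) (by omega)
  have hmem : ∀ f ∈ e :: L, f ∈ (M : Set (Sym2 V)) \ {s(x, x')} := fun f hf => by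
    rwa [← hL, Finset.mem_toList, ← Finset.mem_coe, Finset.coe_erase] at hf
  have hnodup : (e :: L).Nodup := hL ▸ (M.erase s(x, x')).nodup_toList
  obtain ⟨y, W, hW⟩ := h.exists_walk_support_eq_map_tl hnodup hmem
  refine ⟨e, hmem e List.mem_cons_self, y, W, ?_, fun v hv => ?_, ?_⟩
  · rw [SimpleGraph.Walk.isPath_def, hW]
    exact hnodup.map_on fun f hf g hg heq => h.injOn_tl (hmem f hf) (hmem g hg) heq
  · rw [hW] at hv
    obtain ⟨f, hf, rfl⟩ := List.mem_map.1 hv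
    exact ⟨f, hmem f hf, rfl⟩
  · have hlen := W.length_support
    rw [hW, List.length_map, ← hL] at hlen
    omega

end IsHeadTailOrientation

theorem stmt15_general {V : Type*} {G : SimpleGraph V} {M : Finset (Sym2 V)} {x x' : V}
    {hd tl : Sym2 V → V} (h : IsHeadTailOrientation G ↑M x x' hd tl) (hM : 2 ≤ M.card)
    {ℓ : ℕ} (hℓ : ℓ ≤ M.card) (hℓ2 : ℓ ≠ 2) :
    ∃ (y : V) (P : G.Walk x y), IsXMPath G M P ∧ P.length = ℓ := by
  obtain ⟨e, he, y, W, hWp, hW, hlen⟩ := h.exists_isPath_support_subset_image_tl hM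
  rw [← hlen, ← h.length_consHead he W] at hℓ
  refine ⟨_, (h.consHead he W).take ℓ, h.isXMPath_take_consHead he hWp hW hℓ hℓ2, ?_⟩
  rw [SimpleGraph.Walk.take_length, min_eq_left hℓ]

/-- Let `M` be a matching of `G` that is also a strong clique of `G`, with `|M| = m ≥ 3`,
and suppose `M` is `x`-special for some `x ∈ V(M)` (with `M`-partner `x'`). Then for every
`ℓ ∈ {1, …, m}` with `ℓ ≠ 2` there exists an `(x, M)`-path of length `ℓ` in `G`. -/
theorem stmt15 {V : Type*} [Fintype V] [DecidableEq V] (G : SimpleGraph V)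
    (M : Finset (Sym2 V))
    (hmatch : IsMatchingSet G ↑M) (hsc : IsStrongClique G ↑M)
    (m : ℕ) (hm : M.card = m) (hm3 : 3 ≤ m)
    (x x' : V) (hspecial : IsSpecialMatching G M x x') :
    ∀ ℓ : ℕ, 1 ≤ ℓ → ℓ ≤ m → ℓ ≠ 2 →
      ∃ (y : V) (P : G.Walk x y), IsXMPath G M P ∧ P.length = ℓ := by
  obtain ⟨hd, tl, h⟩ := hspecial.exists_isHeadTailOrientation hmatch
  exact fun ℓ _ hℓ hℓ2 => stmt15_general h (by omega) (hℓ.trans_eq hm.symm) hℓ2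
end
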